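/- arXiv:2106.08949 — 2 statements merged into one kernel-verified Lean document; each statement's English description precedes it below -/
import Mathlib

section
/- Let d ≥ 1 be an integer, p ∈ [1,∞), and let I ⊂ (0,∞) be σ-compact. Let (w(λ))_{λ∈I} be a continuous family of bounded positive weight sequences. Assume that for every compact I₀ ⊂ I there exist D₁, D₂, γ > 0 and an integer N ≥ 0 such that for all n ≥ N: (1) the map a ↦ Σ_{i=1}^n log(w_i(a)) is D₁·log(n)-Lipschitz on I₀; and (2) inf_{a∈I₀} w_1(a)⋯w_n(a) ≥ D₂·n^γ. Then the family (B_{w(λ₁)} × ⋯ × B_{w(λ_d)})_{λ∈I^d} admits a common hypercyclic algebra on ℓp(ℕ)^d for the coordinatewise product. -/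
open scoped ENNReal
open Finset

noncomputable section

/-- The space `ℓᵖ(ℕ)` of `p`-summable complex sequences. -/
abbrev lpC (p : ℝ≥0∞) : Type := lp (fun _ : ℕ => ℂ) p

/-- `T` is the product operator `B_{w(lam 0)} × ⋯ × B_{w(lam (d-1))}` of weighted backward
shifts, the weight sequence of the `i`-th factor being `(w (lam i) n)_{n ≥ 1}`. -/
def IsProductShift (p : ℝ≥0∞) [Fact (1 ≤ p)] (d : ℕ) (w : ℝ → ℕ → ℝ)
    (T : (Fin d → lpC p) →L[ℂ] (Fin d → lpC p)) (lam : Fin d → ℝ) : Prop :=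
  ∀ (v : Fin d → lpC p) (i : Fin d) (n : ℕ),
    (T v) i n = (w (lam i) (n + 1) : ℂ) * v i (n + 1)

/-- The family `T lam`, `lam ∈ S`, admits a common hypercyclic algebra for the coordinatewise
product: there is a non-unital subalgebra `A ≠ {0}` of `(ℓᵖ(ℕ))^d` (closed under addition,
scalar multiplication and the componentwise coordinatewise product) every nonzero element of
which is a common hypercyclic vector for the family. -/
def CommonHypercyclicAlgebraCW (p : ℝ≥0∞) [Fact (1 ≤ p)] (d : ℕ) (S : Set (Fin d → ℝ))
    (T : (Fin d → ℝ) → ((Fin d → lpC p) →L[ℂ] (Fin d → lpC p))) : Prop :=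
  ∃ A : Set (Fin d → lpC p),
    (0 : Fin d → lpC p) ∈ A ∧
    (∀ x ∈ A, ∀ y ∈ A, x + y ∈ A) ∧
    (∀ (c : ℂ), ∀ x ∈ A, c • x ∈ A) ∧
    (∀ x ∈ A, ∀ y ∈ A, ∃ z ∈ A, ∀ (i : Fin d) (n : ℕ), z i n = x i n * y i n) ∧
    (∃ x ∈ A, x ≠ 0) ∧
    (∀ x ∈ A, x ≠ 0 → ∀ lam ∈ S, Dense (Set.range fun n : ℕ => ((T lam) ^ (n + 1)) x))

/-!
Fix a piece of the parameter set of small diameter. A finite set of parameters is nearly hit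
simultaneously by placing `r`-th roots of shifted copies of the target at well separated times
`τ_k = (m (k + 1)) ^ (s + 1)`, the copy at `τ_k` being normalised with the weights of a parameter
`c_k`. By the logarithmic Lipschitz condition this copy serves every parameter within `δ / log τ_k`
of `c_k`; since `∑ (log τ_k) ^ (-d)` diverges, finitely many such balls cover the piece, while the
power growth of the weight products and the gaps between the `τ_k` make the interference between
different copies small.

Such blocks, one for each piece, power and target of a countable list repeated infinitely often,
are glued into a single bounded sequence `x`, each block being so far out and so small that it does
not disturb the earlier ones. The algebra generated by `x` consists of the `P(x)` with `P(0) = 0`;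
on the `m`-th block `P(x)` is dominated by its lowest-order term `a x ^ r`, and the blocks built for
the power `r` make `P(x)` hit `a y` for all targets `y`.
-/

open Filter Topology

section Covering

lemma exists_separated_of_forall_exists_far {α : Type*} [PseudoMetricSpace α] [Nonempty α]
    {K : Set α} {ρ : ℕ → ℝ}
    (h : ∀ (M : ℕ) (c : ℕ → α), (∀ k < M, c k ∈ K) → ∃ x ∈ K, ∀ k < M, ρ k ≤ dist x (c k))
    (M : ℕ) :
    ∃ c : ℕ → α, (∀ k < M, c k ∈ K) ∧ ∀ k < M, ∀ l < k, ρ l ≤ dist (c k) (c l) := by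
  induction M with
  | zero => exact ⟨fun _ => Classical.arbitrary α, by simp, by simp⟩
  | succ M ih =>
    obtain ⟨c, hcK, hsep⟩ := ih
    obtain ⟨x, hx, hfar⟩ := h M c hcK
    have hold : ∀ k < M, Function.update c M x k = c k := fun k hk =>
      Function.update_of_ne hk.ne _ _
    refine ⟨Function.update c M x, fun k hk => ?_, fun k hk l hl => ?_⟩
    · rcases Nat.lt_succ_iff_lt_or_eq.mp hk with hk | rfl
      · rw [hold k hk]; exact hcK k hk
      · rwa [Function.update_self]
    · rcases Nat.lt_succ_iff_lt_or_eq.mp hk with hk | rfl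
      · rw [hold k hk, hold l (hl.trans hk)]; exact hsep k hk l hl
      · rw [hold l hl, Function.update_self]; exact hfar l hl

lemma pairwiseDisjoint_ball_of_separated {α : Type*} [PseudoMetricSpace α] {c : ℕ → α} {ρ : ℕ → ℝ}
    (hanti : Antitone ρ) {M : ℕ} (hsep : ∀ k < M, ∀ l < k, ρ l ≤ dist (c k) (c l)) :
    (range M : Set ℕ).PairwiseDisjoint fun k => Metric.ball (c k) (ρ k / 2) := by
  have hlt : ∀ k < M, ∀ l < k,
      Disjoint (Metric.ball (c k) (ρ k / 2)) (Metric.ball (c l) (ρ l / 2)) := fun k hk l hl =>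
    Metric.ball_disjoint_ball (by linarith [hsep k hk l hl, hanti hl.le])
  intro k hk l hl hkl
  rcases lt_or_gt_of_ne hkl with h | h
  · exact (hlt l (by simpa using hl) k h).symm
  · exact hlt k (by simpa using hk) l h

variable {E : Type*} [NormedAddCommGroup E] [NormedSpace ℝ E] [FiniteDimensional ℝ E]

open MeasureTheory in
lemma sum_pow_finrank_le_of_separated [MeasurableSpace E] [BorelSpace E] (μ : Measure E)
    [μ.IsAddHaarMeasure] {K : Set E} {R : ℝ} (hK : K ⊆ Metric.ball 0 R) {ρ : ℕ → ℝ}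
    (hρ : ∀ k, 0 < ρ k) (hanti : Antitone ρ) {M : ℕ} {c : ℕ → E} (hc : ∀ k < M, c k ∈ K)
    (hsep : ∀ k < M, ∀ l < k, ρ l ≤ dist (c k) (c l)) :
    ∑ k ∈ range M, ENNReal.ofReal ((ρ k / 2) ^ Module.finrank ℝ E) * μ (Metric.ball 0 1) ≤
      μ (Metric.ball 0 (R + ρ 0)) := by
  have hball : ∀ k ∈ range M, Metric.ball (c k) (ρ k / 2) ⊆ Metric.ball 0 (R + ρ 0) :=
    fun k hk => Metric.ball_subset_ball' (by
      linarith [hanti (Nat.zero_le k), hρ k,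
        Metric.mem_ball.mp (hK (hc k (mem_range.mp hk)))])
  calc ∑ k ∈ range M, ENNReal.ofReal ((ρ k / 2) ^ Module.finrank ℝ E) * μ (Metric.ball 0 1)
      = ∑ k ∈ range M, μ (Metric.ball (c k) (ρ k / 2)) :=
        sum_congr rfl fun k _ => (μ.addHaar_ball_of_pos _ (half_pos (hρ k))).symm
    _ = μ (⋃ k ∈ range M, Metric.ball (c k) (ρ k / 2)) :=
        (measure_biUnion_finset (pairwiseDisjoint_ball_of_separated hanti hsep)
          fun _ _ => measurableSet_ball).symm
    _ ≤ μ (Metric.ball 0 (R + ρ 0)) := measure_mono (Set.iUnion₂_subset hball)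

/- A greedy choice of centres that never stopped would produce infinitely many disjoint balls of
total volume `∑ (ρ k / 2) ^ n = ∞` inside a bounded set. -/
lemma exists_finite_cover_of_not_summable {K : Set E} (hK : Bornology.IsBounded K) {ρ : ℕ → ℝ}
    (hρ : ∀ k, 0 < ρ k) (hanti : Antitone ρ)
    (hdiv : ¬ Summable fun k => ρ k ^ Module.finrank ℝ E) :
    ∃ (M : ℕ) (c : ℕ → E), (∀ k < M, c k ∈ K) ∧ ∀ x ∈ K, ∃ k < M, dist x (c k) < ρ k := by
  by_contra! hfar
  let _ : MeasurableSpace E := borel E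
  have : BorelSpace E := ⟨rfl⟩
  let μ : MeasureTheory.Measure E := MeasureTheory.Measure.addHaar
  obtain ⟨R, hR⟩ := hK.subset_ball 0
  have hbound : ∑' k, ENNReal.ofReal ((ρ k / 2) ^ Module.finrank ℝ E) * μ (Metric.ball 0 1) ≤
      μ (Metric.ball 0 (R + ρ 0)) := by
    refine ENNReal.tsum_le_of_sum_range_le fun M => ?_
    obtain ⟨c, hc, hsep⟩ := exists_separated_of_forall_exists_far hfar M
    exact sum_pow_finrank_le_of_separated μ hR hρ hanti hc hsep
  rw [ENNReal.tsum_mul_right] at hbound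
  have hfin : ∑' k, ENNReal.ofReal ((ρ k / 2) ^ Module.finrank ℝ E) ≠ ⊤ := fun htop => by
    rw [htop, ENNReal.top_mul (Metric.measure_ball_pos μ 0 one_pos).ne'] at hbound
    exact MeasureTheory.measure_ball_lt_top.not_ge hbound
  have hsum : Summable fun k => (ρ k / 2) ^ Module.finrank ℝ E :=
    (ENNReal.summable_toReal hfin).congr fun k =>
      ENNReal.toReal_ofReal (pow_nonneg (half_pos (hρ k)).le _)
  exact hdiv ((hsum.mul_right (2 ^ Module.finrank ℝ E)).congr fun k => by
    rw [div_pow, div_mul_cancel₀ _ (by positivity)])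

end Covering

lemma not_summable_inv_log_pow_pow {d : ℕ} (hd : d ≠ 0) {δ : ℝ} (hδ : 0 < δ) {m s : ℕ}
    (hm : 2 ≤ m) (hs : s ≠ 0) :
    ¬ Summable fun k : ℕ => (δ / Real.log (((m * (k + 1)) ^ s : ℕ) : ℝ)) ^ d := by
  intro hsum
  have : m ≠ 0 := by omega
  set c : ℝ := (δ / (s * d)) ^ d / m with hc
  have hcpos : 0 < c := by positivity
  refine Real.not_summable_one_div_natCast ((summable_nat_add_iff 1).mp
    ((summable_mul_left_iff hcpos.ne').mp (Summable.of_nonneg_of_le (fun k => by positivity)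
      (fun k => ?_) hsum)))
  set x : ℝ := m * (k + 1) with hx
  have hxone : 1 < x := by
    have : (2 : ℝ) ≤ m := by exact_mod_cast hm
    nlinarith [(Nat.cast_nonneg k : (0 : ℝ) ≤ k)]
  have hxpos : 0 < x := one_pos.trans hxone
  have hlogx : 0 < Real.log x := Real.log_pos hxone
  have hlog : Real.log x ≤ d * x ^ (1 / d : ℝ) :=
    (Real.log_le_rpow_div hxpos.le (ε := 1 / d) (by positivity)).trans_eq (by field_simp)
  calc c * (1 / ((k + 1 : ℕ) : ℝ))
      = (δ / (s * (d * x ^ (1 / d : ℝ)))) ^ d := by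
        rw [← mul_assoc, ← div_div, div_pow _ _ d, ← Real.rpow_natCast (x ^ (1 / d : ℝ)) d,
          ← Real.rpow_mul hxpos.le, one_div_mul_cancel (by positivity), Real.rpow_one, hc, hx]
        push_cast
        field_simp
    _ ≤ (δ / Real.log (((m * (k + 1)) ^ s : ℕ) : ℝ)) ^ d := by
        push_cast
        rw [Real.log_pow]
        gcongr

section WeightProducts

variable {v : ℕ → ℝ}

/-- The product `v₁ ⋯ vₙ` of the first `n` weights. -/
def partialProd (v : ℕ → ℝ) (n : ℕ) : ℝ := ∏ i ∈ Icc 1 n, v i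

/-- The product `v_{j+1} ⋯ v_{j+n}`, the coefficient with which the `n`-th power of the weighted
backward shift `B_v` maps `e_{j+n}` to `e_j`. -/
def shiftCoeff (v : ℕ → ℝ) (n j : ℕ) : ℝ := ∏ i ∈ Ioc j (j + n), v i

lemma partialProd_succ (v : ℕ → ℝ) (n : ℕ) :
    partialProd v (n + 1) = partialProd v n * v (n + 1) :=
  prod_Icc_succ_top (by omega) _

lemma partialProd_mul_shiftCoeff (v : ℕ → ℝ) (n j : ℕ) :
    partialProd v j * shiftCoeff v n j = partialProd v (j + n) :=
  prod_Ioc_consecutive v j.zero_le (j.le_add_right n)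

lemma shiftCoeff_zero (v : ℕ → ℝ) (j : ℕ) : shiftCoeff v 0 j = 1 := by simp [shiftCoeff]

lemma shiftCoeff_succ (v : ℕ → ℝ) (n j : ℕ) :
    shiftCoeff v (n + 1) j = shiftCoeff v n j * v (j + n + 1) :=
  prod_Ioc_succ_top (j.le_add_right n) v

lemma partialProd_pos (hv : ∀ n, 1 ≤ n → 0 < v n) (n : ℕ) : 0 < partialProd v n :=
  prod_pos fun i hi => hv i (mem_Icc.mp hi).1

lemma shiftCoeff_pos (hv : ∀ n, 1 ≤ n → 0 < v n) (n j : ℕ) : 0 < shiftCoeff v n j :=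
  prod_pos fun i hi => hv i (by have := (mem_Ioc.mp hi).1; omega)

lemma log_partialProd (hv : ∀ n, 1 ≤ n → 0 < v n) (n : ℕ) :
    Real.log (partialProd v n) = ∑ i ∈ Icc 1 n, Real.log (v i) :=
  Real.log_prod fun i hi => (hv i (mem_Icc.mp hi).1).ne'

lemma log_shiftCoeff (hv : ∀ n, 1 ≤ n → 0 < v n) (n j : ℕ) :
    Real.log (shiftCoeff v n j) =
      Real.log (partialProd v (j + n)) - Real.log (partialProd v j) := by
  rw [← partialProd_mul_shiftCoeff, Real.log_mul (partialProd_pos hv j).ne'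
    (shiftCoeff_pos hv n j).ne', add_sub_cancel_left]

lemma shiftCoeff_le_of_le_rpow (hv : ∀ n, 1 ≤ n → 0 < v n) {A β : ℝ} (hA : 1 ≤ A) {L : ℕ}
    (hβ : 0 ≤ β) (hle : ∀ n : ℕ, 1 ≤ n → v n ≤ A * (n : ℝ) ^ β) {n j : ℕ} (hn : n ≤ L)
    (hnj : 1 ≤ j + n) :
    shiftCoeff v n j ≤ A ^ L * ((j + n : ℕ) : ℝ) ^ (β * L) := by
  have hone : (1 : ℝ) ≤ (j + n : ℕ) := by exact_mod_cast hnj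
  have hpow : (1 : ℝ) ≤ A * ((j + n : ℕ) : ℝ) ^ β :=
    one_le_mul_of_one_le_of_one_le hA (Real.one_le_rpow hone hβ)
  calc shiftCoeff v n j ≤ ∏ _i ∈ Ioc j (j + n), A * ((j + n : ℕ) : ℝ) ^ β := by
        refine prod_le_prod (fun i hi => (hv i ?_).le) fun i hi => ?_
        · have := (mem_Ioc.mp hi).1; omega
        · obtain ⟨hji, hin⟩ := mem_Ioc.mp hi
          refine (hle i (by omega)).trans ?_
          gcongr
    _ = (A * ((j + n : ℕ) : ℝ) ^ β) ^ n := by simp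
    _ ≤ (A * ((j + n : ℕ) : ℝ) ^ β) ^ L := pow_le_pow_right₀ hpow hn
    _ = A ^ L * ((j + n : ℕ) : ℝ) ^ (β * L) := by
        rw [mul_pow, ← Real.rpow_mul_natCast (by positivity)]

lemma abs_shiftCoeff_div_sub_one_le {v' : ℕ → ℝ} (hv : ∀ n, 1 ≤ n → 0 < v n)
    (hv' : ∀ n, 1 ≤ n → 0 < v' n) {n j : ℕ} {η : ℝ} (hη : η ≤ 1)
    (hfar : |Real.log (partialProd v (j + n)) - Real.log (partialProd v' (j + n))| ≤ η / 2)
    (hnear : |Real.log (partialProd v j) - Real.log (partialProd v' j)| ≤ η / 2) :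
    |shiftCoeff v n j / shiftCoeff v' n j - 1| ≤ 2 * η := by
  have hs := shiftCoeff_pos hv n j
  have hs' := shiftCoeff_pos hv' n j
  have hlog : |Real.log (shiftCoeff v n j / shiftCoeff v' n j)| ≤ η := by
    rw [Real.log_div hs.ne' hs'.ne', log_shiftCoeff hv, log_shiftCoeff hv']
    rw [abs_le] at *
    constructor <;> linarith
  rw [← Real.exp_log (div_pos hs hs')]
  exact (Real.abs_exp_sub_one_le (hlog.trans hη)).trans (by linarith)

end WeightProducts

section CompactFamilies

variable {α : Type*} [PseudoMetricSpace α] {K : Set α} {f : ℕ → α → ℝ}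

lemma exists_forall_lt_le_of_continuousOn (hK : IsCompact K) (hf : ∀ j, ContinuousOn (f j) K)
    (J : ℕ) : ∃ B > 0, ∀ j < J, ∀ a ∈ K, f j a ≤ B := by
  obtain ⟨B, hB⟩ := hK.exists_bound_of_continuousOn (f := fun a (j : Fin J) => f j a)
    (continuousOn_pi.mpr fun j => hf j)
  refine ⟨max B 1, by positivity, fun j hj a ha => ?_⟩
  exact (Real.le_norm_self _).trans <| (norm_le_pi_norm (fun j : Fin J => f j a) ⟨j, hj⟩).trans <|
    (hB a ha).trans (le_max_left _ _)

lemma exists_forall_lt_abs_sub_le_of_continuousOn (hK : IsCompact K)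
    (hf : ∀ j, ContinuousOn (f j) K) (J : ℕ) {ε : ℝ} (hε : 0 < ε) :
    ∃ δ > 0, ∀ a ∈ K, ∀ b ∈ K, dist a b < δ → ∀ j < J, |f j a - f j b| ≤ ε := by
  have huc := hK.uniformContinuousOn_of_continuous (f := fun a (j : Fin J) => f j a)
    (continuousOn_pi.mpr fun j => hf j)
  obtain ⟨δ, hδ, hdist⟩ := Metric.uniformContinuousOn_iff.mp huc ε hε
  exact ⟨δ, hδ, fun a ha b hb hab j hj => (dist_le_pi_dist (fun j : Fin J => f j a)
    (fun j : Fin J => f j b) ⟨j, hj⟩).trans (hdist a ha b hb hab).le⟩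

end CompactFamilies

/-- The criterion on a family of weight sequences `w a`, `a ∈ C`, with its constants: positive
weights, whose partial products have logarithms that are `D₁ log n`-Lipschitz in the parameter and
grow at least like `D₂ n ^ γ`, for all `n ≥ N`. -/
structure WeightCriterion {α : Type*} [PseudoMetricSpace α] (w : α → ℕ → ℝ) (C : Set α)
    (D₁ D₂ γ : ℝ) (N : ℕ) : Prop where
  D₁_pos : 0 < D₁
  D₂_pos : 0 < D₂
  γ_pos : 0 < γ
  pos : ∀ a ∈ C, ∀ n, 1 ≤ n → 0 < w a n
  lipschitz : ∀ n, N ≤ n → ∀ a ∈ C, ∀ b ∈ C,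
    |Real.log (partialProd (w a) n) - Real.log (partialProd (w b) n)| ≤
      D₁ * Real.log n * dist a b
  growth : ∀ n, N ≤ n → ∀ a ∈ C, D₂ * (n : ℝ) ^ γ ≤ partialProd (w a) n

namespace WeightCriterion

variable {α : Type*} [PseudoMetricSpace α] {w : α → ℕ → ℝ} {C : Set α} {D₁ D₂ γ : ℝ} {N : ℕ}
  {a b : α}

lemma partialProd_le_mul_rpow (h : WeightCriterion w C D₁ D₂ γ N) (ha : a ∈ C) (hb : b ∈ C)
    {n : ℕ} (hn : N ≤ n) (hn0 : n ≠ 0) {θ : ℝ} (hθ : D₁ * dist a b ≤ θ) :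
    partialProd (w a) n ≤ partialProd (w b) n * (n : ℝ) ^ θ := by
  have hpa := partialProd_pos (h.pos a ha) n
  have hpb := partialProd_pos (h.pos b hb) n
  have hlog : 0 ≤ Real.log n := Real.log_natCast_nonneg n
  rw [← Real.log_le_log_iff hpa (by positivity), Real.log_mul hpb.ne' (by positivity),
    Real.log_rpow (by positivity)]
  have := (le_abs_self _).trans (h.lipschitz n hn a ha b hb)
  nlinarith

lemma weight_le_mul_rpow (h : WeightCriterion w C D₁ D₂ γ N) (ha : a ∈ C) (hb : b ∈ C)
    {n : ℕ} (hn : N ≤ n) {θ : ℝ} (hθ : D₁ * dist a b ≤ θ / 2) :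
    w a (n + 1) ≤ w b (n + 1) * ((n + 1 : ℕ) : ℝ) ^ θ := by
  have hwa := h.pos a ha (n + 1) (by omega)
  have hwb := h.pos b hb (n + 1) (by omega)
  have hlog : Real.log n ≤ Real.log (n + 1 : ℕ) := by
    rcases n.eq_zero_or_pos with rfl | hn0
    · simp
    · exact Real.log_le_log (by positivity) (by push_cast; linarith)
  have hstep := (abs_le.mp (h.lipschitz (n + 1) (by omega) a ha b hb)).2
  have hprev := (abs_le.mp (h.lipschitz n hn a ha b hb)).1
  rw [partialProd_succ, partialProd_succ, Real.log_mul (partialProd_pos (h.pos a ha) n).ne' hwa.ne',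
    Real.log_mul (partialProd_pos (h.pos b hb) n).ne' hwb.ne'] at hstep
  rw [← Real.log_le_log_iff hwa (by positivity), Real.log_mul hwb.ne' (by positivity),
    Real.log_rpow (by positivity)]
  have hmain := mul_le_mul_of_nonneg_left hθ (Real.log_natCast_nonneg (n + 1))
  have hmono := mul_le_mul_of_nonneg_left hlog (mul_nonneg h.D₁_pos.le (dist_nonneg (x := a)
    (y := b)))
  nlinarith

lemma exists_weight_le_rpow (h : WeightCriterion w C D₁ D₂ γ N) (hC : IsCompact C)
    (hcont : ∀ n, ContinuousOn (fun a => w a n) C)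
    (hbdd : ∀ a ∈ C, ∃ B : ℝ, ∀ n, 1 ≤ n → w a n ≤ B) {β : ℝ} (hβ : 0 < β) :
    ∃ A : ℝ, 1 ≤ A ∧ ∀ a ∈ C, ∀ n : ℕ, 1 ≤ n → w a n ≤ A * (n : ℝ) ^ β := by
  obtain ⟨t, htC, htfin, hcover⟩ :=
    hC.finite_cover_balls (e := β / 2 / D₁) (div_pos (half_pos hβ) h.D₁_pos)
  choose! bound hbound using hbdd
  obtain ⟨B, hB⟩ := (htfin.image bound).bddAbove
  obtain ⟨B', -, hB'⟩ := exists_forall_lt_le_of_continuousOn hC hcont (N + 1)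
  refine ⟨max 1 (max B B'), le_max_left _ _, fun a ha n hn => ?_⟩
  have hnβ : (1 : ℝ) ≤ (n : ℝ) ^ β := Real.one_le_rpow (by exact_mod_cast hn) hβ.le
  rcases lt_or_ge n (N + 1) with hnN | hnN
  · calc w a n ≤ B' * 1 := by rw [mul_one]; exact hB' n hnN a ha
      _ ≤ max 1 (max B B') * (n : ℝ) ^ β := by gcongr; simp
  · obtain ⟨k, rfl⟩ : ∃ k, n = k + 1 := ⟨n - 1, by omega⟩
    obtain ⟨x, hxt, hax⟩ := Set.mem_iUnion₂.mp (hcover ha)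
    have hdist : D₁ * dist a x ≤ β / 2 := by
      rw [mul_comm, ← le_div_iff₀ h.D₁_pos]
      exact (Metric.mem_ball.mp hax).le
    calc w a (k + 1) ≤ w x (k + 1) * ((k + 1 : ℕ) : ℝ) ^ β :=
          h.weight_le_mul_rpow ha (htC hxt) (by omega) hdist
      _ ≤ max 1 (max B B') * ((k + 1 : ℕ) : ℝ) ^ β := by
          gcongr
          exact (hbound x (htC hxt) _ hn).trans <| (hB ⟨x, hxt, rfl⟩).trans (by simp)

lemma exists_shiftCoeff_le_rpow (h : WeightCriterion w C D₁ D₂ γ N) (hC : IsCompact C)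
    (hcont : ∀ n, ContinuousOn (fun a => w a n) C)
    (hbdd : ∀ a ∈ C, ∃ B : ℝ, ∀ n, 1 ≤ n → w a n ≤ B) (L : ℕ) {β : ℝ} (hβ : 0 < β) :
    ∃ A : ℝ, 1 ≤ A ∧ ∀ a ∈ C, ∀ n ≤ L, ∀ j, 1 ≤ j + n →
      shiftCoeff (w a) n j ≤ A * ((j + n : ℕ) : ℝ) ^ β := by
  obtain ⟨A, hA, hle⟩ := h.exists_weight_le_rpow hC hcont hbdd (β := β / (L + 1)) (by positivity)
  refine ⟨A ^ L, one_le_pow₀ hA, fun a ha n hn j hnj => ?_⟩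
  have hone : (1 : ℝ) ≤ (j + n : ℕ) := by exact_mod_cast hnj
  refine (shiftCoeff_le_of_le_rpow (h.pos a ha) hA (by positivity) (hle a ha) hn hnj).trans ?_
  gcongr
  rw [div_mul_eq_mul_div, div_le_iff₀ (by positivity)]
  nlinarith

lemma exists_mul_rpow_le_shiftCoeff (h : WeightCriterion w C D₁ D₂ γ N) (hC : IsCompact C)
    (hcont : ∀ n, ContinuousOn (fun a => w a n) C) (J : ℕ) :
    ∃ D > 0, ∀ n, N ≤ n → ∀ a ∈ C, ∀ j < J, D * (n : ℝ) ^ γ ≤ shiftCoeff (w a) n j := by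
  obtain ⟨A, hA, hle⟩ := exists_forall_lt_le_of_continuousOn hC
    (fun j => continuousOn_finsetProd _ fun i _ => hcont i) (f := fun j a => partialProd (w a) j) J
  refine ⟨D₂ / A, div_pos h.D₂_pos hA, fun n hn a ha j hj => ?_⟩
  have hγ := h.γ_pos
  have hD₂ := h.D₂_pos
  have hs := shiftCoeff_pos (h.pos a ha) n j
  rw [div_mul_eq_mul_div, div_le_iff₀ hA]
  calc D₂ * (n : ℝ) ^ γ ≤ D₂ * ((j + n : ℕ) : ℝ) ^ γ := by gcongr; omega
    _ ≤ partialProd (w a) j * shiftCoeff (w a) n j := by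
        rw [partialProd_mul_shiftCoeff]; exact h.growth _ (by omega) a ha
    _ ≤ shiftCoeff (w a) n j * A := by rw [mul_comm]; gcongr; exact hle j hj a ha

lemma exists_norm_root_le (h : WeightCriterion w C D₁ D₂ γ N) (hC : IsCompact C)
    (hcont : ∀ n, ContinuousOn (fun a => w a n) C) (r J : ℕ) (y : ℕ → ℂ) :
    ∃ K > 0, ∀ n, N ≤ n → 1 ≤ n → ∀ a ∈ C, ∀ j < J,
      ‖(y j / shiftCoeff (w a) n j : ℂ) ^ (r : ℂ)⁻¹‖ ≤ K * (n : ℝ) ^ (-(γ / r)) := by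
  obtain ⟨D, hD, hge⟩ := h.exists_mul_rpow_le_shiftCoeff hC hcont J
  set Y : ℝ := 1 + ∑ j ∈ range J, ‖y j‖
  have : 0 < Y := by positivity
  refine ⟨(Y / D) ^ (r : ℝ)⁻¹, by positivity, fun n hN hn a ha j hj => ?_⟩
  have hyY : ‖y j‖ ≤ Y := by
    linarith [single_le_sum (f := fun j => ‖y j‖) (fun _ _ => norm_nonneg _) (mem_range.mpr hj)]
  have hs := shiftCoeff_pos (h.pos a ha) n j
  rw [Complex.norm_cpow_inv_nat, norm_div, Complex.norm_real, Real.norm_of_nonneg hs.le]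
  calc (‖y j‖ / shiftCoeff (w a) n j) ^ (r : ℝ)⁻¹
      ≤ (Y / (D * (n : ℝ) ^ γ)) ^ (r : ℝ)⁻¹ := by gcongr; exact hge n hN a ha j hj
    _ = (Y / D) ^ (r : ℝ)⁻¹ * (n : ℝ) ^ (-(γ / r)) := by
        rw [← div_div, div_eq_mul_inv _ ((n : ℝ) ^ γ), ← Real.rpow_neg (by positivity),
          Real.mul_rpow (by positivity) (by positivity), ← Real.rpow_mul (by positivity),
          neg_mul, div_eq_mul_inv γ]

lemma exists_abs_shiftCoeff_div_sub_one_le (h : WeightCriterion w C D₁ D₂ γ N) (hC : IsCompact C)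
    (hcont : ∀ n, ContinuousOn (fun a => w a n) C) (J : ℕ) {θ : ℝ} (hθ : 0 < θ) :
    ∃ δ > 0, ∀ᶠ n : ℕ in atTop, ∀ a ∈ C, ∀ b ∈ C, dist a b ≤ δ / Real.log n → ∀ j < J,
      |shiftCoeff (w a) n j / shiftCoeff (w b) n j - 1| ≤ θ := by
  have hD₁ := h.D₁_pos
  set η : ℝ := min 1 (θ / 2)
  have hηpos : 0 < η := by positivity
  obtain ⟨ρ, hρ, huc⟩ := exists_forall_lt_abs_sub_le_of_continuousOn (ε := η / 2) hC
    (f := fun j a => Real.log (partialProd (w a) j))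
    (fun j => ContinuousOn.log (continuousOn_finsetProd _ fun i _ => hcont i)
      fun a ha => (partialProd_pos (h.pos a ha) j).ne') J (by positivity)
  refine ⟨η / (4 * D₁), by positivity, ?_⟩
  have hlogtop : Tendsto (fun n : ℕ => Real.log n) atTop atTop :=
    Real.tendsto_log_atTop.comp tendsto_natCast_atTop_atTop
  filter_upwards [eventually_ge_atTop N, eventually_ge_atTop 2, eventually_ge_atTop J,
    hlogtop.eventually_gt_atTop (η / (4 * D₁) / ρ)] with n hN hn2 hnJ hlog a ha b hb hab j hj
  have hlogpos : 0 < Real.log n := Real.log_pos (by exact_mod_cast hn2)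
  have hlog2 : Real.log (j + n : ℕ) ≤ 2 * Real.log n := by
    rw [← Nat.cast_two, ← Real.log_pow]
    exact Real.log_le_log (by positivity) (by exact_mod_cast (by nlinarith : j + n ≤ n ^ 2))
  have hfar : |Real.log (partialProd (w a) (j + n)) - Real.log (partialProd (w b) (j + n))| ≤
      η / 2 := by
    calc _ ≤ D₁ * Real.log (j + n : ℕ) * dist a b := h.lipschitz _ (by omega) a ha b hb
      _ ≤ D₁ * (2 * Real.log n) * (η / (4 * D₁) / Real.log n) := by gcongr
      _ = η / 2 := by field_simp; ring
  have hnear := huc a ha b hb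
    (hab.trans_lt ((div_lt_comm₀ hlogpos hρ).mpr hlog)) j hj
  refine (abs_shiftCoeff_div_sub_one_le (h.pos a ha) (h.pos b hb) (min_le_left _ _) hfar
    hnear).trans ?_
  linarith [min_le_right 1 (θ / 2)]

lemma exists_shiftCoeff_div_le (h : WeightCriterion w C D₁ D₂ γ N) (hC : IsCompact C)
    (hcont : ∀ n, ContinuousOn (fun a => w a n) C) (J : ℕ) :
    ∃ K > 0, ∀ a ∈ C, ∀ b ∈ C, D₁ * dist a b ≤ γ / 2 → ∀ k g, N ≤ g → 1 ≤ g → J ≤ g → ∀ j < J,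
      shiftCoeff (w a) k (j + g) / shiftCoeff (w b) (k + g) j ≤
        K * ((k + g : ℕ) : ℝ) ^ (γ / 2) / (g : ℝ) ^ γ := by
  obtain ⟨A, hA, hle⟩ := exists_forall_lt_le_of_continuousOn hC
    (fun j => continuousOn_finsetProd _ fun i _ => hcont i) (f := fun j a => partialProd (w a) j) J
  have hγ := h.γ_pos
  have hD₂ := h.D₂_pos
  refine ⟨2 ^ (γ / 2) * A / D₂, by positivity, fun a ha b hb hab k g hN hg hJ j hj => ?_⟩
  have hPa := fun n => partialProd_pos (h.pos a ha) n
  have hPb := fun n => partialProd_pos (h.pos b hb) n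
  have hsa : shiftCoeff (w a) k (j + g) =
      partialProd (w a) (j + (k + g)) / partialProd (w a) (j + g) := by
    rw [eq_div_iff (hPa _).ne', mul_comm, partialProd_mul_shiftCoeff, add_assoc, add_comm g k]
  have hsb : shiftCoeff (w b) (k + g) j =
      partialProd (w b) (j + (k + g)) / partialProd (w b) j := by
    rw [eq_div_iff (hPb _).ne', mul_comm, partialProd_mul_shiftCoeff]
  have hcomp : partialProd (w a) (j + (k + g)) ≤
      partialProd (w b) (j + (k + g)) * (2 ^ (γ / 2) * ((k + g : ℕ) : ℝ) ^ (γ / 2)) := by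
    have hdouble : ((j + (k + g) : ℕ) : ℝ) ≤ 2 * (k + g : ℕ) := by
      exact_mod_cast (by omega : j + (k + g) ≤ 2 * (k + g))
    refine (h.partialProd_le_mul_rpow ha hb (by omega) (by omega) hab).trans ?_
    rw [← Real.mul_rpow zero_le_two (by positivity)]
    have := hPb (j + (k + g))
    gcongr
  rw [hsa, hsb, div_div_div_eq]
  have := hPb j
  have := hPb (j + (k + g))
  calc _ ≤ partialProd (w b) (j + (k + g)) * (2 ^ (γ / 2) * ((k + g : ℕ) : ℝ) ^ (γ / 2)) * A /
        (D₂ * (g : ℝ) ^ γ * partialProd (w b) (j + (k + g))) := by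
        gcongr
        · exact hle j hj b hb
        · calc D₂ * (g : ℝ) ^ γ ≤ D₂ * ((j + g : ℕ) : ℝ) ^ γ := by gcongr; omega
            _ ≤ _ := h.growth _ (by omega) a ha
    _ = _ := by field_simp

end WeightCriterion

lemma tsum_le_sum_image {ι : Type*} (S : Finset ι) (pos : ι → ℕ) (g : ℕ → ℝ≥0∞)
    (h : ∀ n, g n ≠ 0 → ∃ p ∈ S, pos p = n) : ∑' n, g n ≤ ∑ p ∈ S, g (pos p) := by
  classical
  rw [tsum_eq_sum (s := S.image pos) fun n hn => by
    by_contra hne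
    exact hn (mem_image.mpr (h n hne))]
  exact sum_image_le_of_nonneg fun _ _ => zero_le

/-- The building block of a hypercyclic vector. Near the time `τ k` it carries a copy of the
target `(y 0, …, y (J - 1))`, prepared for the weight sequence `v k`: the `n`-th power of the
weighted backward shift `B_{v k}`, `n = τ k`, sends the coordinatewise `r`-th power of the `k`-th
copy to the target. -/
def shiftBlock (r : ℕ) (y : ℕ → ℂ) (J M : ℕ) (τ : ℕ → ℕ) (v : ℕ → ℕ → ℝ) : ℕ → ℂ :=
  ∑ q ∈ range M ×ˢ range J,
    Pi.single (q.2 + τ q.1) ((y q.2 / shiftCoeff (v q.1) (τ q.1) q.2 : ℂ) ^ (r : ℂ)⁻¹)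

section ShiftBlock

variable {r J M : ℕ} {y : ℕ → ℂ} {τ : ℕ → ℕ} {v : ℕ → ℕ → ℝ}

lemma exists_of_shiftBlock_ne_zero {n : ℕ} (hn : shiftBlock r y J M τ v n ≠ 0) :
    ∃ k < M, ∃ j < J, j + τ k = n := by
  rw [shiftBlock, Finset.sum_apply] at hn
  obtain ⟨⟨k, j⟩, hkj, hne⟩ := exists_ne_zero_of_sum_ne_zero hn
  obtain ⟨hk, hj⟩ := mem_product.mp hkj
  refine ⟨k, mem_range.mp hk, j, mem_range.mp hj, ?_⟩
  by_contra hpos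
  exact hne (Pi.single_eq_of_ne (Ne.symm hpos) _)

lemma eq_and_eq_of_add_eq_add (hτ : ∀ k l, k < l → τ k + J ≤ τ l) {k l j j' : ℕ} (hj : j < J)
    (hj' : j' < J) (heq : j + τ k = j' + τ l) : k = l ∧ j = j' := by
  rcases lt_trichotomy k l with hkl | rfl | hkl
  · have := hτ k l hkl; omega
  · omega
  · have := hτ l k hkl; omega

lemma shiftBlock_apply (hτ : ∀ k l, k < l → τ k + J ≤ τ l) {k j : ℕ} (hk : k < M) (hj : j < J) :
    shiftBlock r y J M τ v (j + τ k) = (y j / shiftCoeff (v k) (τ k) j : ℂ) ^ (r : ℂ)⁻¹ := by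
  rw [shiftBlock, Finset.sum_apply, sum_eq_single_of_mem (k, j) (by simp [hk, hj])]
  · rw [Pi.single_eq_same]
  · rintro ⟨l, j'⟩ hl hne
    refine Pi.single_eq_of_ne (fun heq => hne ?_) _
    obtain ⟨rfl, rfl⟩ := eq_and_eq_of_add_eq_add hτ hj (mem_range.mp (mem_product.mp hl).2) heq
    rfl

lemma shiftBlock_apply_pow (hr : r ≠ 0) (hτ : ∀ k l, k < l → τ k + J ≤ τ l) {k j : ℕ} (hk : k < M)
    (hj : j < J) :
    shiftBlock r y J M τ v (j + τ k) ^ r = y j / shiftCoeff (v k) (τ k) j := by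
  rw [shiftBlock_apply hτ hk hj, Complex.cpow_nat_inv_pow _ hr]

lemma tsum_enorm_mul_shiftBlock_le (f : ℕ → ℂ) :
    ∑' n, ‖f n * shiftBlock r y J M τ v n‖ₑ ≤
      ∑ k ∈ range M, ∑ j ∈ range J, ‖f (j + τ k) * shiftBlock r y J M τ v (j + τ k)‖ₑ := by
  rw [← sum_product']
  refine tsum_le_sum_image _ (fun q : ℕ × ℕ => q.2 + τ q.1) _ fun n hn => ?_
  obtain ⟨k, hk, j, hj, rfl⟩ :=
    exists_of_shiftBlock_ne_zero (right_ne_zero_of_mul (enorm_ne_zero.mp hn))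
  exact ⟨(k, j), by simp [hk, hj], rfl⟩

lemma monotone_of_forall_lt_add_le (hτ : ∀ k l, k < l → τ k + J ≤ τ l) : Monotone τ :=
  fun k l hkl => hkl.eq_or_lt.elim (fun h => h ▸ le_rfl) fun h =>
    (Nat.le_add_right _ _).trans (hτ k l h)

lemma exists_of_shiftCoeff_mul_shiftBlock_sub_ne_zero (hr : r ≠ 0)
    (hτ : ∀ k l, k < l → τ k + J ≤ τ l) (hy : ∀ j, J ≤ j → y j = 0) {a : ℂ} {k j : ℕ}
    (hk : k < M) (hj : a * shiftBlock r y J M τ v (j + τ k) ^ r - y j ≠ 0) :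
    ∃ l ∈ Ico k M, ∃ j' < J, j' + (τ l - τ k) = j := by
  rcases lt_or_ge j J with hjJ | hjJ
  · exact ⟨k, by simp [hk], j, hjJ, by simp⟩
  have hne : shiftBlock r y J M τ v (j + τ k) ≠ 0 := fun h0 => hj (by
    rw [h0, hy j hjJ, zero_pow hr, mul_zero, sub_zero])
  obtain ⟨l, hl, j', hj', heq⟩ := exists_of_shiftBlock_ne_zero hne
  have hkl : k ≤ l := by
    by_contra! hlk
    have := hτ l k hlk
    omega
  have := monotone_of_forall_lt_add_le hτ hkl
  exact ⟨l, mem_Ico.mpr ⟨hkl, hl⟩, j', hj', by omega⟩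

/- At the time `τ k` the copies before the `k`-th one have been shifted out, the `k`-th one has
become the target up to a ratio of weights, and the later ones are still far to the right. -/
lemma tsum_enorm_shiftCoeff_mul_shiftBlock_sub_le (hr : r ≠ 0)
    (hτ : ∀ k l, k < l → τ k + J ≤ τ l) (hy : ∀ j, J ≤ j → y j = 0) (a : ℕ → ℝ) {k : ℕ}
    (hk : k < M) :
    ∑' j, ‖(shiftCoeff a (τ k) j : ℂ) * shiftBlock r y J M τ v (j + τ k) ^ r - y j‖ₑ ≤
      ∑ j ∈ range J,
        ‖((shiftCoeff a (τ k) j / shiftCoeff (v k) (τ k) j - 1 : ℝ) : ℂ) * y j‖ₑ +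
      ∑ l ∈ Ioo k M, ∑ j ∈ range J,
        ‖((shiftCoeff a (τ k) (j + (τ l - τ k)) / shiftCoeff (v l) (τ l) j : ℝ) : ℂ) * y j‖ₑ := by
  refine (tsum_le_sum_image (Ico k M ×ˢ range J) (fun q => q.2 + (τ q.1 - τ k)) _
    fun j hj => ?_).trans_eq ?_
  · obtain ⟨l, hl, j', hj', heq⟩ :=
      exists_of_shiftCoeff_mul_shiftBlock_sub_ne_zero hr hτ hy hk (enorm_ne_zero.mp hj)
    exact ⟨(l, j'), mem_product.mpr ⟨hl, mem_range.mpr hj'⟩, heq⟩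
  rw [sum_product, ← sum_Ioo_add_eq_sum_Ico hk, add_comm]
  congr 1
  · refine sum_congr rfl fun j hj => ?_
    simp only [tsub_self, add_zero, shiftBlock_apply_pow hr hτ hk (mem_range.mp hj)]
    congr 1
    push_cast
    ring
  · refine sum_congr rfl fun l hl => sum_congr rfl fun j hj => ?_
    obtain ⟨hkl, hlM⟩ := mem_Ioo.mp hl
    have hgap := hτ k l hkl
    rw [hy _ (by dsimp only; omega), sub_zero, add_assoc,
      Nat.sub_add_cancel (monotone_of_forall_lt_add_le hτ hkl.le),
      shiftBlock_apply_pow hr hτ hlM (mem_range.mp hj)]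
    congr 1
    push_cast
    ring

end ShiftBlock

section BlockTimes

/-- The time of the `k`-th copy in a block. The scale `m` makes a block sparse and puts it far to
the right; the exponent makes the gaps comparable with a large power of the copies' indices. -/
def blockTime (s m k : ℕ) : ℕ := (m * (k + 1)) ^ (s + 1)

variable {s m k l : ℕ}

lemma le_blockTime : m ≤ blockTime s m k :=
  (Nat.le_mul_of_pos_right m k.succ_pos).trans (Nat.le_self_pow s.succ_ne_zero _)

lemma blockTime_add_mul_pow_le (hkl : k < l) :
    blockTime s m k + m * (m * (l + 1)) ^ s ≤ blockTime s m l := by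
  have hbase : m * (k + 1) + m ≤ m * (l + 1) := by nlinarith
  calc blockTime s m k + m * (m * (l + 1)) ^ s
      ≤ (m * (l + 1)) ^ s * (m * (k + 1)) + m * (m * (l + 1)) ^ s := by
        rw [blockTime, pow_succ]; gcongr
    _ = (m * (l + 1)) ^ s * (m * (k + 1) + m) := by ring
    _ ≤ blockTime s m l := by rw [blockTime, pow_succ]; gcongr

lemma blockTime_add_le (hkl : k < l) : blockTime s m k + m ≤ blockTime s m l := by
  rcases m.eq_zero_or_pos with rfl | hm
  · simp [blockTime]
  · exact (Nat.add_le_add_left (Nat.le_mul_of_pos_right m (by positivity)) _).trans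
      (blockTime_add_mul_pow_le hkl)

lemma blockTime_rpow_neg_le (hm : m ≠ 0) {β : ℝ} (hβ : 2 ≤ (s + 1) * β) :
    (blockTime s m k : ℝ) ^ (-β) ≤ 1 / ((m * (k + 1) : ℕ) : ℝ) ^ 2 := by
  have hone : (1 : ℝ) ≤ (m * (k + 1) : ℕ) := by exact_mod_cast Nat.pos_of_ne_zero (by positivity)
  rw [blockTime, Nat.cast_pow, ← Real.rpow_natCast_mul (by positivity), one_div,
    ← Real.rpow_natCast _ 2, ← Real.rpow_neg (by positivity)]
  exact Real.rpow_le_rpow_of_exponent_le hone (by push_cast; linarith)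

lemma blockTime_rpow_div_gap_rpow_le (hm : m ≠ 0) {γ : ℝ} (hγ : 0 ≤ γ) (hs : γ + 4 ≤ s * γ) {g : ℕ}
    (hg : (m * (k + 1)) ^ s ≤ g) :
    (blockTime s m k : ℝ) ^ (γ / 2) / (g : ℝ) ^ γ ≤ 1 / ((m * (k + 1) : ℕ) : ℝ) ^ 2 := by
  set t : ℝ := ((m * (k + 1) : ℕ) : ℝ) with ht
  have hone : 1 ≤ t := by rw [ht]; exact_mod_cast Nat.pos_of_ne_zero (by positivity)
  have hpos : 0 < t := one_pos.trans_le hone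
  have hg' : t ^ s ≤ g := by rw [ht]; exact_mod_cast hg
  calc (blockTime s m k : ℝ) ^ (γ / 2) / (g : ℝ) ^ γ
      ≤ (t ^ (s + 1)) ^ (γ / 2) / (t ^ s) ^ γ := by
        rw [blockTime, Nat.cast_pow, ← ht]; gcongr
    _ = t ^ ((s + 1) * (γ / 2) - s * γ) := by
        rw [← Real.rpow_natCast_mul hpos.le, ← Real.rpow_natCast_mul hpos.le, Real.rpow_sub hpos]
        push_cast; rfl
    _ ≤ t ^ (-(2 : ℕ) : ℝ) := Real.rpow_le_rpow_of_exponent_le hone (by push_cast; linarith)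
    _ = 1 / t ^ 2 := by rw [Real.rpow_neg hpos.le, Real.rpow_natCast, one_div]

lemma eventually_sum_le_of_le_div_sq (K : ℝ) (J : ℕ) {ε : ℝ≥0∞} (hε : ε ≠ 0) :
    ∀ᶠ m : ℕ in atTop, ∀ (F : Finset ℕ) (g : ℕ → ℕ → ℝ≥0∞),
      (∀ k ∈ F, ∀ j < J, g k j ≤ ENNReal.ofReal (K / ((m * (k + 1) : ℕ) : ℝ) ^ 2)) →
        ∑ k ∈ F, ∑ j ∈ range J, g k j ≤ ε := by
  set Z : ℝ≥0∞ := ∑' k : ℕ, ENNReal.ofReal (1 / ((k : ℝ) + 1) ^ 2)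
  have hZ : Z ≠ ⊤ := by
    refine Summable.tsum_ofReal_ne_top ?_
    simpa using (summable_nat_add_iff 1).mpr (Real.summable_one_div_nat_pow.mpr one_lt_two)
  have hlim : Tendsto (fun m : ℕ => J * (ENNReal.ofReal (K / (m : ℝ) ^ 2) * Z)) atTop (𝓝 0) := by
    have hK : Tendsto (fun m : ℕ => K / (m : ℝ) ^ 2) atTop (𝓝 0) :=
      tendsto_const_nhds.div_atTop
        ((tendsto_pow_atTop two_ne_zero).comp tendsto_natCast_atTop_atTop)
    simpa using ENNReal.Tendsto.const_mul
      (ENNReal.Tendsto.mul_const (ENNReal.tendsto_ofReal hK) (Or.inr hZ))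
      (Or.inr (ENNReal.natCast_ne_top J))
  filter_upwards [hlim.eventually_le_const hε.bot_lt] with m hm F g hg
  refine le_trans ?_ hm
  calc ∑ k ∈ F, ∑ j ∈ range J, g k j
      ≤ ∑ k ∈ F, ∑ _j ∈ range J, ENNReal.ofReal (K / ((m * (k + 1) : ℕ) : ℝ) ^ 2) :=
        sum_le_sum fun k hk => sum_le_sum fun j hj => hg k hk j (mem_range.mp hj)
    _ = J * (ENNReal.ofReal (K / (m : ℝ) ^ 2) *
          ∑ k ∈ F, ENNReal.ofReal (1 / ((k : ℝ) + 1) ^ 2)) := by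
        rw [mul_sum, mul_sum]
        refine sum_congr rfl fun k _ => ?_
        rw [sum_const, card_range, nsmul_eq_mul, ← ENNReal.ofReal_mul' (by positivity)]
        congr 2
        push_cast
        field_simp
    _ ≤ J * (ENNReal.ofReal (K / (m : ℝ) ^ 2) * Z) := by
        gcongr
        exact ENNReal.sum_le_tsum F

end BlockTimes

namespace WeightCriterion

variable {α : Type*} [PseudoMetricSpace α] {w : α → ℕ → ℝ} {C : Set α} {D₁ D₂ γ : ℝ} {N : ℕ}

lemma eventually_tsum_enorm_mul_shiftBlock_le (h : WeightCriterion w C D₁ D₂ γ N)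
    (hC : IsCompact C) (hcont : ∀ n, ContinuousOn (fun a => w a n) C) {r s : ℕ} (hr : r ≠ 0)
    (hs : 4 * r ≤ (s + 1) * γ) (J : ℕ) (y : ℕ → ℂ) {A : ℝ} (hA : 0 ≤ A) {ε : ℝ≥0∞} (hε : ε ≠ 0) :
    ∀ᶠ m in atTop, ∀ (M : ℕ) (c : ℕ → α), (∀ k < M, c k ∈ C) →
      ∀ f : ℕ → ℂ, (∀ n : ℕ, 1 ≤ n → ‖f n‖ ≤ A * (n : ℝ) ^ (γ / (2 * r))) →
        ∑' n, ‖f n * shiftBlock r y J M (blockTime s m) (fun k => w (c k)) n‖ₑ ≤ ε := by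
  obtain ⟨K, hK, hroot⟩ := h.exists_norm_root_le hC hcont r J y
  set β : ℝ := γ / (2 * r) with hβ
  have hβ0 : 0 < β := div_pos h.γ_pos (by positivity)
  have hγβ : γ / r = β + β := by rw [hβ]; field_simp; ring
  have hsβ : 2 ≤ (s + 1) * β := by
    rw [hβ, ← mul_div_assoc, le_div_iff₀ (by positivity)]; linarith
  filter_upwards [eventually_sum_le_of_le_div_sq (A * 2 ^ β * K) J hε, eventually_ge_atTop N,
    eventually_ge_atTop 1, eventually_ge_atTop J] with m hsum hmN hm1 hmJ M c hc f hf
  refine (tsum_enorm_mul_shiftBlock_le f).trans (hsum _ _ fun k hk j hj => ?_)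
  have hk := mem_range.mp hk
  have hmτ : m ≤ blockTime s m k := le_blockTime
  have hτ : ∀ k l, k < l → blockTime s m k + J ≤ blockTime s m l := fun k l hkl =>
    (Nat.add_le_add_left hmJ _).trans (blockTime_add_le hkl)
  set t : ℝ := (blockTime s m k : ℝ) with ht
  have htpos : 0 < t := by rw [ht]; exact_mod_cast hm1.trans hmτ
  rw [← ofReal_norm, shiftBlock_apply hτ hk hj, norm_mul]
  refine ENNReal.ofReal_le_ofReal ?_
  have hdouble : ((j + blockTime s m k : ℕ) : ℝ) ≤ 2 * t := by
    rw [ht]; exact_mod_cast (by omega : j + blockTime s m k ≤ 2 * blockTime s m k)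
  calc _ ≤ A * ((j + blockTime s m k : ℕ) : ℝ) ^ β * (K * t ^ (-(γ / r))) := by
        gcongr
        · exact hf _ (by omega)
        · exact hroot _ (hmN.trans hmτ) (hm1.trans hmτ) _ (hc k hk) j hj
    _ ≤ A * (2 * t) ^ β * (K * t ^ (-(γ / r))) := by gcongr
    _ = A * 2 ^ β * K * t ^ (-β) := by
        rw [Real.mul_rpow zero_le_two htpos.le, hγβ, neg_add, Real.rpow_add htpos,
          Real.rpow_neg htpos.le β]
        field_simp
    _ ≤ A * 2 ^ β * K * (1 / ((m * (k + 1) : ℕ) : ℝ) ^ 2) := by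
        gcongr
        exact blockTime_rpow_neg_le (by omega) hsβ
    _ = _ := mul_one_div _ _

lemma exists_sum_enorm_shiftCoeff_div_sub_one_mul_le (h : WeightCriterion w C D₁ D₂ γ N)
    (hC : IsCompact C) (hcont : ∀ n, ContinuousOn (fun a => w a n) C) (J : ℕ) (y : ℕ → ℂ)
    {ε : ℝ≥0∞} (hε : ε ≠ 0) :
    ∃ δ > 0, ∀ᶠ n : ℕ in atTop, ∀ a ∈ C, ∀ b ∈ C, dist a b ≤ δ / Real.log n →
      ∑ j ∈ range J, ‖((shiftCoeff (w a) n j / shiftCoeff (w b) n j - 1 : ℝ) : ℂ) * y j‖ₑ ≤ ε := by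
  obtain ⟨θ, hθ, hθε⟩ := ENNReal.exists_nnreal_pos_mul_lt
    (ENNReal.sum_ne_top.mpr fun j (_ : j ∈ range J) => enorm_ne_top (x := y j)) hε
  obtain ⟨δ, hδ, hratio⟩ := h.exists_abs_shiftCoeff_div_sub_one_le hC hcont J
    (NNReal.coe_pos.mpr hθ)
  refine ⟨δ, hδ, hratio.mono fun n hn a ha b hb hab => le_trans ?_ hθε.le⟩
  rw [mul_sum]
  refine sum_le_sum fun j hj => ?_
  rw [enorm_mul]
  gcongr
  rw [← ofReal_norm, Complex.norm_real, Real.norm_eq_abs, ← ENNReal.ofReal_coe_nnreal]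
  exact ENNReal.ofReal_le_ofReal (hn a ha b hb hab j (mem_range.mp hj))

lemma eventually_sum_enorm_interference_le (h : WeightCriterion w C D₁ D₂ γ N) (hC : IsCompact C)
    (hcont : ∀ n, ContinuousOn (fun a => w a n) C) {s : ℕ} (hs : γ + 4 ≤ s * γ) (J : ℕ)
    (y : ℕ → ℂ) {ε : ℝ≥0∞} (hε : ε ≠ 0) :
    ∀ᶠ m in atTop, ∀ (M : ℕ) (c : ℕ → α), (∀ l < M, c l ∈ C) →
      ∀ a ∈ C, (∀ l < M, D₁ * dist a (c l) ≤ γ / 2) → ∀ k,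
        ∑ l ∈ Ioo k M, ∑ j ∈ range J,
          ‖((shiftCoeff (w a) (blockTime s m k) (j + (blockTime s m l - blockTime s m k)) /
            shiftCoeff (w (c l)) (blockTime s m l) j : ℝ) : ℂ) * y j‖ₑ ≤ ε := by
  obtain ⟨K, hK, hdiv⟩ := h.exists_shiftCoeff_div_le hC hcont J
  set Y : ℝ := ∑ j ∈ range J, ‖y j‖
  filter_upwards [eventually_sum_le_of_le_div_sq (K * Y) J hε, eventually_ge_atTop N,
    eventually_ge_atTop 1, eventually_ge_atTop J] with m hsum hmN hm1 hmJ M c hc a ha hac k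
  refine hsum _ _ fun l hl j hj => ?_
  obtain ⟨hkl, hlM⟩ := mem_Ioo.mp hl
  have hyY : ‖y j‖ ≤ Y :=
    single_le_sum (f := fun j => ‖y j‖) (fun _ _ => norm_nonneg _) (mem_range.mpr hj)
  obtain ⟨g, hg⟩ := Nat.exists_eq_add_of_le
    ((Nat.le_add_right _ _).trans (blockTime_add_mul_pow_le (s := s) (m := m) hkl))
  have hgap : m * (m * (l + 1)) ^ s ≤ g := by
    have := blockTime_add_mul_pow_le (s := s) (m := m) hkl
    omega
  have hmg : m ≤ g := (Nat.le_mul_of_pos_right m (by positivity)).trans hgap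
  have hdecay := blockTime_rpow_div_gap_rpow_le (k := l) (by omega) h.γ_pos.le hs
    ((Nat.le_mul_of_pos_left _ hm1).trans hgap)
  rw [hg, Nat.add_sub_cancel_left, ← ofReal_norm, norm_mul, Complex.norm_real,
    Real.norm_of_nonneg (div_pos (shiftCoeff_pos (h.pos a ha) _ _)
      (shiftCoeff_pos (h.pos _ (hc l hlM)) _ _)).le]
  refine ENNReal.ofReal_le_ofReal ?_
  calc _ ≤ K * ((blockTime s m k + g : ℕ) : ℝ) ^ (γ / 2) / (g : ℝ) ^ γ * Y := by
        refine mul_le_mul ?_ hyY (norm_nonneg _) (by positivity)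
        exact hdiv a ha _ (hc l hlM) (hac l hlM) _ g (hmN.trans hmg) (hm1.trans hmg)
          (hmJ.trans hmg) j hj
    _ = K * Y * ((blockTime s m l : ℝ) ^ (γ / 2) / (g : ℝ) ^ γ) := by rw [hg]; ring
    _ ≤ K * Y * (1 / ((m * (l + 1) : ℕ) : ℝ) ^ 2) := by gcongr
    _ = _ := mul_one_div _ _

end WeightCriterion

/-- A block `u` living in the window `(L, L']` and made for one approximation task. It is small in
`ℓ¹`, and remains so under the first `L` iterates of every shift with parameter in `Q`; for every
product of shifts with parameter `lam ∈ Λ` some time in the window brings the `r`-th powers of its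
components close to `y`. -/
structure IsHittingBlock {ι α : Type*} (w : α → ℕ → ℝ) (Λ : Set (ι → α)) (Q : Set α) (r : ℕ)
    (y : ι → ℕ → ℂ) (L L' : ℕ) (ε : ℝ≥0∞) (u : ι → ℕ → ℂ) : Prop where
  lt : L < L'
  mem_window : ∀ i n, u i n ≠ 0 → n ∈ Set.Ioc L L'
  norm_le : ∀ i, ∑' n, ‖u i n‖ₑ ≤ ε
  iterate_le : ∀ a ∈ Q, ∀ n ≤ L, ∀ i, ∑' j, ‖(shiftCoeff (w a) n j : ℂ) * u i (j + n)‖ₑ ≤ ε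
  hits : ∀ lam ∈ Λ, ∃ n ∈ Set.Ioc L L', ∀ i,
    ∑' j, ‖(shiftCoeff (w (lam i)) n j : ℂ) * u i (j + n) ^ r - y i j‖ₑ ≤ ε

/-- The parameter set `Λ` admits hitting blocks for every power and every finitely supported
target, starting arbitrarily far to the right, arbitrarily small, and compatible with any compact
set of parameters in `I`. -/
def HasHittingBlocks {ι α : Type*} [TopologicalSpace α] (w : α → ℕ → ℝ) (I : Set α)
    (Λ : Set (ι → α)) : Prop :=
  ∀ r ≠ 0, ∀ (J : ℕ) (y : ι → ℕ → ℂ), (∀ i j, J ≤ j → y i j = 0) → ∀ Q ⊆ I, IsCompact Q →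
    ∀ (L : ℕ) (ε : ℝ≥0∞), ε ≠ 0 → ∃ L' u, IsHittingBlock w Λ Q r y L L' ε u

lemma exists_blockTime_cover {ι : Type*} [Fintype ι] [Nonempty ι] {K : Set (ι → ℝ)}
    (hK : Bornology.IsBounded K) {δ : ℝ} (hδ : 0 < δ) (s : ℕ) {m : ℕ} (hm : 2 ≤ m) :
    ∃ (M : ℕ) (c : ℕ → ι → ℝ), (∀ k < M, c k ∈ K) ∧
      ∀ x ∈ K, ∃ k < M, dist x (c k) < δ / Real.log (blockTime s m k) := by
  have hτ : ∀ k, 2 ≤ blockTime s m k := fun k => hm.trans le_blockTime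
  have hlog : ∀ k, 0 < Real.log (blockTime s m k) := fun k =>
    Real.log_pos (by exact_mod_cast hτ k)
  refine exists_finite_cover_of_not_summable hK (fun k => div_pos hδ (hlog k))
    (fun k l hkl => div_le_div_of_nonneg_left hδ.le (hlog k) (Real.log_le_log ?_ ?_)) ?_
  · exact_mod_cast two_pos.trans_le (hτ k)
  · exact_mod_cast monotone_of_forall_lt_add_le (fun _ _ => blockTime_add_le) hkl
  · rw [Module.finrank_fintype_fun_eq_card]
    exact not_summable_inv_log_pow_pow Fintype.card_ne_zero hδ hm s.succ_ne_zero

lemma mem_Ioc_of_shiftBlock_blockTime_ne_zero {r J M s m L n : ℕ} {y : ℕ → ℂ} {v : ℕ → ℕ → ℝ}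
    (hLm : L < m) (hJm : J ≤ m) (hn : shiftBlock r y J M (blockTime s m) v n ≠ 0) :
    n ∈ Set.Ioc L (blockTime s m M) := by
  obtain ⟨k, hk, j, hj, rfl⟩ := exists_of_shiftBlock_ne_zero hn
  have := blockTime_add_le (s := s) (m := m) hk
  have := le_blockTime (s := s) (m := m) (k := k)
  exact ⟨by omega, by omega⟩

namespace WeightCriterion

variable {α : Type*} [PseudoMetricSpace α] {w : α → ℕ → ℝ} {C Q : Set α} {D₁ D₂ γ : ℝ} {N : ℕ}

lemma eventually_tsum_enorm_shiftCoeff_mul_shiftBlock_le (h : WeightCriterion w C D₁ D₂ γ N)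
    (hC : IsCompact C) (hcont : ∀ n, ContinuousOn (fun a => w a n) C) {r s : ℕ} (hr : r ≠ 0)
    (hs : 4 * r ≤ (s + 1) * γ) {E₁ E₂ η : ℝ} {N' : ℕ} (hw : WeightCriterion w Q E₁ E₂ η N')
    (hQ : IsCompact Q) (hcontQ : ∀ n, ContinuousOn (fun a => w a n) Q)
    (hbddQ : ∀ a ∈ Q, ∃ B : ℝ, ∀ n, 1 ≤ n → w a n ≤ B) (J : ℕ) (y : ℕ → ℂ) (L : ℕ) {ε : ℝ≥0∞}
    (hε : ε ≠ 0) :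
    ∀ᶠ m in atTop, ∀ (M : ℕ) (c : ℕ → α), (∀ k < M, c k ∈ C) → ∀ a ∈ Q, ∀ n ≤ L,
      ∑' j, ‖(shiftCoeff (w a) n j : ℂ) *
        shiftBlock r y J M (blockTime s m) (fun k => w (c k)) (j + n)‖ₑ ≤ ε := by
  have hγ := h.γ_pos
  obtain ⟨A, hA, hle⟩ := hw.exists_shiftCoeff_le_rpow hQ hcontQ hbddQ L
    (β := γ / (2 * r)) (by positivity)
  filter_upwards [h.eventually_tsum_enorm_mul_shiftBlock_le hC hcont hr hs J y
    (zero_le_one.trans hA) hε] with m hm M c hc a ha n hn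
  refine le_trans ?_ (hm M c hc (fun k => if n ≤ k then (shiftCoeff (w a) n (k - n) : ℂ) else 0)
    fun k hk => ?_)
  · refine le_trans (le_of_eq (tsum_congr fun j => ?_))
      (ENNReal.tsum_comp_le_tsum_of_injective (add_left_injective n) _)
    simp
  · split_ifs with hnk
    · rw [Complex.norm_real, Real.norm_of_nonneg (shiftCoeff_pos (hw.pos a ha) _ _).le]
      simpa [hnk] using hle a ha n hn (k - n) (by omega)
    · rw [norm_zero]
      positivity

lemma exists_eventually_tsum_enorm_shiftCoeff_mul_shiftBlock_sub_le
    (h : WeightCriterion w C D₁ D₂ γ N) (hC : IsCompact C)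
    (hcont : ∀ n, ContinuousOn (fun a => w a n) C) {r s : ℕ} (hr : r ≠ 0) (hs : γ + 4 ≤ s * γ)
    {J : ℕ} {y : ℕ → ℂ} (hy : ∀ j, J ≤ j → y j = 0) {ε : ℝ≥0∞} (hε : ε ≠ 0) :
    ∃ δ > 0, ∀ᶠ m in atTop, ∀ (M : ℕ) (c : ℕ → α), (∀ l < M, c l ∈ C) →
      ∀ a ∈ C, (∀ l < M, D₁ * dist a (c l) ≤ γ / 2) → ∀ k < M,
        dist a (c k) ≤ δ / Real.log (blockTime s m k) →
          ∑' j, ‖(shiftCoeff (w a) (blockTime s m k) j : ℂ) *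
            shiftBlock r y J M (blockTime s m) (fun k => w (c k)) (j + blockTime s m k) ^ r
              - y j‖ₑ ≤ ε := by
  have hε2 : ε / 2 ≠ 0 := (ENNReal.half_pos hε).ne'
  obtain ⟨δ, hδ, hmain⟩ := h.exists_sum_enorm_shiftCoeff_div_sub_one_mul_le hC hcont J y hε2
  refine ⟨δ, hδ, ?_⟩
  filter_upwards [eventually_forall_ge_atTop.mpr hmain, eventually_ge_atTop J,
    h.eventually_sum_enorm_interference_le hC hcont hs J y hε2]
    with m hmain hmJ hinter M c hc a ha hac k hk hak
  have hτ : ∀ k l, k < l → blockTime s m k + J ≤ blockTime s m l := fun k l hkl =>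
    (Nat.add_le_add_left hmJ _).trans (blockTime_add_le hkl)
  refine (tsum_enorm_shiftCoeff_mul_shiftBlock_sub_le hr hτ hy (w a) hk).trans ?_
  rw [← ENNReal.add_halves ε]
  exact add_le_add (hmain _ le_blockTime a ha _ (hc k hk) hak) (hinter M c hc a ha hac k)

end WeightCriterion

section HittingBlocks

variable {ι : Type*} [Fintype ι] [Nonempty ι] {I C : Set ℝ} {w : ℝ → ℕ → ℝ} {D₁ D₂ γ : ℝ} {N : ℕ}

theorem WeightCriterion.hasHittingBlocks (h : WeightCriterion w C D₁ D₂ γ N) (hC : IsCompact C)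
    (hcont : ∀ n, ContinuousOn (fun a => w a n) C)
    (hcontI : ∀ n, ContinuousOn (fun a => w a n) I)
    (hbdd : ∀ a ∈ I, ∃ B : ℝ, ∀ n, 1 ≤ n → w a n ≤ B)
    (hcrit : ∀ Q ⊆ I, IsCompact Q → ∃ D₁ D₂ γ N, WeightCriterion w Q D₁ D₂ γ N)
    {Λ : Set (ι → ℝ)} (hΛ : Bornology.IsBounded Λ) (hΛC : ∀ lam ∈ Λ, ∀ i, lam i ∈ C)
    (hdist : ∀ x ∈ Λ, ∀ y ∈ Λ, D₁ * dist x y ≤ γ / 2) : HasHittingBlocks w I Λ := by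
  intro r hr J y hy Q hQI hQ L ε hε
  have hcontQ := fun n => (hcontI n).mono hQI
  obtain ⟨E₁, E₂, η, N', hw⟩ := hcrit Q hQI hQ
  have hγ := h.γ_pos
  obtain ⟨s, hs⟩ := exists_nat_ge ((γ + 4 + 4 * r) / γ)
  rw [div_le_iff₀ hγ] at hs
  choose δ hδ hhit using fun i =>
    h.exists_eventually_tsum_enorm_shiftCoeff_mul_shiftBlock_sub_le hC hcont hr (s := s)
      (by linarith) (hy i) hε
  obtain ⟨i₀, hi₀⟩ := Finite.exists_min δ
  have hnorm := fun i => h.eventually_tsum_enorm_mul_shiftBlock_le hC hcont hr (s := s)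
    (by linarith) J (y i) zero_le_one hε
  have hiter := fun i => h.eventually_tsum_enorm_shiftCoeff_mul_shiftBlock_le hC hcont hr (s := s)
    (by linarith) hw hQ hcontQ (fun a ha => hbdd a (hQI ha)) J (y i) L hε
  obtain ⟨m, hhit, hnorm, hiter, hm2, hLm, hJm⟩ := ((eventually_all.mpr hhit).and <|
    (eventually_all.mpr hnorm).and <| (eventually_all.mpr hiter).and <|
    (eventually_ge_atTop 2).and <| (eventually_gt_atTop L).and (eventually_ge_atTop J)).exists
  obtain ⟨M, c, hcΛ, hcover⟩ := exists_blockTime_cover hΛ (hδ i₀) s hm2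
  have hcC : ∀ i, ∀ k < M, c k i ∈ C := fun i k hk => hΛC _ (hcΛ k hk) i
  have hlate : ∀ k, L < blockTime s m k := fun k => hLm.trans_le le_blockTime
  refine ⟨blockTime s m M, fun i => shiftBlock r (y i) J M (blockTime s m) fun k => w (c k i),
    hlate M, fun i n => mem_Ioc_of_shiftBlock_blockTime_ne_zero hLm hJm, fun i => ?_,
    fun a ha n hn i => hiter i M _ (hcC i) a ha n hn, fun lam hlam => ?_⟩
  · simpa using hnorm i M _ (hcC i) (fun _ => 1) fun n hn => by
      simpa using Real.one_le_rpow (by exact_mod_cast hn) (by positivity)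
  · obtain ⟨k, hk, hlamk⟩ := hcover lam hlam
    have hfinal := blockTime_add_le (s := s) (m := m) hk
    refine ⟨blockTime s m k, ⟨hlate k, by omega⟩, fun i =>
      hhit i M _ (hcC i) (lam i) (hΛC lam hlam i) (fun l hl => ?_) k hk ?_⟩
    · exact (mul_le_mul_of_nonneg_left (dist_le_pi_dist lam (c l) i) h.D₁_pos.le).trans
        (hdist lam hlam _ (hcΛ l hl))
    · refine (dist_le_pi_dist lam (c k) i).trans (hlamk.le.trans ?_)
      have : 0 ≤ Real.log (blockTime s m k) := Real.log_natCast_nonneg _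
      gcongr
      exact hi₀ i

end HittingBlocks

section Polynomials

open Polynomial

variable {P : ℂ[X]}

lemma exists_enorm_eval_le_of_X_pow_dvd {n : ℕ} (h : X ^ n ∣ P) :
    ∃ C : NNReal, ∀ z : ℂ, ‖z‖ₑ ≤ 1 → ‖P.eval z‖ₑ ≤ C * ‖z‖ₑ ^ n := by
  obtain ⟨Q, rfl⟩ := h
  obtain ⟨C, hC⟩ := (isCompact_closedBall (0 : ℂ) 1).exists_bound_of_continuousOn
    Q.continuous.continuousOn
  refine ⟨C.toNNReal, fun z hz => ?_⟩
  have hz1 : z ∈ Metric.closedBall (0 : ℂ) 1 := by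
    simpa [← ofReal_norm] using hz
  rw [eval_mul, eval_pow, eval_X, enorm_mul, enorm_pow, mul_comm, ← ofReal_norm (eval z Q)]
  gcongr
  exact ENNReal.ofReal_le_ofReal (hC z hz1)

lemma exists_enorm_eval_le (hP : P.coeff 0 = 0) :
    ∃ C : NNReal, ∀ z : ℂ, ‖z‖ₑ ≤ 1 → ‖P.eval z‖ₑ ≤ C * ‖z‖ₑ := by
  simpa using exists_enorm_eval_le_of_X_pow_dvd (n := 1) (by simpa using X_dvd_iff.mpr hP)

lemma exists_enorm_eval_sub_trailingCoeff_mul_pow_le (P : ℂ[X]) :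
    ∃ B : NNReal, ∀ z : ℂ, ‖z‖ₑ ≤ 1 →
      ‖P.eval z - P.trailingCoeff * z ^ P.natTrailingDegree‖ₑ ≤
        B * ‖z‖ₑ ^ (P.natTrailingDegree + 1) := by
  have hdvd : X ^ (P.natTrailingDegree + 1) ∣
      P - C P.trailingCoeff * X ^ P.natTrailingDegree := by
    refine X_pow_dvd_iff.mpr fun k hk => ?_
    rcases (Nat.lt_succ_iff.mp hk).lt_or_eq with hlt | rfl
    · simp [coeff_eq_zero_of_lt_natTrailingDegree hlt, coeff_X_pow, hlt.ne]
    · simp [trailingCoeff]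
  simpa using exists_enorm_eval_le_of_X_pow_dvd hdvd

end Polynomials

section SequenceSpace

variable {p : ℝ≥0∞} [Fact (1 ≤ p)]

lemma lp_enorm_le_tsum_enorm (hp : p ≠ ⊤) (v : lpC p) : ‖v‖ₑ ≤ ∑' n, ‖v n‖ₑ := by
  have hp0 : 0 < p := one_pos.trans_le Fact.out
  calc ‖v‖ₑ = ‖∑' n, lp.single p n (v n)‖ₑ := by rw [(lp.hasSum_single hp v).tsum_eq]
    _ ≤ ∑' n, ‖lp.single (E := fun _ : ℕ => ℂ) p n (v n)‖ₑ := enorm_tsum_le_tsum_enorm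
    _ = ∑' n, ‖v n‖ₑ := tsum_congr fun n => by
      rw [← ofReal_norm, ← ofReal_norm, lp.norm_single hp0]

lemma memℓp_of_tsum_enorm_ne_top {f : ℕ → ℂ} (hf : ∑' n, ‖f n‖ₑ ≠ ⊤) :
    Memℓp (E := fun _ : ℕ => ℂ) f p := by
  refine Memℓp.of_exponent_ge (q := 1) (memℓp_gen ?_) Fact.out
  simpa using ENNReal.summable_toReal hf

lemma dense_setOf_finitelySupported (hp : p ≠ ⊤) :
    Dense {v : lpC p | ∃ J, ∀ j, J ≤ j → v j = 0} := fun v =>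
  mem_closure_of_tendsto (lp.hasSum_single hp v).tendsto_sum_nat <| Eventually.of_forall fun J =>
    ⟨J, fun j hj => by
      rw [lp.coeFn_sum, Finset.sum_apply]
      refine sum_eq_zero fun i hi => ?_
      simp [lp.single_apply, ((mem_range.mp hi).trans_le hj).ne']⟩

lemma separableSpace_lpC (hp : p ≠ ⊤) : TopologicalSpace.SeparableSpace (lpC p) := by
  have hrange := Set.countable_range fun n => lp.single (E := fun _ : ℕ => ℂ) p n 1
  have hspan := hrange.isSeparable.span (R := ℂ)
  refine TopologicalSpace.isSeparable_univ_iff.mp (hspan.closure.mono fun v _ => ?_)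
  refine mem_closure_of_tendsto (lp.hasSum_single hp v) (Eventually.of_forall fun F =>
    Submodule.sum_mem _ fun n _ => ?_)
  have : lp.single (E := fun _ : ℕ => ℂ) p n (v n) = v n • lp.single p n 1 := by
    rw [← lp.single_smul, smul_eq_mul, mul_one]
  rw [this]
  exact Submodule.smul_mem _ _ (Submodule.subset_span ⟨n, rfl⟩)

lemma exists_countable_dense_finitelySupported (hp : p ≠ ⊤) (ι : Type*) [Finite ι] :
    ∃ Y : Set (ι → lpC p), Y.Countable ∧ Dense Y ∧ ∀ y ∈ Y, ∃ J, ∀ i j, J ≤ j → y i j = 0 := by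
  have := Fintype.ofFinite ι
  have := separableSpace_lpC hp
  have := UniformSpace.secondCountable_of_separable (lpC p)
  obtain ⟨Y, hYsub, hYcount, hYdense⟩ := Dense.exists_countable_dense_subset
    (dense_pi Set.univ fun (_ : ι) _ => dense_setOf_finitelySupported hp)
  refine ⟨Y, hYcount, hYdense, fun y hy => ?_⟩
  choose J hJ using fun i => hYsub hy i (Set.mem_univ i)
  exact ⟨univ.sup J, fun i j hj => hJ i j ((le_sup (mem_univ i)).trans hj)⟩

namespace IsProductShift

variable {d : ℕ} {w : ℝ → ℕ → ℝ} {T : (Fin d → lpC p) →L[ℂ] (Fin d → lpC p)} {lam : Fin d → ℝ}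

lemma pow_apply (h : IsProductShift p d w T lam) (n : ℕ) (v : Fin d → lpC p) (i : Fin d) (j : ℕ) :
    (T ^ n) v i j = (shiftCoeff (w (lam i)) n j : ℂ) * v i (j + n) := by
  induction n generalizing v with
  | zero => simp [shiftCoeff_zero]
  | succ n ih =>
    rw [pow_succ, mul_apply_eq_comp, ih (T v), h v i (j + n), shiftCoeff_succ]
    push_cast
    rw [mul_assoc, add_assoc]

lemma dense_orbit (h : IsProductShift p d w T lam) (hp : p ≠ ⊤) {v : Fin d → lpC p} {a : ℂ}
    (ha : a ≠ 0) {Y : Set (Fin d → lpC p)} (hY : Dense Y)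
    (happrox : ∀ y ∈ Y, ∀ ε > 0, ∃ n ≠ 0, ∀ i,
      ∑' j, ‖(shiftCoeff (w (lam i)) n j : ℂ) * v i (j + n) - a * y i j‖ₑ < ε) :
    Dense (Set.range fun n : ℕ => (T ^ (n + 1)) v) := by
  have haY : Dense ((a • ·) '' Y) :=
    (Homeomorph.smulOfNeZero a ha).surjective.denseRange.dense_image (continuous_const_smul a) hY
  refine Dense.of_closure (haY.mono ?_)
  rintro _ ⟨y, hy, rfl⟩
  refine EMetric.mem_closure_iff.mpr fun ε hε => ?_
  obtain ⟨n, hn, hle⟩ := happrox y hy ε hε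
  obtain ⟨n, rfl⟩ := Nat.exists_eq_succ_of_ne_zero hn
  refine ⟨_, ⟨n, rfl⟩, ?_⟩
  rw [edist_comm, edist_pi_def, Finset.sup_lt_iff hε]
  intro i _
  rw [edist_eq_enorm_sub]
  refine (lp_enorm_le_tsum_enorm hp _).trans_lt (lt_of_eq_of_lt (tsum_congr fun j => ?_) (hle i))
  rw [← h.pow_apply]
  rfl

end IsProductShift

lemma commonHypercyclicAlgebraCW_of_generator {d : ℕ} {S : Set (Fin d → ℝ)}
    {T : (Fin d → ℝ) → ((Fin d → lpC p) →L[ℂ] (Fin d → lpC p))} {x : Fin d → ℕ → ℂ} (hx : x ≠ 0)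
    (hx1 : ∀ i n, ‖x i n‖ₑ ≤ 1) (hsum : ∀ i, ∑' n, ‖x i n‖ₑ ≠ ⊤)
    (hdense : ∀ P : Polynomial ℂ, P ≠ 0 → P.coeff 0 = 0 → ∀ v : Fin d → lpC p,
      (∀ i n, v i n = P.eval (x i n)) → ∀ lam ∈ S,
        Dense (Set.range fun n : ℕ => (T lam ^ (n + 1)) v)) :
    CommonHypercyclicAlgebraCW p d S T := by
  have hex : ∀ P : Polynomial ℂ, P.coeff 0 = 0 →
      ∃ v : Fin d → lpC p, ∀ i n, v i n = P.eval (x i n) := by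
    intro P hP
    obtain ⟨C, hC⟩ := exists_enorm_eval_le hP
    refine ⟨fun i => ⟨fun n => P.eval (x i n), memℓp_of_tsum_enorm_ne_top ?_⟩, fun i n => rfl⟩
    refine ne_top_of_le_ne_top (ENNReal.mul_ne_top (ENNReal.coe_ne_top (r := C)) (hsum i)) ?_
    rw [← ENNReal.tsum_mul_left]
    exact ENNReal.tsum_le_tsum fun n => hC _ (hx1 i n)
  refine ⟨{v | ∃ P : Polynomial ℂ, P.coeff 0 = 0 ∧ ∀ i n, v i n = P.eval (x i n)},
    ⟨0, by simp⟩, ?_, ?_, ?_, ?_, ?_⟩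
  · rintro v ⟨P, hP, hv⟩ v' ⟨P', hP', hv'⟩
    exact ⟨P + P', by simp [hP, hP'], by simp [hv, hv']⟩
  · rintro c v ⟨P, hP, hv⟩
    exact ⟨Polynomial.C c * P, by simp [hP], by simp [hv]⟩
  · rintro v ⟨P, hP, hv⟩ v' ⟨P', _, hv'⟩
    have hPP' : (P * P').coeff 0 = 0 := by simp [Polynomial.mul_coeff_zero, hP]
    obtain ⟨z, hz⟩ := hex (P * P') hPP'
    exact ⟨z, ⟨P * P', hPP', hz⟩, fun i n => by rw [hz, hv, hv', Polynomial.eval_mul]⟩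
  · obtain ⟨z, hz⟩ := hex Polynomial.X (by simp)
    refine ⟨z, ⟨Polynomial.X, by simp, hz⟩, ?_⟩
    rintro rfl
    refine hx (funext₂ fun i n => ?_)
    simpa using (hz i n).symm
  · rintro v ⟨P, hP, hv⟩ hv0
    refine hdense P ?_ hP v hv
    rintro rfl
    exact hv0 (by ext i n; simp [hv])

end SequenceSpace

section Gluing

/-- The sequence `e_0 + ∑ u_m` obtained by gluing the blocks `u_m`; the summand `e_0` only serves
to make it nonzero. -/
def glue (u : ℕ → ℕ → ℂ) (n : ℕ) : ℂ := Pi.single (M := fun _ => ℂ) 0 1 n + ∑' m, u m n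

/-- The blocks `u_m` live on the successive windows `(L_m, L_{m+1}]` partitioning the positive
integers, and are summably small. -/
structure IsBlockSequence (L : ℕ → ℕ) (u : ℕ → ℕ → ℂ) : Prop where
  zero : L 0 = 0
  strictMono : StrictMono L
  mem_window : ∀ m n, u m n ≠ 0 → n ∈ Set.Ioc (L m) (L (m + 1))
  norm_le : ∀ m, ∑' n, ‖u m n‖ₑ ≤ 2⁻¹ ^ m

namespace IsBlockSequence

variable {L : ℕ → ℕ} {u : ℕ → ℕ → ℂ}

lemma exists_mem_window (h : IsBlockSequence L u) {m n : ℕ} (hn : L m < n) :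
    ∃ k ≥ m, n ∈ Set.Ioc (L k) (L (k + 1)) := by
  have hunion := iUnion_Ioc_map_succ_eq_Ioi (fun k => h.strictMono.monotone bot_le)
    h.strictMono.not_bddAbove_range_of_isSuccArchimedean
  obtain ⟨k, hk⟩ := Set.mem_iUnion.mp
    (hunion.ge ((h.strictMono.monotone m.zero_le).trans_lt hn : n ∈ Set.Ioi (L 0)))
  exact ⟨k, Nat.lt_succ_iff.mp (h.strictMono.lt_iff_lt.mp (hn.trans_le hk.2)), hk⟩

lemma apply_eq_zero (h : IsBlockSequence L u) {k m n : ℕ} (hn : n ∈ Set.Ioc (L k) (L (k + 1)))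
    (hkm : k ≠ m) : u m n = 0 := by
  by_contra hne
  exact Set.disjoint_left.mp (h.strictMono.monotone.pairwise_disjoint_on_Ioc_succ hkm) hn
    (h.mem_window m n hne)

lemma enorm_apply_le (h : IsBlockSequence L u) (m n : ℕ) : ‖u m n‖ₑ ≤ 2⁻¹ ^ m :=
  (ENNReal.le_tsum n).trans (h.norm_le m)

lemma enorm_apply_le_one (h : IsBlockSequence L u) (m n : ℕ) : ‖u m n‖ₑ ≤ 1 :=
  (h.enorm_apply_le m n).trans (pow_le_one₀ zero_le (by simp))

lemma glue_zero (h : IsBlockSequence L u) : glue u 0 = 1 := by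
  have hu : ∀ m, u m 0 = 0 := fun m => by
    by_contra hne
    exact absurd (h.mem_window m 0 hne).1 (by simp)
  simp [glue, hu]

lemma glue_apply (h : IsBlockSequence L u) {k n : ℕ} (hn : n ∈ Set.Ioc (L k) (L (k + 1))) :
    glue u n = u k n := by
  have hn0 : n ≠ 0 := (Nat.zero_le _ |>.trans_lt hn.1).ne'
  rw [glue, Pi.single_eq_of_ne hn0, zero_add, tsum_eq_single k fun m hm =>
    h.apply_eq_zero hn hm.symm]

lemma enorm_glue_le_one (h : IsBlockSequence L u) (n : ℕ) : ‖glue u n‖ₑ ≤ 1 := by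
  rcases n.eq_zero_or_pos with rfl | hn
  · simp [h.glue_zero]
  · obtain ⟨k, -, hk⟩ := h.exists_mem_window (h.zero.trans_lt hn)
    rw [h.glue_apply hk]
    exact h.enorm_apply_le_one k n

lemma tsum_enorm_glue_ne_top (h : IsBlockSequence L u) : ∑' n, ‖glue u n‖ₑ ≠ ⊤ := by
  refine ne_top_of_le_ne_top (b := 1 + 2) (by simp) ?_
  calc ∑' n, ‖glue u n‖ₑ
      ≤ ∑' n, (‖Pi.single (M := fun _ => ℂ) 0 1 n‖ₑ + ∑' m, ‖u m n‖ₑ) :=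
        ENNReal.tsum_le_tsum fun n => (enorm_add_le _ _).trans
          (add_le_add_right enorm_tsum_le_tsum_enorm _)
    _ = 1 + ∑' m, ∑' n, ‖u m n‖ₑ := by
        rw [ENNReal.tsum_add, ENNReal.tsum_comm, tsum_eq_single 0 fun n hn => by simp [hn]]
        simp
    _ ≤ 1 + ∑' m, 2⁻¹ ^ m := by gcongr; exact h.norm_le _
    _ = 1 + 2 := by simp [ENNReal.tsum_geometric, ENNReal.one_sub_inv_two]

lemma tsum_enorm_mul_glue_sub_le (h : IsBlockSequence L u) {f : ℂ → ℂ} (hf : f 0 = 0)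
    (c b : ℕ → ℂ) {m n : ℕ} (hn : L m < n) :
    ∑' j, ‖c j * f (glue u (j + n)) - b j‖ₑ ≤ ∑' j, ‖c j * f (u m (j + n)) - b j‖ₑ +
      ∑' k, ∑' j, ‖c j * f (u (m + (k + 1)) (j + n))‖ₑ := by
  rw [ENNReal.tsum_comm, ← ENNReal.tsum_add]
  refine ENNReal.tsum_le_tsum fun j => ?_
  obtain ⟨k, hmk, hk⟩ := h.exists_mem_window (hn.trans_le (Nat.le_add_left n j))
  rw [h.glue_apply hk]
  rcases hmk.eq_or_lt with rfl | hlt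
  · exact le_self_add
  obtain ⟨k, rfl⟩ := Nat.exists_eq_add_of_lt hlt
  rw [h.apply_eq_zero hk hlt.ne', hf, mul_zero, zero_sub, enorm_neg, add_comm ‖b j‖ₑ]
  exact (enorm_sub_le).trans (add_le_add_left (ENNReal.le_tsum (f := fun k =>
    ‖c j * f (u (m + (k + 1)) (j + n))‖ₑ) k) _)

end IsBlockSequence

lemma tsum_enorm_mul_sub_le_of_enorm_sub_mul_pow_le {f : ℂ → ℂ} {a : ℂ} {B : NNReal} {r : ℕ}
    (hf : ∀ z, ‖z‖ₑ ≤ 1 → ‖f z - a * z ^ r‖ₑ ≤ B * ‖z‖ₑ ^ (r + 1)) {ε : ℝ≥0∞} (hε : ε ≤ 1)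
    {c v y : ℕ → ℂ} (hv : ∀ j, ‖v j‖ₑ ≤ ε) (hy : ∑' j, ‖c j * v j ^ r - y j‖ₑ ≤ ε) :
    ∑' j, ‖c j * f (v j) - a * y j‖ₑ ≤ ε * (‖a‖ₑ + B * (1 + ∑' j, ‖y j‖ₑ)) := by
  have hterm : ∀ j, ‖c j * f (v j) - a * y j‖ₑ ≤
      ‖a‖ₑ * ‖c j * v j ^ r - y j‖ₑ + ε * B * (‖c j * v j ^ r - y j‖ₑ + ‖y j‖ₑ) := fun j =>
    calc ‖c j * f (v j) - a * y j‖ₑ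
        = ‖a * (c j * v j ^ r - y j) + c j * (f (v j) - a * v j ^ r)‖ₑ := by ring_nf
      _ ≤ ‖a‖ₑ * ‖c j * v j ^ r - y j‖ₑ + ‖c j‖ₑ * (B * ‖v j‖ₑ ^ (r + 1)) := by
        refine (enorm_add_le _ _).trans ?_
        rw [enorm_mul, enorm_mul (c j)]
        gcongr
        exact hf _ ((hv j).trans hε)
      _ = ‖a‖ₑ * ‖c j * v j ^ r - y j‖ₑ + ‖v j‖ₑ * B * ‖c j * v j ^ r - y j + y j‖ₑ := by
        rw [sub_add_cancel, enorm_mul (c j), enorm_pow, pow_succ]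
        ring
      _ ≤ _ := by
        gcongr
        · exact hv j
        · exact enorm_add_le _ _
  calc ∑' j, ‖c j * f (v j) - a * y j‖ₑ
      ≤ ‖a‖ₑ * ∑' j, ‖c j * v j ^ r - y j‖ₑ +
          ε * B * (∑' j, ‖c j * v j ^ r - y j‖ₑ + ∑' j, ‖y j‖ₑ) := by
        rw [← ENNReal.tsum_add, ← ENNReal.tsum_mul_left, ← ENNReal.tsum_mul_left,
          ← ENNReal.tsum_add]
        exact ENNReal.tsum_le_tsum hterm
    _ ≤ ‖a‖ₑ * ε + ε * B * (1 + ∑' j, ‖y j‖ₑ) := by gcongr; exact hy.trans hε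
    _ = _ := by ring

lemma tsum_two_inv_pow_add_succ (m : ℕ) : ∑' k, (2⁻¹ : ℝ≥0∞) ^ (m + (k + 1)) = 2⁻¹ ^ m := by
  simp_rw [pow_add _ m]
  rw [ENNReal.tsum_mul_left, ENNReal.tsum_geometric_add_one, ENNReal.one_sub_inv_two, inv_inv,
    ENNReal.inv_mul_cancel two_ne_zero ENNReal.ofNat_ne_top, mul_one]

lemma exists_tsum_enorm_mul_eval_glue_sub_le {P : Polynomial ℂ} (hP : P.coeff 0 = 0) :
    ∃ K : NNReal, ∀ (L : ℕ → ℕ) (u : ℕ → ℕ → ℂ) (c y : ℕ → ℂ) (m n : ℕ), IsBlockSequence L u →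
      L m < n → ∑' j, ‖c j * u m (j + n) ^ P.natTrailingDegree - y j‖ₑ ≤ 2⁻¹ ^ m →
      (∀ k > m, ∑' j, ‖c j * u k (j + n)‖ₑ ≤ 2⁻¹ ^ k) →
      ∑' j, ‖c j * P.eval (glue u (j + n)) - P.trailingCoeff * y j‖ₑ ≤
        2⁻¹ ^ m * (K * (1 + ∑' j, ‖y j‖ₑ)) := by
  obtain ⟨C, hC⟩ := exists_enorm_eval_le hP
  obtain ⟨B, hB⟩ := exists_enorm_eval_sub_trailingCoeff_mul_pow_le P
  refine ⟨‖P.trailingCoeff‖₊ + B + C, fun L u c y m n h hn hhit hlater => ?_⟩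
  have hmain := tsum_enorm_mul_sub_le_of_enorm_sub_mul_pow_le hB
    (pow_le_one₀ zero_le (by simp) : (2⁻¹ : ℝ≥0∞) ^ m ≤ 1)
    (fun j => h.enorm_apply_le m (j + n)) hhit
  have htail : ∑' k, ∑' j, ‖c j * P.eval (u (m + (k + 1)) (j + n))‖ₑ ≤ 2⁻¹ ^ m * C :=
    calc ∑' k, ∑' j, ‖c j * P.eval (u (m + (k + 1)) (j + n))‖ₑ
        ≤ ∑' k, ∑' j, C * ‖c j * u (m + (k + 1)) (j + n)‖ₑ := by
          refine ENNReal.tsum_le_tsum fun k => ENNReal.tsum_le_tsum fun j => ?_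
          rw [enorm_mul, enorm_mul, mul_left_comm]
          gcongr
          exact hC _ (h.enorm_apply_le_one _ _)
      _ ≤ ∑' k, (C : ℝ≥0∞) * 2⁻¹ ^ (m + (k + 1)) := by
          refine ENNReal.tsum_le_tsum fun k => ?_
          rw [ENNReal.tsum_mul_left]
          gcongr
          exact hlater _ (by omega)
      _ = 2⁻¹ ^ m * C := by rw [ENNReal.tsum_mul_left, tsum_two_inv_pow_add_succ, mul_comm]
  calc ∑' j, ‖c j * P.eval (glue u (j + n)) - P.trailingCoeff * y j‖ₑ
      ≤ _ := h.tsum_enorm_mul_glue_sub_le (f := P.eval)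
        (by rw [← Polynomial.coeff_zero_eq_eval_zero, hP]) c _ hn
    _ ≤ 2⁻¹ ^ m * (‖P.trailingCoeff‖ₑ + B * (1 + ∑' j, ‖y j‖ₑ)) + 2⁻¹ ^ m * C :=
        add_le_add hmain htail
    _ = 2⁻¹ ^ m * (‖P.trailingCoeff‖ₑ * 1 + B * (1 + ∑' j, ‖y j‖ₑ) + C * 1) := by ring
    _ ≤ 2⁻¹ ^ m * (‖P.trailingCoeff‖ₑ * (1 + ∑' j, ‖y j‖ₑ) + B * (1 + ∑' j, ‖y j‖ₑ) +
          C * (1 + ∑' j, ‖y j‖ₑ)) := by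
        gcongr <;> exact le_self_add
    _ = _ := by rw [← add_mul, ← add_mul]; rfl

end Gluing

section Assembly

lemma exists_seq_frequently_eq (α : Type*) [Countable α] [Nonempty α] :
    ∃ f : ℕ → α, ∀ a, ∃ᶠ m in atTop, f m = a := by
  obtain ⟨g, hg⟩ := exists_surjective_nat α
  refine ⟨fun m => g m.unpair.2, fun a => frequently_atTop.mpr fun m => ?_⟩
  obtain ⟨n, rfl⟩ := hg a
  exact ⟨Nat.pair m n, Nat.left_le_pair m n, by simp⟩

lemma exists_seq_of_forall_exists {β : Type*} {p : ℕ → ℕ → ℕ → β → Prop}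
    (h : ∀ m l, ∃ l' u, p m l l' u) :
    ∃ (L : ℕ → ℕ) (u : ℕ → β), L 0 = 0 ∧ ∀ m, p m (L m) (L (m + 1)) (u m) := by
  choose next u hnext using h
  exact ⟨fun m => m.rec 0 next, fun m => u m (m.rec 0 next), rfl, fun m => hnext m _⟩

/-- Infinitely often, an iterate of the product of the weighted backward shifts with weights `v`
maps the `r`-th power of the `m`-th block close to `y` while keeping all later blocks small. -/
def HitsFrequently {ι : Type*} (v : ι → ℕ → ℝ) (L : ℕ → ℕ) (u : ℕ → ι → ℕ → ℂ) (r : ℕ)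
    (y : ι → ℕ → ℂ) : Prop :=
  ∃ᶠ m in atTop, ∃ n > L m, ∀ i,
    ∑' j, ‖(shiftCoeff (v i) n j : ℂ) * u m i (j + n) ^ r - y i j‖ₑ ≤ 2⁻¹ ^ m ∧
    ∀ l > m, ∑' j, ‖(shiftCoeff (v i) n j : ℂ) * u l i (j + n)‖ₑ ≤ 2⁻¹ ^ l

lemma exists_isBlockSequence_hitsFrequently {α κ ι : Type*} [TopologicalSpace α] [Countable κ]
    [Nonempty κ] {w : α → ℕ → ℝ} {I : Set α} {C : κ → Set α} {Λ : κ → Set (ι → α)}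
    (hC : ∀ k, IsCompact (C k)) (hCI : ∀ k, C k ⊆ I) (hΛC : ∀ k, ∀ lam ∈ Λ k, ∀ i, lam i ∈ C k)
    (hblock : ∀ k, HasHittingBlocks w I (Λ k)) {Y : Set (ι → ℕ → ℂ)} (hY : Y.Countable)
    (hYne : Y.Nonempty) (hYfin : ∀ y ∈ Y, ∃ J, ∀ i j, J ≤ j → y i j = 0) :
    ∃ (L : ℕ → ℕ) (u : ℕ → ι → ℕ → ℂ), (∀ i, IsBlockSequence L fun m => u m i) ∧
      ∀ k, ∀ lam ∈ Λ k, ∀ r ≠ 0, ∀ y ∈ Y, HitsFrequently (fun i => w (lam i)) L u r y := by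
  have := hY.to_subtype
  have := hYne.to_subtype
  have : Nonempty {r : ℕ // r ≠ 0} := ⟨1, one_ne_zero⟩
  obtain ⟨target, htarget⟩ := exists_seq_frequently_eq (κ × {r : ℕ // r ≠ 0} × Y)
  set Q : ℕ → Set α := fun m => ⋃ l ∈ range m, C (target l).1
  have hQ : ∀ m, IsCompact (Q m) := fun m => (range m).isCompact_biUnion fun l _ => hC _
  have hQI : ∀ m, Q m ⊆ I := fun m => Set.iUnion₂_subset fun l _ => hCI _
  obtain ⟨L, u, hL0, hLu⟩ := exists_seq_of_forall_exists (β := ι → ℕ → ℂ)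
    (p := fun m l l' u => IsHittingBlock w (Λ (target m).1) (Q m) (target m).2.1
      (target m).2.2 l l' (2⁻¹ ^ m) u) fun m l => by
    obtain ⟨J, hJ⟩ := hYfin _ (target m).2.2.2
    exact hblock _ _ (target m).2.1.2 J _ hJ (Q m) (hQI m) (hQ m) l _ (by simp)
  have hL : StrictMono L := strictMono_nat_of_lt_succ fun m => (hLu m).lt
  refine ⟨L, u, fun i => ⟨hL0, hL, fun m => (hLu m).mem_window i, fun m => (hLu m).norm_le i⟩,
    fun k lam hlam r hr y hy => (htarget (k, ⟨r, hr⟩, ⟨y, hy⟩)).mono fun m hm => ?_⟩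
  have hhit := (hLu m).hits
  simp only [hm] at hhit
  obtain ⟨n, hn, hle⟩ := hhit lam hlam
  refine ⟨n, hn.1, fun i => ⟨hle i, fun l hl => ?_⟩⟩
  refine (hLu l).iterate_le (lam i) ?_ n (hn.2.trans (hL.monotone hl)) i
  exact Set.mem_biUnion (mem_range.mpr hl) (by simpa only [hm] using hΛC k lam hlam i)

lemma HitsFrequently.exists_tsum_enorm_lt {ι : Type*} [Finite ι] {v : ι → ℕ → ℝ} {L : ℕ → ℕ}
    {u : ℕ → ι → ℕ → ℂ} {P : Polynomial ℂ} {y : ι → ℕ → ℂ}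
    (h : HitsFrequently v L u P.natTrailingDegree y) (hu : ∀ i, IsBlockSequence L fun m => u m i)
    (hP : P.coeff 0 = 0) (hy : ∀ i, ∑' j, ‖y i j‖ₑ ≠ ⊤) {ε : ℝ≥0∞} (hε : 0 < ε) :
    ∃ n ≠ 0, ∀ i, ∑' j, ‖(shiftCoeff (v i) n j : ℂ) * P.eval (glue (fun m => u m i) (j + n)) -
      P.trailingCoeff * y i j‖ₑ < ε := by
  obtain ⟨K, hK⟩ := exists_tsum_enorm_mul_eval_glue_sub_le hP
  have hsmall : ∀ᶠ m : ℕ in atTop, ∀ i, 2⁻¹ ^ m * (K * (1 + ∑' j, ‖y i j‖ₑ)) < ε := by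
    refine eventually_all.mpr fun i => ?_
    have hlim := ENNReal.Tendsto.mul_const (b := K * (1 + ∑' j, ‖y i j‖ₑ))
      (ENNReal.tendsto_pow_atTop_nhds_zero_of_lt_one ENNReal.one_half_lt_one)
      (.inr <| ENNReal.mul_ne_top ENNReal.coe_ne_top <| by simpa using hy i)
    rw [zero_mul] at hlim
    exact hlim.eventually_lt_const hε
  obtain ⟨m, ⟨n, hn, hhit⟩, hm⟩ := (h.and_eventually hsmall).exists
  exact ⟨n, (Nat.zero_le _ |>.trans_lt hn).ne', fun i =>
    (hK L _ _ (y i) m n (hu i) hn (hhit i).1 (hhit i).2).trans_lt (hm i)⟩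

lemma tsum_enorm_ne_top_of_forall_ge_eq_zero {f : ℕ → ℂ} {J : ℕ} (hf : ∀ j, J ≤ j → f j = 0) :
    ∑' j, ‖f j‖ₑ ≠ ⊤ := by
  rw [tsum_eq_sum (s := range J) fun j hj => by simp [hf j (by simpa using hj)]]
  exact ENNReal.sum_ne_top.mpr fun j _ => enorm_ne_top

theorem commonHypercyclicAlgebraCW_of_hasHittingBlocks {p : ℝ≥0∞} [Fact (1 ≤ p)] (hp : p ≠ ⊤)
    {d : ℕ} [NeZero d] {κ : Type*} [Countable κ] [Nonempty κ] {w : ℝ → ℕ → ℝ} {I : Set ℝ}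
    {C : κ → Set ℝ} {Λ : κ → Set (Fin d → ℝ)} (hC : ∀ k, IsCompact (C k)) (hCI : ∀ k, C k ⊆ I)
    (hΛC : ∀ k, ∀ lam ∈ Λ k, ∀ i, lam i ∈ C k) (hblock : ∀ k, HasHittingBlocks w I (Λ k))
    {T : (Fin d → ℝ) → ((Fin d → lpC p) →L[ℂ] (Fin d → lpC p))}
    (hT : ∀ k, ∀ lam ∈ Λ k, IsProductShift p d w (T lam) lam) :
    CommonHypercyclicAlgebraCW p d (⋃ k, Λ k) T := by
  obtain ⟨Y, hYcount, hYdense, hYfin⟩ := exists_countable_dense_finitelySupported hp (Fin d)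
  obtain ⟨L, u, hu, hhit⟩ := exists_isBlockSequence_hitsFrequently hC hCI hΛC hblock
    (hYcount.image fun y i j => y i j) (hYdense.nonempty.image _) (Set.forall_mem_image.mpr hYfin)
  refine commonHypercyclicAlgebraCW_of_generator (x := fun i => glue fun m => u m i)
    (fun h0 => one_ne_zero ((hu 0).glue_zero.symm.trans (congrFun₂ h0 0 0)))
    (fun i => (hu i).enorm_glue_le_one) (fun i => (hu i).tsum_enorm_glue_ne_top) ?_
  intro P hP0 hP v hv lam hlam
  obtain ⟨k, hk⟩ := Set.mem_iUnion.mp hlam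
  have hr : P.natTrailingDegree ≠ 0 := by
    rw [Ne, Polynomial.natTrailingDegree_eq_zero]
    tauto
  refine (hT k lam hk).dense_orbit hp (Polynomial.trailingCoeff_nonzero_iff_nonzero.mpr hP0) hYdense
    fun y hy ε hε => ?_
  obtain ⟨J, hJ⟩ := hYfin y hy
  simp only [hv]
  exact (hhit k lam hk _ hr _ ⟨y, hy, rfl⟩).exists_tsum_enorm_lt hu hP
    (fun i => tsum_enorm_ne_top_of_forall_ge_eq_zero (hJ i)) hε

end Assembly

section Parameters

lemma exists_isCompact_pi_eq_iUnion {X : Type*} [TopologicalSpace X] {I : Set X}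
    (hI : IsSigmaCompact I) (ι : Type*) [Finite ι] :
    ∃ C : ℕ → Set X, (∀ k, IsCompact (C k)) ∧ (∀ k, C k ⊆ I) ∧
      {lam : ι → X | ∀ i, lam i ∈ I} = ⋃ k, {lam | ∀ i, lam i ∈ C k} := by
  obtain ⟨K, hK, rfl⟩ := hI
  refine ⟨Set.accumulate K, isCompact_accumulate hK, Set.accumulate_subset_iUnion, ?_⟩
  have hpi := Set.iUnion_univ_pi_of_monotone fun _ : ι => Set.monotone_accumulate (s := K)
  rw [Set.iUnion_accumulate] at hpi
  simpa only [Set.pi, Set.mem_univ, true_imp_iff] using hpi.symm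

lemma iUnion_inter_closedBall_denseSeq {E : Type*} [PseudoMetricSpace E]
    [TopologicalSpace.SeparableSpace E] [Nonempty E] (S : Set E) {ρ : ℝ} (hρ : 0 < ρ) :
    ⋃ q, S ∩ Metric.closedBall (TopologicalSpace.denseSeq E q) ρ = S := by
  rw [← Set.inter_iUnion, Set.inter_eq_left]
  intro x _
  obtain ⟨q, hq⟩ := (TopologicalSpace.denseRange_denseSeq E).exists_dist_lt x hρ
  exact Set.mem_iUnion.mpr ⟨q, hq.le⟩

theorem commonHypercyclicAlgebraCW_of_weightCriterion {p : ℝ≥0∞} [Fact (1 ≤ p)] (hp : p ≠ ⊤)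
    {d : ℕ} [NeZero d] {I : Set ℝ} (hI : IsSigmaCompact I) {w : ℝ → ℕ → ℝ}
    (hcont : ∀ n, ContinuousOn (fun a => w a n) I)
    (hbdd : ∀ a ∈ I, ∃ B : ℝ, ∀ n, 1 ≤ n → w a n ≤ B)
    (hcrit : ∀ Q ⊆ I, IsCompact Q → ∃ D₁ D₂ γ N, WeightCriterion w Q D₁ D₂ γ N)
    {T : (Fin d → ℝ) → ((Fin d → lpC p) →L[ℂ] (Fin d → lpC p))}
    (hT : ∀ lam : Fin d → ℝ, (∀ i, lam i ∈ I) → IsProductShift p d w (T lam) lam) :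
    CommonHypercyclicAlgebraCW p d {lam | ∀ i, lam i ∈ I} T := by
  obtain ⟨C, hC, hCI, hpi⟩ := exists_isCompact_pi_eq_iUnion hI (Fin d)
  choose D₁ D₂ γ N h using fun k => hcrit (C k) (hCI k) (hC k)
  have hD₁ := fun k => (h k).D₁_pos
  have hγ := fun k => (h k).γ_pos
  set center := TopologicalSpace.denseSeq (Fin d → ℝ)
  set Λ : ℕ × ℕ → Set (Fin d → ℝ) := fun k =>
    {lam | ∀ i, lam i ∈ C k.1} ∩ Metric.closedBall (center k.2) (γ k.1 / (4 * D₁ k.1))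
  have hΛ : {lam | ∀ i, lam i ∈ I} = ⋃ k, Λ k := by
    rw [hpi, Set.iUnion_prod']
    exact Set.iUnion_congr fun k =>
      (iUnion_inter_closedBall_denseSeq _ (div_pos (hγ k) (mul_pos four_pos (hD₁ k)))).symm
  rw [hΛ]
  refine commonHypercyclicAlgebraCW_of_hasHittingBlocks hp (w := w) (fun k => hC k.1)
    (fun k => hCI k.1) (fun k lam hlam => hlam.1) (fun k => ?_)
    fun k lam hlam => hT lam fun i => hCI k.1 (hlam.1 i)
  refine (h k.1).hasHittingBlocks (hC k.1) (fun n => (hcont n).mono (hCI k.1)) hcont hbdd hcrit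
    (Metric.isBounded_closedBall.subset Set.inter_subset_right) (fun lam hlam => hlam.1)
    fun x hx y hy => ?_
  calc D₁ k.1 * dist x y
      ≤ D₁ k.1 * (γ k.1 / (4 * D₁ k.1) + γ k.1 / (4 * D₁ k.1)) := by
        gcongr
        · exact (hD₁ k.1).le
        · exact (dist_triangle_right x y _).trans (add_le_add hx.2 hy.2)
    _ = γ k.1 / 2 := by have := (hD₁ k.1).ne'; field_simp; ring

theorem stmt_2_general (d : ℕ) (hd : 1 ≤ d) (p : ℝ≥0∞) [Fact (1 ≤ p)] (hp : p ≠ ⊤)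
    (I : Set ℝ) (hIσ : IsSigmaCompact I)
    (w : ℝ → ℕ → ℝ)
    (hwpos : ∀ a ∈ I, ∀ n : ℕ, 1 ≤ n → 0 < w a n)
    (hwbdd : ∀ a ∈ I, ∃ C : ℝ, ∀ n : ℕ, 1 ≤ n → w a n ≤ C)
    (hwcont : ∀ n : ℕ, ContinuousOn (fun a => w a n) I)
    (hcrit : ∀ I₀ ⊆ I, IsCompact I₀ →
      ∃ D₁ > (0 : ℝ), ∃ D₂ > (0 : ℝ), ∃ γ > (0 : ℝ), ∃ N : ℕ, ∀ n : ℕ, N ≤ n →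
        (∀ a ∈ I₀, ∀ b ∈ I₀,
          |(∑ i ∈ Finset.Icc 1 n, Real.log (w a i)) -
              ∑ i ∈ Finset.Icc 1 n, Real.log (w b i)| ≤ D₁ * Real.log n * |a - b|) ∧
        (∀ a ∈ I₀, D₂ * (n : ℝ) ^ γ ≤ ∏ i ∈ Finset.Icc 1 n, w a i))
    (T : (Fin d → ℝ) → ((Fin d → lpC p) →L[ℂ] (Fin d → lpC p)))
    (hT : ∀ lam : Fin d → ℝ, (∀ i, lam i ∈ I) → IsProductShift p d w (T lam) lam) :
    CommonHypercyclicAlgebraCW p d {lam | ∀ i, lam i ∈ I} T := by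
  have : NeZero d := ⟨by omega⟩
  refine commonHypercyclicAlgebraCW_of_weightCriterion hp hIσ hwcont hwbdd (fun Q hQI hQ => ?_) hT
  obtain ⟨D₁, hD₁, D₂, hD₂, γ, hγ, N, h⟩ := hcrit Q hQI hQ
  have hpos := fun a ha => hwpos a (hQI ha)
  refine ⟨D₁, D₂, γ, N, hD₁, hD₂, hγ, hpos, fun n hn a ha b hb => ?_, fun n hn => (h n hn).2⟩
  rw [log_partialProd (hpos a ha), log_partialProd (hpos b hb), Real.dist_eq]
  exact (h n hn).1 a ha b hb

end Parameters

/-- Corollary 1.2 of the paper (case `X = ℓᵖ(ℕ)`). -/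
theorem stmt_2 (d : ℕ) (hd : 1 ≤ d) (p : ℝ≥0∞) [Fact (1 ≤ p)] (hp : p ≠ ⊤)
    (I : Set ℝ) (hIpos : ∀ a ∈ I, 0 < a) (hIσ : IsSigmaCompact I)
    (w : ℝ → ℕ → ℝ)
    (hwpos : ∀ a ∈ I, ∀ n : ℕ, 1 ≤ n → 0 < w a n)
    (hwbdd : ∀ a ∈ I, ∃ C : ℝ, ∀ n : ℕ, 1 ≤ n → w a n ≤ C)
    (hwcont : ∀ n : ℕ, ContinuousOn (fun a => w a n) I)
    (hcrit : ∀ I₀ ⊆ I, IsCompact I₀ →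
      ∃ D₁ > (0 : ℝ), ∃ D₂ > (0 : ℝ), ∃ γ > (0 : ℝ), ∃ N : ℕ, ∀ n : ℕ, N ≤ n →
        (∀ a ∈ I₀, ∀ b ∈ I₀,
          |(∑ i ∈ Finset.Icc 1 n, Real.log (w a i)) -
              ∑ i ∈ Finset.Icc 1 n, Real.log (w b i)| ≤ D₁ * Real.log n * |a - b|) ∧
        (∀ a ∈ I₀, D₂ * (n : ℝ) ^ γ ≤ ∏ i ∈ Finset.Icc 1 n, w a i))
    (T : (Fin d → ℝ) → ((Fin d → lpC p) →L[ℂ] (Fin d → lpC p)))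
    (hT : ∀ lam : Fin d → ℝ, (∀ i, lam i ∈ I) → IsProductShift p d w (T lam) lam) :
    CommonHypercyclicAlgebraCW p d {lam | ∀ i, lam i ∈ I} T :=
  stmt_2_general d hd p hp I hIσ w hwpos hwbdd hwcont hcrit T hT
end
end

section
/- Let d ≥ 1 be an integer and let I ⊂ (0,∞) be σ-compact. Let (w(λ))_{λ∈I} be a continuous family of bounded positive weight sequences. Assume that for every compact I₀ ⊂ I there exist D₁, D₂, γ > 0 and an integer N ≥ 0 such that for all n ≥ N: (1) the map a ↦ Σ_{i=1}^n log(w_i(a)) is D₁·log(n)-Lipschitz on I₀; and (2) inf_{a∈I₀} w_1(a)⋯w_n(a) ≥ D₂·n^γ. Then the family (B_{w(λ₁)} × ⋯ × B_{w(λ_d)})_{λ∈I^d} admits a common hypercyclic algebra on c₀(ℕ)^d for the coordinatewise product. -/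
open scoped ENNReal ZeroAtInfty
open Finset

noncomputable section

/-- The space `c₀(ℕ)` of complex sequences vanishing at infinity, with the sup norm. -/
abbrev c0C : Type := C₀(ℕ, ℂ)

/-- `T` is the product operator `B_{w(lam 0)} × ⋯ × B_{w(lam (d-1))}` of weighted backward
shifts, the weight sequence of the `i`-th factor being `(w (lam i) n)_{n ≥ 1}`. -/
def IsProductShiftC0 (d : ℕ) (w : ℝ → ℕ → ℝ)
    (T : (Fin d → c0C) →L[ℂ] (Fin d → c0C)) (lam : Fin d → ℝ) : Prop :=
  ∀ (v : Fin d → c0C) (i : Fin d) (n : ℕ),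
    (T v) i n = (w (lam i) (n + 1) : ℂ) * v i (n + 1)

/-- The family `T lam`, `lam ∈ S`, admits a common hypercyclic algebra for the coordinatewise
product: there is a non-unital subalgebra `A ≠ {0}` of `(c₀(ℕ))^d` (closed under addition,
scalar multiplication and the componentwise coordinatewise product) every nonzero element of
which is a common hypercyclic vector for the family. -/
def CommonHypercyclicAlgebraCWC0 (d : ℕ) (S : Set (Fin d → ℝ))
    (T : (Fin d → ℝ) → ((Fin d → c0C) →L[ℂ] (Fin d → c0C))) : Prop :=
  ∃ A : Set (Fin d → c0C),
    (0 : Fin d → c0C) ∈ A ∧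
    (∀ x ∈ A, ∀ y ∈ A, x + y ∈ A) ∧
    (∀ (c : ℂ), ∀ x ∈ A, c • x ∈ A) ∧
    (∀ x ∈ A, ∀ y ∈ A, ∃ z ∈ A, ∀ (i : Fin d) (n : ℕ), z i n = x i n * y i n) ∧
    (∃ x ∈ A, x ≠ 0) ∧
    (∀ x ∈ A, x ≠ 0 → ∀ lam ∈ S, Dense (Set.range fun n : ℕ => ((T lam) ^ (n + 1)) x))

/-!
The algebra is generated by a single vector `x`, generic in the sense of Baire. Its elements are
the `p(x)` for polynomials `p` with `p(0) = 0`; up to a scalar, `p(z) = z ^ m (1 + O(z))`, so it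
suffices to approximate a countable dense set of targets `y` uniformly over compact families of such
`p` and over countably many small pieces `S` of the parameter set.

Density of the approximating vectors comes from block vectors. Let `r_1, r_2, …` be a net in `S`.
On the block `[jn, (j+1)n)` put `m`-th roots of the entries of `y` divided by the weights at `r_j`,
so that the `jn`-th iterate of the shift at `r_j` maps `x ^ m` to `y`, up to the contribution of the
later blocks. Since `S` has finite box dimension, `n = Q ^ d` blocks suffice for a net of mesh
`2 / Q`. A parameter at distance `2 / Q` from `r_j` has products of at most `n ^ 2` weights that
differ from those at `r_j` by a factor `exp (O(log n / Q))`, which tends to `1`. The later blocks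
are compared with parameters that are only known to lie in `S`; if `S` is so small that
`D₁ diam S ≤ γ / 4`, this costs a factor `n ^ (γ / 2)`, which the growth `n ^ γ` of the weights
absorbs.
-/

open Filter Topology
open scoped NNReal

section FinitelySupported

variable {ι : Type*}

lemma tendsto_apply_atTop (f : c0C) : Tendsto f atTop (𝓝 0) := by
  rw [← Nat.cofinite_eq_atTop, ← cocompact_eq_cofinite]
  exact f.zero_at_infty'

/-- The `n`-th vector `e_n` of the canonical basis of `c₀(ℕ)`. -/
def basisVec (n : ℕ) : c0C where
  toFun l := if l = n then 1 else 0
  continuous_toFun := continuous_of_discreteTopology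
  zero_at_infty' := by
    rw [cocompact_eq_cofinite]
    refine tendsto_const_nhds.congr' ?_
    filter_upwards [(Set.finite_singleton n).compl_mem_cofinite] with l hl
    exact (if_neg hl).symm

lemma basisVec_apply (n l : ℕ) : basisVec n l = if l = n then 1 else 0 := rfl

/-- The element of `c₀(ℕ)^ι` whose coordinates of index `< L` are those of `f`, and whose other
coordinates vanish. -/
def truncate (L : ℕ) (f : ι → ℕ → ℂ) : ι → c0C :=
  fun i => ∑ l ∈ range L, f i l • basisVec l

lemma truncate_apply (L : ℕ) (f : ι → ℕ → ℂ) (i : ι) (n : ℕ) :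
    truncate L f i n = if n < L then f i n else 0 := by
  have apply_sum (g : ℕ → c0C) : (∑ l ∈ range L, g l) n = ∑ l ∈ range L, g l n := by
    induction L with
    | zero => rfl
    | succ L ih => simp only [sum_range_succ, ZeroAtInftyContinuousMap.add_apply, ih]
  simp [truncate, apply_sum, basisVec_apply]

lemma continuous_truncate (L : ℕ) : Continuous (truncate (ι := ι) L) := by
  unfold truncate
  fun_prop

/-- A vector of `c₀(ℕ)^ι` only finitely many of whose coordinates are nonzero. -/
def FinitelySupported (y : ι → c0C) : Prop :=
  ∃ L, ∀ i, ∀ l ≥ L, y i l = 0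

lemma finitelySupported_truncate (L : ℕ) (f : ι → ℕ → ℂ) : FinitelySupported (truncate L f) :=
  ⟨L, fun i l hl => by rw [truncate_apply, if_neg hl.not_gt]⟩

lemma c0C_norm_le_iff (f : c0C) {C : ℝ} (hC : 0 ≤ C) : ‖f‖ ≤ C ↔ ∀ n, ‖f n‖ ≤ C := by
  simp only [← ZeroAtInftyContinuousMap.norm_toBCF_eq_norm,
    BoundedContinuousFunction.norm_le hC, ZeroAtInftyContinuousMap.toBCF_apply]

lemma tendsto_truncate (v : ι → c0C) :
    Tendsto (fun L => truncate L fun i n => v i n) atTop (𝓝 v) := by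
  refine tendsto_pi_nhds.2 fun i => Metric.tendsto_nhds.2 fun ε hε => ?_
  have small_tail : ∀ᶠ L in atTop, ∀ n ≥ L, ‖v i n‖ < ε / 2 :=
    eventually_forall_ge_atTop.2 <|
      (tendsto_zero_iff_norm_tendsto_zero.1 (tendsto_apply_atTop (v i))).eventually_lt_const
        (half_pos hε)
  filter_upwards [small_tail] with L hL
  rw [dist_eq_norm]
  refine lt_of_le_of_lt ?_ (half_lt_self hε)
  refine (c0C_norm_le_iff _ (half_pos hε).le).2 fun n => ?_
  rw [ZeroAtInftyContinuousMap.sub_apply, truncate_apply]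
  split_ifs with hn
  · simpa using (half_pos hε).le
  · simpa using (hL n (not_lt.1 hn)).le

lemma exists_countable_dense_finitelySupported_s3 [Countable ι] :
    ∃ Y : Set (ι → c0C), Y.Countable ∧ Dense Y ∧ ∀ y ∈ Y, FinitelySupported y := by
  have separable : TopologicalSpace.IsSeparable {y : ι → c0C | FinitelySupported y} := by
    refine (TopologicalSpace.IsSeparable.iUnion fun L =>
      TopologicalSpace.isSeparable_range (continuous_truncate (ι := ι) L)).mono ?_
    rintro y ⟨L, hL⟩
    refine Set.mem_iUnion.2 ⟨L, fun i l => y i l, ?_⟩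
    ext i l
    rw [truncate_apply]
    split_ifs with hl
    · rfl
    · exact (hL i l (not_lt.1 hl)).symm
  obtain ⟨Y, hY, hYc, hYd⟩ := separable.exists_countable_dense_subset
  refine ⟨Y, hYc, fun v => ?_, hY⟩
  rw [← isClosed_closure.closure_eq]
  exact mem_closure_of_tendsto (tendsto_truncate v)
    (.of_forall fun L => hYd (finitelySupported_truncate L _))

variable [Fintype ι]

lemma norm_le_iff_forall_apply (v : ι → c0C) {C : ℝ} (hC : 0 ≤ C) :
    ‖v‖ ≤ C ↔ ∀ i n, ‖v i n‖ ≤ C := by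
  simp only [pi_norm_le_iff_of_nonneg hC, c0C_norm_le_iff _ hC]

lemma norm_apply_le_norm (v : ι → c0C) (i : ι) (n : ℕ) : ‖v i n‖ ≤ ‖v‖ :=
  (norm_le_iff_forall_apply v (norm_nonneg v)).1 le_rfl i n

end FinitelySupported

section WeightedShift

/-- The product `v_{s+1} ⋯ v_t` of consecutive weights. -/
def weightProd (v : ℕ → ℝ) (s t : ℕ) : ℝ := ∏ j ∈ Ioc s t, v j

lemma weightProd_zero_left (v : ℕ → ℝ) (n : ℕ) : weightProd v 0 n = ∏ j ∈ Icc 1 n, v j := by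
  rw [weightProd, ← Finset.Icc_succ_left_eq_Ioc]
  rfl

lemma weightProd_self (v : ℕ → ℝ) (s : ℕ) : weightProd v s s = 1 := by
  rw [weightProd, Ioc_self, prod_empty]

lemma weightProd_mul_weightProd (v : ℕ → ℝ) {s t u : ℕ} (hst : s ≤ t) (htu : t ≤ u) :
    weightProd v s t * weightProd v t u = weightProd v s u :=
  prod_Ioc_consecutive v hst htu

lemma weightProd_succ_left (v : ℕ → ℝ) {s t : ℕ} (hst : s < t) :
    weightProd v s t = v (s + 1) * weightProd v (s + 1) t := by
  rw [← weightProd_mul_weightProd v s.le_succ hst, weightProd, Nat.Ioc_succ_singleton,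
    prod_singleton]

section Bounds

variable {v : ℕ → ℝ} (hpos : ∀ n, 1 ≤ n → 0 < v n)
include hpos

lemma weightProd_pos (s t : ℕ) : 0 < weightProd v s t :=
  prod_pos fun j hj => hpos j (Nat.one_le_of_lt (mem_Ioc.1 hj).1)

lemma log_weightProd {s t : ℕ} (hst : s ≤ t) :
    Real.log (weightProd v s t) = Real.log (weightProd v 0 t) - Real.log (weightProd v 0 s) := by
  rw [← weightProd_mul_weightProd v s.zero_le hst,
    Real.log_mul (weightProd_pos hpos _ _).ne' (weightProd_pos hpos _ _).ne', add_sub_cancel_left]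

lemma weightProd_add_le_pow {C : ℝ} (hle : ∀ n, 1 ≤ n → v n ≤ C) (s n : ℕ) :
    weightProd v s (s + n) ≤ C ^ n := by
  have h : ∀ j ∈ Ioc s (s + n), 1 ≤ j := fun j hj => Nat.one_le_of_lt (mem_Ioc.1 hj).1
  calc weightProd v s (s + n) ≤ ∏ _j ∈ Ioc s (s + n), C :=
        prod_le_prod (fun j hj => (hpos j (h j hj)).le) fun j hj => hle j (h j hj)
    _ = C ^ n := by rw [prod_const, Nat.card_Ioc, Nat.add_sub_cancel_left]

end Bounds

variable {ι : Type*}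

/-- `T` is the operator on `c₀(ℕ)^ι` acting on the `i`-th component as the weighted backward shift
with weights `(v i n)_{n ≥ 1}`. -/
def IsWeightedShift (v : ι → ℕ → ℝ) (T : (ι → c0C) →L[ℂ] (ι → c0C)) : Prop :=
  ∀ (x : ι → c0C) (i : ι) (n : ℕ), T x i n = (v i (n + 1) : ℂ) * x i (n + 1)

variable {v : ι → ℕ → ℝ} {T : (ι → c0C) →L[ℂ] (ι → c0C)}

lemma IsWeightedShift.pow_apply (hT : IsWeightedShift v T) (n : ℕ) (x : ι → c0C) (i : ι) (s : ℕ) :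
    (T ^ n) x i s = (weightProd (v i) s (s + n) : ℂ) * x i (s + n) := by
  induction n generalizing s with
  | zero => simp [weightProd_self]
  | succ n ih =>
    have hs : s < s + (n + 1) := Nat.lt_add_of_pos_right n.succ_pos
    rw [pow_succ', mul_apply_eq_comp, hT, ih, weightProd_succ_left (v i) hs, Nat.add_right_comm,
      Nat.add_assoc, Complex.ofReal_mul, mul_assoc]

lemma IsWeightedShift.exists_forall_weight_le [Finite ι] (hT : IsWeightedShift v T) :
    ∃ C : ℝ, ∀ i n, 1 ≤ n → v i n ≤ C := by
  have := Fintype.ofFinite ι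
  refine ⟨‖T‖, fun i n hn => ?_⟩
  set x : ι → c0C := fun _ => basisVec n
  have norm_x : ‖x‖ ≤ 1 := by
    refine (norm_le_iff_forall_apply x zero_le_one).2 fun j l => ?_
    simp only [x, basisVec_apply]
    split_ifs <;> simp
  have apply_x : T x i (n - 1) = v i n := by
    rw [hT, Nat.sub_add_cancel hn]
    simp [x, basisVec_apply]
  calc v i n ≤ ‖T x i (n - 1)‖ := by
        rw [apply_x, Complex.norm_real]
        exact Real.le_norm_self _
    _ ≤ ‖T x‖ := norm_apply_le_norm _ _ _
    _ ≤ ‖T‖ := T.unit_le_opNorm x norm_x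

end WeightedShift

section TameWeights

variable {P : Type*} [PseudoMetricSpace P]

/-- The hypothesis of the theorem on a set `K` of parameters: for large `n`, the map
`a ↦ log (w_1(a) ⋯ w_n(a))` is `D₁ log n`-Lipschitz on `K`, and `w_1(a) ⋯ w_n(a) ≥ D₂ n ^ γ`. -/
def LogLipschitzGrowth (w : P → ℕ → ℝ) (K : Set P) : Prop :=
  ∃ D₁ > (0 : ℝ), ∃ D₂ > (0 : ℝ), ∃ γ > (0 : ℝ), ∃ N : ℕ, ∀ n ≥ N,
    (∀ a ∈ K, ∀ b ∈ K,
      |Real.log (weightProd (w a) 0 n) - Real.log (weightProd (w b) 0 n)|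
        ≤ D₁ * Real.log n * dist a b) ∧
    ∀ a ∈ K, D₂ * (n : ℝ) ^ γ ≤ weightProd (w a) 0 n

/-- Quantitative control of the weights `w a`, `a ∈ S`, on a set `S` of parameters of so small a
diameter that the Lipschitz constants `D₁ log n` do not compete with the growth exponent `γ`. -/
structure TameWeights (w : P → ℕ → ℝ) (S : Set P) where
  C : ℝ
  D₁ : ℝ
  D₂ : ℝ
  γ : ℝ
  N : ℕ
  one_le_C : 1 ≤ C
  D₁_pos : 0 < D₁
  D₂_pos : 0 < D₂
  γ_pos : 0 < γ
  pos : ∀ a ∈ S, ∀ n, 1 ≤ n → 0 < w a n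
  le_C : ∀ a ∈ S, ∀ n, 1 ≤ n → w a n ≤ C
  uniformContinuousOn_log :
    ∀ n, UniformContinuousOn (fun a => Real.log (weightProd (w a) 0 n)) S
  abs_log_sub_log_le : ∀ n ≥ N, ∀ a ∈ S, ∀ b ∈ S,
    |Real.log (weightProd (w a) 0 n) - Real.log (weightProd (w b) 0 n)|
      ≤ D₁ * Real.log n * dist a b
  growth : ∀ n ≥ N, ∀ a ∈ S, D₂ * (n : ℝ) ^ γ ≤ weightProd (w a) 0 n
  D₁_mul_dist_le : ∀ a ∈ S, ∀ b ∈ S, D₁ * dist a b ≤ γ / 4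

lemma LogLipschitzGrowth.eventually_nonempty_tameWeights {w : P → ℕ → ℝ} {K : Set P}
    (hw : LogLipschitzGrowth w K) (hK : IsCompact K)
    (hpos : ∀ a ∈ K, ∀ n, 1 ≤ n → 0 < w a n)
    (hbdd : ∃ C, ∀ a ∈ K, ∀ n, 1 ≤ n → w a n ≤ C)
    (hcont : ∀ n, ContinuousOn (fun a => w a n) K) :
    ∀ᶠ δ in 𝓝[>] (0 : ℝ), ∀ S ⊆ K, (∀ a ∈ S, ∀ b ∈ S, dist a b ≤ δ) →
      Nonempty (TameWeights w S) := by
  obtain ⟨D₁, D₁_pos, D₂, D₂_pos, γ, γ_pos, N, hN⟩ := hw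
  obtain ⟨C, hC⟩ := hbdd
  have hlog (n : ℕ) : ContinuousOn (fun a => Real.log (weightProd (w a) 0 n)) K :=
    (continuousOn_finsetProd _ fun i _ => hcont i).log
      fun a ha => (weightProd_pos (hpos a ha) 0 n).ne'
  have small : ∀ᶠ δ in 𝓝[>] (0 : ℝ), D₁ * δ ≤ γ / 4 := by
    have : Tendsto (fun δ => D₁ * δ) (𝓝[>] 0) (𝓝 0) :=
      ((continuous_const_mul D₁).tendsto' 0 0 (mul_zero _)).mono_left nhdsWithin_le_nhds
    exact this.eventually_le_const (by positivity)
  filter_upwards [small] with δ hδ S hSK hS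
  exact ⟨{
    C := max 1 C
    D₁, D₂, γ, N, D₁_pos, D₂_pos, γ_pos
    one_le_C := le_max_left _ _
    pos a ha := hpos a (hSK ha)
    le_C a ha n hn := (hC a (hSK ha) n hn).trans (le_max_right _ _)
    uniformContinuousOn_log n := (hK.uniformContinuousOn_of_continuous (hlog n)).mono hSK
    abs_log_sub_log_le n hn a ha b hb := (hN n hn).1 a (hSK ha) b (hSK hb)
    growth n hn a ha := (hN n hn).2 a (hSK ha)
    D₁_mul_dist_le a ha b hb := (mul_le_mul_of_nonneg_left (hS a ha b hb) D₁_pos.le).trans hδ }⟩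

end TameWeights

section BlockEstimates

variable {v v' : ℕ → ℝ}

lemma norm_weightProd_mul_div_sub_le_of_log (hv : ∀ n, 1 ≤ n → 0 < v n)
    (hv' : ∀ n, 1 ≤ n → 0 < v' n) {s p : ℕ} {τ : ℝ} (hτ : τ ≤ 1 / 2)
    (hlog : |Real.log (weightProd v s p) - Real.log (weightProd v' s p)| ≤ 2 * τ) (y z : ℂ) :
    ‖(weightProd v s p : ℂ) * (y / weightProd v' s p * (1 + z)) - y‖
      ≤ ‖y‖ * (4 * τ * (1 + ‖z‖) + ‖z‖) := by
  set ξ := Real.log (weightProd v s p) - Real.log (weightProd v' s p)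
  have exp_ξ : Real.exp ξ = weightProd v s p / weightProd v' s p := by
    rw [Real.exp_sub, Real.exp_log (weightProd_pos hv s p), Real.exp_log (weightProd_pos hv' s p)]
  have norm_exp_sub_one : ‖((Real.exp ξ - 1 : ℝ) : ℂ)‖ ≤ 4 * τ := by
    rw [Complex.norm_real, Real.norm_eq_abs]
    linarith [Real.abs_exp_sub_one_le (x := ξ) (by linarith)]
  calc ‖(weightProd v s p : ℂ) * (y / weightProd v' s p * (1 + z)) - y‖
      = ‖y * (((Real.exp ξ - 1 : ℝ) : ℂ) * (1 + z) + z)‖ := by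
        rw [exp_ξ]
        push_cast
        ring_nf
    _ ≤ ‖y‖ * (‖((Real.exp ξ - 1 : ℝ) : ℂ)‖ * ‖1 + z‖ + ‖z‖) := by
        rw [norm_mul, ← norm_mul (((Real.exp ξ - 1 : ℝ) : ℂ))]
        gcongr
        exact norm_add_le _ _
    _ ≤ ‖y‖ * (4 * τ * (1 + ‖z‖) + ‖z‖) := by
        have : ‖1 + z‖ ≤ 1 + ‖z‖ := by simpa using norm_add_le 1 z
        have : 0 ≤ 4 * τ := (norm_nonneg _).trans norm_exp_sub_one
        gcongr

lemma norm_weightProd_mul_div_le_of_log (hv : ∀ n, 1 ≤ n → 0 < v n)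
    (hv' : ∀ n, 1 ≤ n → 0 < v' n) {l s p : ℕ} (hlp : l ≤ p) (hsp : s ≤ p) {A D n γ : ℝ}
    (hD : 0 < D) (hn : 0 < n) (hs : D * n ^ γ ≤ weightProd v 0 s)
    (hlog : |Real.log (weightProd v 0 p) - Real.log (weightProd v' 0 p)| ≤ γ / 2 * Real.log n)
    {y : ℂ} (hy : ‖y‖ * weightProd v' 0 l ≤ A) (z : ℂ) :
    ‖(weightProd v s p : ℂ) * (y / weightProd v' l p * (1 + z))‖
      ≤ A / D * n ^ (-(γ / 2)) * (1 + ‖z‖) := by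
  have pos (t u) : 0 < weightProd v t u := weightProd_pos hv t u
  have pos' (t u) : 0 < weightProd v' t u := weightProd_pos hv' t u
  have ratio_le : weightProd v 0 p / weightProd v' 0 p ≤ n ^ (γ / 2) := by
    rw [← Real.log_le_log_iff (div_pos (pos _ _) (pos' _ _)) (by positivity), Real.log_rpow hn,
      Real.log_div (pos _ _).ne' (pos' _ _).ne']
    exact (abs_le.1 hlog).2
  have factor : weightProd v s p * (‖y‖ / weightProd v' l p)
      = (weightProd v 0 p / weightProd v' 0 p) * (‖y‖ * weightProd v' 0 l) / weightProd v 0 s := by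
    rw [← weightProd_mul_weightProd v s.zero_le hsp, ← weightProd_mul_weightProd v' l.zero_le hlp]
    have := (pos 0 s).ne'
    have := (pos' 0 l).ne'
    have := (pos' l p).ne'
    field_simp
  calc ‖(weightProd v s p : ℂ) * (y / weightProd v' l p * (1 + z))‖
      = weightProd v s p * (‖y‖ / weightProd v' l p) * ‖1 + z‖ := by
        simp only [norm_mul, norm_div, Complex.norm_real, Real.norm_of_nonneg (pos _ _).le,
          Real.norm_of_nonneg (pos' _ _).le, mul_assoc]
    _ ≤ n ^ (γ / 2) * A / (D * n ^ γ) * (1 + ‖z‖) := by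
        rw [factor]
        have : ‖1 + z‖ ≤ 1 + ‖z‖ := by simpa using norm_add_le 1 z
        have := pos 0 s
        have := pos' 0 l
        have : 0 ≤ A := le_trans (by positivity) hy
        gcongr
    _ = A / D * n ^ (-(γ / 2)) * (1 + ‖z‖) := by
        rw [show γ = γ / 2 + γ / 2 by ring, Real.rpow_add hn, Real.rpow_neg hn.le]
        field_simp
        ring_nf

end BlockEstimates

section BlockVector

/-- `F z = z ^ m * (1 + O(z))` on the unit disc, with implied constant `B`. -/
def IsAlmostMonomial (m : ℕ) (B : ℝ) (F : ℂ → ℂ) : Prop :=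
  ∀ z, ‖z‖ ≤ 1 → ∃ e : ℂ, ‖e‖ ≤ ‖z‖ * B ∧ F z = z ^ m * (1 + e)

lemma IsAlmostMonomial.exists_eq_of_norm_le {m : ℕ} {B : ℝ} {F : ℂ → ℂ}
    (hF : IsAlmostMonomial m B F) {z : ℂ} {τ : ℝ} (hz : ‖z‖ ≤ τ) (hτ : τ ≤ 1) :
    ∃ e : ℂ, ‖e‖ ≤ τ * B ∧ F z = z ^ m * (1 + e) := by
  obtain ⟨e₁, he₁, -⟩ := hF 1 norm_one.le
  rw [norm_one, one_mul] at he₁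
  obtain ⟨e, he, hFz⟩ := hF z (hz.trans hτ)
  exact ⟨e, he.trans (mul_le_mul_of_nonneg_right hz ((norm_nonneg _).trans he₁)), hFz⟩

variable {P : Type*}

/-- The coordinates of index `< n` are those of `u`; for `1 ≤ j < n`, the coordinates of index
`j * n + l`, `l < n`, are `m`-th roots chosen so that `j * n` iterations of the backward shift with
weights `w (r j)` turn the `m`-th power of the vector into one whose first `n` coordinates are those
of `y`. -/
def blockVector (w : P → ℕ → ℝ) (m n : ℕ) (r : ℕ → P) (y u : ℕ → ℂ) (p : ℕ) : ℂ :=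
  if p < n then u p
  else if p < n * n then
    (y (p % n) / weightProd (w (r (p / n))) (p % n) p) ^ (m⁻¹ : ℂ)
  else 0

variable {w : P → ℕ → ℝ} {m n : ℕ} {r : ℕ → P} {y u : ℕ → ℂ} {p : ℕ}

lemma blockVector_of_lt (hp : p < n) : blockVector w m n r y u p = u p :=
  if_pos hp

lemma blockVector_of_sq_le (hp : n * n ≤ p) : blockVector w m n r y u p = 0 := by
  have : n ≤ p := n.le_mul_self.trans hp
  rw [blockVector, if_neg this.not_gt, if_neg hp.not_gt]

lemma blockVector_pow (hm : m ≠ 0) (hnp : n ≤ p) (hp : p < n * n) :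
    blockVector w m n r y u p ^ m = y (p % n) / weightProd (w (r (p / n))) (p % n) p := by
  rw [blockVector, if_neg hnp.not_gt, if_pos hp, Complex.cpow_nat_inv_pow _ hm]

end BlockVector

namespace TameWeights

variable {P : Type*} [PseudoMetricSpace P] {w : P → ℕ → ℝ} {S : Set P} (t : TameWeights w S)

include t in
lemma exists_forall_norm_mul_weightProd_le {y : ℕ → ℂ} {L : ℕ} (hy : ∀ l ≥ L, y l = 0) :
    ∃ A : ℝ, ∀ l, ‖y l‖ ≤ A ∧ ∀ a ∈ S, ‖y l‖ * weightProd (w a) 0 l ≤ A := by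
  set Y := ∑ l ∈ range L, ‖y l‖
  have Y_nonneg : 0 ≤ Y := sum_nonneg fun _ _ => norm_nonneg _
  refine ⟨Y * t.C ^ L, fun l => ?_⟩
  obtain hl | hl := lt_or_ge l L
  · have y_le : ‖y l‖ ≤ Y :=
      single_le_sum (f := fun l => ‖y l‖) (fun _ _ => norm_nonneg _) (mem_range.2 hl)
    refine ⟨y_le.trans (le_mul_of_one_le_right Y_nonneg (one_le_pow₀ t.one_le_C)), fun a ha => ?_⟩
    have weightProd_le : weightProd (w a) 0 l ≤ t.C ^ L := by
      have := weightProd_add_le_pow (t.pos a ha) (t.le_C a ha) 0 l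
      rw [zero_add] at this
      exact this.trans (pow_le_pow_right₀ t.one_le_C hl.le)
    have := weightProd_pos (t.pos a ha) 0 l
    gcongr
  · have := t.one_le_C
    have : 0 ≤ Y * t.C ^ L := by positivity
    simpa only [hy l hl, norm_zero, zero_mul] using ⟨this, fun _ _ => this⟩

lemma abs_log_sub_log_le_of_lt_sq {n p : ℕ} (hN : t.N ≤ p) (hp : 0 < p) (hpn : p < n * n)
    {a b : P} (ha : a ∈ S) (hb : b ∈ S) :
    |Real.log (weightProd (w a) 0 p) - Real.log (weightProd (w b) 0 p)|
      ≤ 2 * Real.log n * (t.D₁ * dist a b) := by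
  have log_p_le : Real.log p ≤ 2 * Real.log n := by
    calc Real.log p ≤ Real.log ((n * n : ℕ) : ℝ) :=
          Real.log_le_log (Nat.cast_pos.2 hp) (Nat.cast_le.2 hpn.le)
      _ = 2 * Real.log n := by rw [← sq, Nat.cast_pow, Real.log_pow, Nat.cast_ofNat]
  have := t.D₁_pos
  calc |Real.log (weightProd (w a) 0 p) - Real.log (weightProd (w b) 0 p)|
      ≤ t.D₁ * (2 * Real.log n) * dist a b :=
        (t.abs_log_sub_log_le p hN a ha b hb).trans (by gcongr)
    _ = 2 * Real.log n * (t.D₁ * dist a b) := by ring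

/-- Conditions on a block length `n` under which a block vector is a good approximation: `L` bounds
the support of the target, `A` its size, `m` and `B` come from the polynomial, `τ` bounds the
entries of the blocks, and `ε` is the error allowed. -/
structure IsFineScale (m L : ℕ) (A B τ ε : ℝ) (n : ℕ) : Prop where
  pos : 0 < n
  le : L ≤ n
  N_le : t.N ≤ n
  entries_le : A / t.D₂ * (n : ℝ) ^ (-t.γ) ≤ τ ^ m
  error_le : A / t.D₂ * (n : ℝ) ^ (-(t.γ / 2)) * (1 + τ * B) ≤ ε

lemma eventually_isFineScale (m L : ℕ) (A B : ℝ) {τ ε : ℝ} (hτ : 0 < τ) (hε : 0 < ε) :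
    ∀ᶠ n : ℕ in atTop, t.IsFineScale m L A B τ ε n := by
  have decay {θ : ℝ} (hθ : 0 < θ) (c : ℝ) :
      Tendsto (fun n : ℕ => c * (n : ℝ) ^ (-θ)) atTop (𝓝 0) := by
    simpa using ((tendsto_rpow_neg_atTop hθ).comp tendsto_natCast_atTop_atTop).const_mul c
  have error := (decay (half_pos t.γ_pos) (A / t.D₂)).mul_const (1 + τ * B)
  rw [zero_mul] at error
  filter_upwards [eventually_gt_atTop 0, eventually_ge_atTop L, eventually_ge_atTop t.N,
    (decay t.γ_pos (A / t.D₂)).eventually_le_const (pow_pos hτ m), error.eventually_le_const hε]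
    with n h₀ h₁ h₂ h₃ h₄
  exact ⟨h₀, h₁, h₂, h₃, h₄⟩

section BlockVector

variable {t} {m n L : ℕ} {r : ℕ → P} {y u : ℕ → ℂ} {A B τ ε : ℝ}

lemma norm_blockVector_le (hn : t.IsFineScale m L A B τ ε n) (hm : m ≠ 0) (hr : ∀ k, r k ∈ S)
    (hA : ∀ l, ∀ a ∈ S, ‖y l‖ * weightProd (w a) 0 l ≤ A) (hτ : 0 ≤ τ) {p : ℕ} (hp : n ≤ p) :
    ‖blockVector w m n r y u p‖ ≤ τ := by
  obtain hpn | hpn := le_or_gt (n * n) p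
  · rwa [blockVector_of_sq_le hpn, norm_zero]
  set l := p % n
  set b := r (p / n)
  have hb : b ∈ S := hr _
  have pos (s u) : 0 < weightProd (w b) s u := weightProd_pos (t.pos b hb) s u
  have n_pos : (0 : ℝ) < n := Nat.cast_pos.2 hn.pos
  have A_nonneg : 0 ≤ A := (mul_nonneg (norm_nonneg _) (pos 0 l).le).trans (hA l b hb)
  refine le_of_pow_le_pow_left₀ hm hτ ?_
  calc ‖blockVector w m n r y u p‖ ^ m
      = ‖y l‖ * weightProd (w b) 0 l / weightProd (w b) 0 p := by
        rw [← norm_pow, blockVector_pow hm hp hpn, norm_div, Complex.norm_real,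
          Real.norm_of_nonneg (pos _ _).le, ← weightProd_mul_weightProd (w b) l.zero_le
          (p.mod_le n), mul_comm ‖y l‖, mul_div_mul_left _ _ (pos 0 l).ne']
    _ ≤ A / (t.D₂ * (n : ℝ) ^ t.γ) := by
        have : (n : ℝ) ^ t.γ ≤ (p : ℝ) ^ t.γ :=
          Real.rpow_le_rpow n_pos.le (Nat.cast_le.2 hp) t.γ_pos.le
        have growth := t.growth p (hn.N_le.trans hp) b hb
        have := t.D₂_pos
        exact div_le_div₀ A_nonneg (hA l b hb) (by positivity) (le_trans (by gcongr) growth)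
    _ = A / t.D₂ * (n : ℝ) ^ (-t.γ) := by
        rw [Real.rpow_neg n_pos.le, div_mul_eq_div_div, div_eq_mul_inv]
    _ ≤ τ ^ m := hn.entries_le

lemma norm_weightProd_mul_blockVector_sub_le_of_lt (hn : t.IsFineScale m L A B τ ε n)
    (hm : m ≠ 0) (hr : ∀ k, r k ∈ S) (hyA : ∀ l, ‖y l‖ ≤ A) (hτ₀ : 0 ≤ τ) (hτ : τ ≤ 1 / 2)
    (hε : A * (4 * τ * (1 + τ * B) + τ * B) ≤ ε) {a : P} (ha : a ∈ S) {k : ℕ} (hk : 0 < k)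
    (hkn : k < n) {s : ℕ} (hs : s < L)
    (hlog : |Real.log (weightProd (w a) s (s + k * n)) -
      Real.log (weightProd (w (r k)) s (s + k * n))| ≤ 2 * τ)
    {z : ℂ} (hz : ‖z‖ ≤ τ * B) :
    ‖(weightProd (w a) s (s + k * n) : ℂ) *
      (blockVector w m n r y u (s + k * n) ^ m * (1 + z)) - y s‖ ≤ ε := by
  have hsn : s < n := hs.trans_le hn.le
  have hnp : n ≤ s + k * n := (Nat.le_mul_of_pos_left n hk).trans (Nat.le_add_left _ _)
  have hpn : s + k * n < n * n := by nlinarith [Nat.mul_le_mul_right n hkn]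
  have p_div : (s + k * n) / n = k := by
    rw [Nat.add_mul_div_right _ _ hn.pos, Nat.div_eq_of_lt hsn, zero_add]
  have A_nonneg : 0 ≤ A := (norm_nonneg _).trans (hyA 0)
  rw [blockVector_pow hm hnp hpn, p_div, Nat.add_mul_mod_self_right, Nat.mod_eq_of_lt hsn]
  refine (norm_weightProd_mul_div_sub_le_of_log (t.pos a ha) (t.pos _ (hr k)) hτ hlog
    (y s) z).trans (le_trans ?_ hε)
  gcongr
  exact hyA s

lemma norm_weightProd_mul_blockVector_le_of_le (hn : t.IsFineScale m L A B τ ε n)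
    (hm : m ≠ 0) (hr : ∀ k, r k ∈ S) (hy : ∀ l ≥ L, y l = 0)
    (hA : ∀ l, ∀ a ∈ S, ‖y l‖ * weightProd (w a) 0 l ≤ A) (hε : 0 ≤ ε) {a : P} (ha : a ∈ S)
    {k : ℕ} (hk : 0 < k) {s : ℕ} (hs : L ≤ s) {z : ℂ} (hz : ‖z‖ ≤ τ * B) :
    ‖(weightProd (w a) s (s + k * n) : ℂ) *
      (blockVector w m n r y u (s + k * n) ^ m * (1 + z))‖ ≤ ε := by
  have hnp : n ≤ s + k * n := (Nat.le_mul_of_pos_left n hk).trans (Nat.le_add_left _ _)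
  obtain hpn | hpn := le_or_gt (n * n) (s + k * n)
  · simpa only [blockVector_of_sq_le hpn, zero_pow hm, zero_mul, mul_zero, norm_zero]
  rw [blockVector_pow hm hnp hpn]
  obtain hsn | hns := lt_or_ge s n
  · rw [Nat.add_mul_mod_self_right, Nat.mod_eq_of_lt hsn, hy s hs]
    simpa only [zero_div, zero_mul, mul_zero, norm_zero]
  have D₂_pos := t.D₂_pos
  have growth : t.D₂ * (n : ℝ) ^ t.γ ≤ weightProd (w a) 0 s := by
    refine le_trans ?_ (t.growth s (hn.N_le.trans hns) a ha)
    have := t.γ_pos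
    gcongr
  have A_nonneg : 0 ≤ A :=
    (mul_nonneg (norm_nonneg _) (weightProd_pos (t.pos a ha) 0 0).le).trans (hA 0 a ha)
  set b := r ((s + k * n) / n)
  have log_near : |Real.log (weightProd (w a) 0 (s + k * n)) -
      Real.log (weightProd (w b) 0 (s + k * n))| ≤ t.γ / 2 * Real.log n := by
    have := Real.log_natCast_nonneg n
    calc _ ≤ 2 * Real.log n * (t.D₁ * dist a b) :=
          t.abs_log_sub_log_le_of_lt_sq (hn.N_le.trans hnp) (hn.pos.trans_le hnp) hpn ha (hr _)
      _ ≤ 2 * Real.log n * (t.γ / 4) := by gcongr; exact t.D₁_mul_dist_le a ha b (hr _)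
      _ = t.γ / 2 * Real.log n := by ring
  exact (norm_weightProd_mul_div_le_of_log (t.pos a ha) (t.pos _ (hr _)) (Nat.mod_le _ n)
    (s.le_add_right _) D₂_pos (Nat.cast_pos.2 hn.pos) growth log_near (hA _ _ (hr _)) z).trans
    (le_trans (by gcongr) hn.error_le)

lemma norm_weightProd_mul_blockVector_sub_le (hn : t.IsFineScale m L A B τ ε n) (hm : m ≠ 0)
    (hr : ∀ k, r k ∈ S) (hy : ∀ l ≥ L, y l = 0) (hyA : ∀ l, ‖y l‖ ≤ A)
    (hA : ∀ l, ∀ a ∈ S, ‖y l‖ * weightProd (w a) 0 l ≤ A) (hτ : τ ≤ 1 / 2)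
    (hx : ∀ p ≥ n, ‖blockVector w m n r y u p‖ ≤ τ)
    (hε₀ : 0 ≤ ε) (hε : A * (4 * τ * (1 + τ * B) + τ * B) ≤ ε) {a : P} (ha : a ∈ S) {k : ℕ}
    (hk : 0 < k) (hkn : k < n)
    (hlog : ∀ l < L, |Real.log (weightProd (w a) l (l + k * n)) -
      Real.log (weightProd (w (r k)) l (l + k * n))| ≤ 2 * τ)
    {F : ℂ → ℂ} (hF : IsAlmostMonomial m B F) (s : ℕ) :
    ‖(weightProd (w a) s (s + k * n) : ℂ) * F (blockVector w m n r y u (s + k * n)) - y s‖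
      ≤ ε := by
  have norm_x : ‖blockVector w m n r y u (s + k * n)‖ ≤ τ :=
    hx _ ((Nat.le_mul_of_pos_left n hk).trans (Nat.le_add_left _ _))
  have τ_nonneg : 0 ≤ τ := (norm_nonneg _).trans norm_x
  obtain ⟨e, he, hFx⟩ := hF.exists_eq_of_norm_le norm_x (by linarith)
  rw [hFx]
  obtain hs | hs := lt_or_ge s L
  · exact norm_weightProd_mul_blockVector_sub_le_of_lt hn hm hr hyA τ_nonneg hτ hε ha hk hkn hs
      (hlog s hs) he
  · rw [hy s hs, sub_zero]
    exact norm_weightProd_mul_blockVector_le_of_le hn hm hr hy hA hε₀ ha hk hs he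

end BlockVector

end TameWeights

section UpperBoxDim

open Metric

variable {P : Type*} [PseudoMetricSpace P]

/-- The upper box dimension of `K` is finite: `K` is covered by at most `Q ^ d` balls of radius
`1 / Q` for some `d` and all large integers `Q`. -/
def HasFiniteUpperBoxDim (K : Set P) : Prop :=
  ∃ d : ℕ, ∀ᶠ Q : ℕ in atTop, externalCoveringNumber (Q : ℝ≥0)⁻¹ K ≤ (Q ^ d : ℕ)

lemma HasFiniteUpperBoxDim.mono {K K' : Set P} (hK : HasFiniteUpperBoxDim K) (h : K' ⊆ K) :
    HasFiniteUpperBoxDim K' := by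
  obtain ⟨d, hd⟩ := hK
  exact ⟨d, hd.mono fun Q hQ => (externalCoveringNumber_mono_set h).trans hQ⟩

lemma exists_seq_of_coveringNumber_le {S : Set P} (hS : S.Nonempty) {ε : ℝ≥0} {n : ℕ}
    (hn : coveringNumber ε S ≤ n) :
    ∃ r : ℕ → P, (∀ k, r k ∈ S) ∧ ∀ a ∈ S, ∃ k, 0 < k ∧ k ≤ n ∧ dist a (r k) ≤ ε := by
  obtain ⟨C, hCS, C_fin, cover, hC⟩ :=
    exists_set_encard_eq_coveringNumber (ne_top_of_le_ne_top (ENat.natCast_ne_top n) hn)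
  rw [← hC, C_fin.encard_eq_coe_toFinset_card, Nat.cast_le] at hn
  set e := C_fin.toFinset.equivFin
  obtain ⟨a₀, ha₀⟩ := hS
  refine ⟨fun k => if hk : k - 1 < C_fin.toFinset.card then e.symm ⟨k - 1, hk⟩ else a₀,
    fun k => ?_, fun a ha => ?_⟩
  · dsimp only
    split_ifs with hk
    · exact hCS (C_fin.mem_toFinset.1 (e.symm ⟨k - 1, hk⟩).2)
    · exact ha₀
  · obtain ⟨c, hc, hac⟩ := Set.mem_iUnion₂.1 (isCover_iff_subset_iUnion_closedBall.1 cover ha)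
    set j := e ⟨c, C_fin.mem_toFinset.2 hc⟩
    refine ⟨j + 1, Nat.succ_pos _, j.is_lt.trans_le hn, ?_⟩
    simpa [j] using hac

lemma HasFiniteUpperBoxDim.exists_eventually_net {S : Set P} (hS : HasFiniteUpperBoxDim S)
    (hne : S.Nonempty) :
    ∃ d : ℕ, d ≠ 0 ∧ ∀ᶠ Q : ℕ in atTop, ∃ r : ℕ → P, (∀ k, r k ∈ S) ∧
      ∀ a ∈ S, ∃ k, 0 < k ∧ k < Q ^ d ∧ dist a (r k) ≤ 2 / Q := by
  obtain ⟨d, hd⟩ := hS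
  refine ⟨d + 1, d.succ_ne_zero, ?_⟩
  filter_upwards [hd, eventually_ge_atTop 2] with Q hQ two_le_Q
  obtain ⟨r, hr, net⟩ := exists_seq_of_coveringNumber_le hne
    ((coveringNumber_two_mul_le_externalCoveringNumber _ _).trans hQ)
  refine ⟨r, hr, fun a ha => ?_⟩
  obtain ⟨k, hk, hkQ, hak⟩ := net a ha
  refine ⟨k, hk, hkQ.trans_lt (Nat.pow_lt_pow_right two_le_Q d.lt_succ_self), ?_⟩
  simpa [div_eq_mul_inv] using hak

lemma exists_finset_card_le_isCover_pi {κ : Type*} [Fintype κ] {S : Set (κ → ℝ)} {R Q : ℕ}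
    (hS : ∀ a ∈ S, ‖a‖ ≤ R) (hQ : 2 * R + 1 ≤ Q) :
    ∃ G : Finset (κ → ℝ), #G ≤ Q ^ (2 * Fintype.card κ) ∧ IsCover (Q : ℝ≥0)⁻¹ S G := by
  classical
  have Q_pos : (0 : ℝ) < Q := Nat.cast_pos.2 (by lia)
  set J := Icc (-(R * Q : ℤ)) (R * Q)
  have card_J : #J ≤ Q ^ 2 := by
    rw [Int.card_Icc]
    zify
    have : (0 : ℤ) ≤ R * Q := by positivity
    rw [Int.toNat_of_nonneg (by linarith)]
    nlinarith
  refine ⟨(Fintype.piFinset fun _ => J).image fun z i => (z i : ℝ) / Q, ?_,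
    isCover_iff_subset_iUnion_closedBall.2 fun a ha => Set.mem_iUnion₂.2
      ⟨fun i => ⌊a i * Q⌋ / Q, mem_coe.2 (mem_image.2 ⟨fun i => ⌊a i * Q⌋,
        Fintype.mem_piFinset.2 fun i => ?_, rfl⟩), ?_⟩⟩
  · refine card_image_le.trans ?_
    rw [Fintype.card_piFinset, prod_const, card_univ, pow_mul]
    exact Nat.pow_le_pow_left card_J _
  · obtain ⟨h₁, h₂⟩ := abs_le.1 ((norm_le_pi_norm a i).trans (hS a ha))
    rw [mem_Icc, Int.le_floor]
    constructor
    · push_cast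
      nlinarith
    · exact_mod_cast (Int.floor_le _).trans (mul_le_mul_of_nonneg_right h₂ Q_pos.le)
  · refine mem_closedBall.2 ((dist_pi_le_iff (by positivity)).2 fun i => ?_)
    have floor_le := Int.floor_le (a i * Q)
    have lt_floor := Int.lt_floor_add_one (a i * Q)
    calc dist (a i) (⌊a i * Q⌋ / Q) = (a i * Q - ⌊a i * Q⌋) / Q := by
          rw [Real.dist_eq, sub_div, mul_div_cancel_right₀ _ Q_pos.ne', abs_of_nonneg]
          rw [sub_nonneg, div_le_iff₀ Q_pos]
          exact floor_le
      _ ≤ 1 / Q := by gcongr; linarith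
      _ = ((Q : ℝ≥0)⁻¹ : ℝ≥0) := by simp

lemma hasFiniteUpperBoxDim_of_isBounded {κ : Type*} [Fintype κ] {S : Set (κ → ℝ)}
    (hS : Bornology.IsBounded S) : HasFiniteUpperBoxDim S := by
  obtain ⟨R₀, hR₀⟩ := hS.exists_norm_le
  obtain ⟨R, hR₀R⟩ := exists_nat_ge R₀
  refine ⟨2 * Fintype.card κ, ?_⟩
  filter_upwards [eventually_ge_atTop (2 * R + 1)] with Q hQ
  obtain ⟨G, card_G, cover⟩ :=
    exists_finset_card_le_isCover_pi (fun a ha => (hR₀ a ha).trans hR₀R) hQ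
  refine cover.externalCoveringNumber_le_encard.trans ?_
  rw [Set.encard_coe_eq_coe_finsetCard, Nat.cast_le]
  exact card_G

end UpperBoxDim

namespace TameWeights

variable {P : Type*} [PseudoMetricSpace P] {w : P → ℕ → ℝ} {S : Set P} (t : TameWeights w S)
  {d m L : ℕ}

include t

lemma eventually_abs_log_sub_log_le_of_lt (L : ℕ) {τ : ℝ} (hτ : 0 < τ) :
    ∀ᶠ Q : ℕ in atTop, ∀ a ∈ S, ∀ b ∈ S, dist a b ≤ 2 / Q → ∀ l < L,
      |Real.log (weightProd (w a) 0 l) - Real.log (weightProd (w b) 0 l)| ≤ τ := by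
  have key (l : ℕ) : ∀ᶠ Q : ℕ in atTop, ∀ a ∈ S, ∀ b ∈ S, dist a b ≤ 2 / Q →
      |Real.log (weightProd (w a) 0 l) - Real.log (weightProd (w b) 0 l)| ≤ τ := by
    obtain ⟨δ, δ_pos, hδ⟩ := Metric.uniformContinuousOn_iff.1 (t.uniformContinuousOn_log l) τ hτ
    filter_upwards [(tendsto_const_div_atTop_nhds_zero_nat 2).eventually_lt_const δ_pos]
      with Q hQ a ha b hb hab
    exact (hδ a ha b hb (hab.trans_lt hQ)).le
  filter_upwards [(eventually_all_finset (range L)).2 fun l _ => key l] with Q hQ a ha b hb hab l hl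
  exact hQ l (mem_range.2 hl) a ha b hb hab

lemma eventually_abs_log_weightProd_sub_le (hd : d ≠ 0) (L : ℕ) {τ : ℝ} (hτ : 0 < τ) :
    ∀ᶠ Q : ℕ in atTop, ∀ a ∈ S, ∀ b ∈ S, dist a b ≤ 2 / Q → ∀ l < L, ∀ k, 0 < k → k < Q ^ d →
      |Real.log (weightProd (w a) l (l + k * Q ^ d)) -
        Real.log (weightProd (w b) l (l + k * Q ^ d))| ≤ 2 * τ := by
  have log_div : Tendsto (fun Q : ℕ => 2 * Real.log ((Q ^ d : ℕ) : ℝ) * (t.D₁ * (2 / Q)))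
      atTop (𝓝 0) := by
    have := ((Real.isLittleO_log_id_atTop.tendsto_div_nhds_zero).comp
      tendsto_natCast_atTop_atTop).const_mul (4 * d * t.D₁)
    rw [mul_zero] at this
    refine this.congr fun Q => ?_
    simp only [Function.comp_apply, id, Nat.cast_pow, Real.log_pow]
    ring
  filter_upwards [t.eventually_abs_log_sub_log_le_of_lt L hτ, log_div.eventually_le_const hτ,
    eventually_ge_atTop L, eventually_ge_atTop t.N]
    with Q hQ log_le hL hN a ha b hb hab l hl k hk hkQ
  have Q_le : Q ≤ Q ^ d := Nat.le_self_pow hd Q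
  have Q_pow_le : Q ^ d ≤ l + k * Q ^ d :=
    (Nat.le_mul_of_pos_left _ hk).trans (Nat.le_add_left _ _)
  have lt_sq : l + k * Q ^ d < Q ^ d * Q ^ d := by nlinarith [Nat.mul_le_mul_right (Q ^ d) hkQ]
  have D₁_pos := t.D₁_pos
  have far : |Real.log (weightProd (w a) 0 (l + k * Q ^ d)) -
      Real.log (weightProd (w b) 0 (l + k * Q ^ d))| ≤ τ := by
    have := Real.log_natCast_nonneg (Q ^ d)
    refine (t.abs_log_sub_log_le_of_lt_sq (by lia) (by lia) lt_sq ha hb).trans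
      (le_trans ?_ log_le)
    gcongr
  rw [log_weightProd (t.pos a ha) (l.le_add_right _), log_weightProd (t.pos b hb)
    (l.le_add_right _), sub_sub_sub_comm, two_mul]
  exact (abs_sub _ _).trans (add_le_add far (hQ a ha b hb hab l hl))

lemma eventually_blockVector_approx (hd : d ≠ 0) (hm : m ≠ 0) {y : ℕ → ℂ}
    (hy : ∀ l ≥ L, y l = 0) (B : ℝ) {η ε : ℝ} (hη : 0 < η) (hε : 0 < ε) :
    ∀ᶠ Q : ℕ in atTop, ∀ r : ℕ → P, (∀ k, r k ∈ S) → ∀ u : ℕ → ℂ,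
      (∀ p ≥ Q ^ d, ‖blockVector w m (Q ^ d) r y u p‖ ≤ η) ∧
      ∀ a ∈ S, ∀ k, 0 < k → k < Q ^ d → dist a (r k) ≤ 2 / Q →
        ∀ F, IsAlmostMonomial m B F → ∀ s,
          ‖(weightProd (w a) s (s + k * Q ^ d) : ℂ) *
            F (blockVector w m (Q ^ d) r y u (s + k * Q ^ d)) - y s‖ ≤ ε := by
  obtain ⟨A, hA⟩ := t.exists_forall_norm_mul_weightProd_le hy
  have error : Tendsto (fun τ => A * (4 * τ * (1 + τ * B) + τ * B)) (𝓝[>] 0) (𝓝 0) :=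
    (Continuous.tendsto' (by fun_prop) 0 0 (by ring)).mono_left nhdsWithin_le_nhds
  obtain ⟨τ, hτε, hτ, hτ_le⟩ := ((error.eventually_le_const hε).and
    (Ioc_mem_nhdsGT (lt_min one_half_pos hη))).exists
  filter_upwards [t.eventually_abs_log_weightProd_sub_le hd L hτ,
    (tendsto_pow_atTop hd).eventually (t.eventually_isFineScale m L A B hτ hε)]
    with Q near fine r hr u
  have norm_le (p) (hp : p ≥ Q ^ d) : ‖blockVector w m (Q ^ d) r y u p‖ ≤ τ :=
    norm_blockVector_le fine hm hr (fun l => (hA l).2) hτ.le hp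
  refine ⟨fun p hp => (norm_le p hp).trans (hτ_le.trans (min_le_right _ _)),
    fun a ha k hk hkQ hak F hF s => ?_⟩
  exact norm_weightProd_mul_blockVector_sub_le fine hm hr hy (fun l => (hA l).1)
    (fun l => (hA l).2) (hτ_le.trans (min_le_left _ _)) norm_le hε.le hτε ha hk hkQ
    (fun l hl => near a ha (r k) (hr k) hak l hl k hk hkQ) hF s

end TameWeights

section PolynomialFamily

/-- The polynomial functions `z ^ m * (1 + c₀ z + ⋯ + c_{M-1} z ^ M)` whose coefficients `c_r` have
modulus at most `C`. -/
def polynomialFamily (m M : ℕ) (C : ℝ) : Set (ℂ → ℂ) :=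
  (fun (c : Fin M → ℂ) z => z ^ m * (1 + z * ∑ r, c r * z ^ (r : ℕ))) '' Metric.closedBall 0 C

lemma isAlmostMonomial_of_mem_polynomialFamily {m M : ℕ} {C : ℝ} {F : ℂ → ℂ}
    (hF : F ∈ polynomialFamily m M C) : IsAlmostMonomial m (M * C) F := by
  obtain ⟨c, hc, rfl⟩ := hF
  have norm_c : ‖c‖ ≤ C := mem_closedBall_zero_iff.1 hc
  refine fun z hz => ⟨z * ∑ r, c r * z ^ (r : ℕ), ?_, rfl⟩
  rw [norm_mul]
  gcongr
  calc ‖∑ r, c r * z ^ (r : ℕ)‖ ≤ ∑ _r : Fin M, C := norm_sum_le_of_le _ fun r _ => by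
        rw [norm_mul, norm_pow]
        exact (mul_le_of_le_one_right (norm_nonneg _) (pow_le_one₀ (norm_nonneg z) hz)).trans
          ((norm_le_pi_norm c r).trans norm_c)
    _ = M * C := by simp

lemma uniformEquicontinuousOn_polynomialFamily (m M : ℕ) (C R : ℝ) :
    (polynomialFamily m M C).UniformEquicontinuousOn (Metric.closedBall 0 R) := by
  have cont : Continuous fun p : (Fin M → ℂ) × ℂ =>
      p.2 ^ m * (1 + p.2 * ∑ r, p.1 r * p.2 ^ (r : ℕ)) := by fun_prop
  have unif := Metric.uniformContinuousOn_iff.1 (((isCompact_closedBall 0 C).prod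
    (isCompact_closedBall 0 R)).uniformContinuousOn_of_continuous cont.continuousOn)
  refine ((Metric.uniformity_basis_dist.inf_principal _).uniformEquicontinuousOn_iff
    Metric.uniformity_basis_dist).2 fun ε hε => ?_
  obtain ⟨δ, δ_pos, hδ⟩ := unif ε hε
  refine ⟨δ, δ_pos, ?_⟩
  rintro z z' ⟨hzz', hz, hz'⟩ ⟨_, c, hc, rfl⟩
  exact hδ (c, z) ⟨hc, hz⟩ (c, z') ⟨hc, hz'⟩ (by simpa [Prod.dist_eq, δ_pos] using hzz')

lemma exists_eval_eq_mul_of_coeff_zero_eq_zero {p : Polynomial ℂ} (hp : p ≠ 0)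
    (hp₀ : p.coeff 0 = 0) :
    ∃ b ≠ 0, ∃ m ≠ 0, ∃ M C : ℕ, ∃ F ∈ polynomialFamily m M C, ∀ z, p.eval z = b * F z := by
  obtain ⟨q, hpq, hq⟩ := p.exists_eq_pow_rootMultiplicity_mul_and_not_dvd hp 0
  have hm : p.rootMultiplicity 0 ≠ 0 := by
    rw [← pos_iff_ne_zero, Polynomial.rootMultiplicity_pos hp, Polynomial.IsRoot,
      ← Polynomial.coeff_zero_eq_eval_zero, hp₀]
  rw [map_zero, sub_zero] at hpq hq
  rw [Polynomial.X_dvd_iff] at hq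
  set c : Fin (q.divX.natDegree + 1) → ℂ := fun r => (q.coeff 0)⁻¹ * q.divX.coeff r
  obtain ⟨C, hC⟩ := exists_nat_ge ‖c‖
  refine ⟨q.coeff 0, hq, _, hm, _, C, _, ⟨c, mem_closedBall_zero_iff.2 hC, rfl⟩, fun z => ?_⟩
  have eval_q : q.eval z = q.coeff 0 * (1 + z * ∑ r, c r * z ^ (r : ℕ)) := by
    conv_lhs => rw [← q.X_mul_divX_add]
    rw [Fin.sum_univ_eq_sum_range (fun r => (q.coeff 0)⁻¹ * q.divX.coeff r * z ^ r)]
    simp only [mul_assoc, ← mul_sum, Polynomial.eval_add, Polynomial.eval_mul, Polynomial.eval_X,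
      Polynomial.eval_C, ← Polynomial.eval_eq_sum_range]
    field_simp
    ring
  conv_lhs => rw [hpq]
  rw [Polynomial.eval_mul, Polynomial.eval_pow, Polynomial.eval_X, eval_q, mul_left_comm]

end PolynomialFamily

section ApproximatingSet

variable {P ι : Type*} {w : P → ι → ℕ → ℝ} {S : Set P} {𝓕 : Set (ℂ → ℂ)} {y : ι → c0C}

/-- The vectors `x` such that for all parameters `a ∈ S` and all `F ∈ 𝓕`, one of the first `N`
iterates of `F ∘ x` under the weighted shift with weights `w a` is `ε`-close to `y`. -/
def approximatingSet (w : P → ι → ℕ → ℝ) (S : Set P) (𝓕 : Set (ℂ → ℂ)) (y : ι → c0C) (ε : ℝ)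
    (N : ℕ) : Set (ι → c0C) :=
  {x | ∀ a ∈ S, ∀ F ∈ 𝓕, ∃ n, 0 < n ∧ n ≤ N ∧ ∀ i s,
    ‖(weightProd (w a i) s (s + n) : ℂ) * F (x i (s + n)) - y i s‖ ≤ ε}

lemma approximatingSet_subset_interior [Finite ι] {C ε ε' : ℝ} (hC : 1 ≤ C)
    (hpos : ∀ a ∈ S, ∀ i n, 1 ≤ n → 0 < w a i n) (hle : ∀ a ∈ S, ∀ i n, 1 ≤ n → w a i n ≤ C)
    (h𝓕 : ∀ R, 𝓕.UniformEquicontinuousOn (Metric.closedBall 0 R)) (hε : ε < ε') (N : ℕ) :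
    approximatingSet w S 𝓕 y ε N ⊆ interior (approximatingSet w S 𝓕 y ε' N) := by
  intro x hx
  have := Fintype.ofFinite ι
  have C_pos : 0 < C := zero_lt_one.trans_le hC
  obtain ⟨δ, δ_pos, hδ⟩ :=
    ((Metric.uniformity_basis_dist.inf_principal _).uniformEquicontinuousOn_iff
      Metric.uniformity_basis_dist).1 (h𝓕 (‖x‖ + 1)) ((ε' - ε) / C ^ N)
      (div_pos (sub_pos.2 hε) (pow_pos C_pos N))
  refine mem_interior_iff_mem_nhds.2 (Metric.mem_nhds_iff.2
    ⟨min δ 1, lt_min δ_pos one_pos, fun x' hx' a ha F hF => ?_⟩)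
  obtain ⟨hxδ, hx₁⟩ := lt_min_iff.1 (mem_ball_iff_norm.1 hx')
  obtain ⟨n, n_pos, hnN, hn⟩ := hx a ha F hF
  refine ⟨n, n_pos, hnN, fun i s => ?_⟩
  have norm_F_sub : ‖F (x' i (s + n)) - F (x i (s + n))‖ ≤ (ε' - ε) / C ^ N := by
    have norm_sub := norm_apply_le_norm (x' - x) i (s + n)
    have norm_x' : ‖x'‖ ≤ ‖x‖ + 1 := by linarith [norm_le_norm_add_norm_sub' x' x]
    rw [← dist_eq_norm]
    refine (hδ _ _ ⟨?_, ?_, ?_⟩ ⟨F, hF⟩).le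
    · exact (dist_eq_norm _ _).trans_lt (norm_sub.trans_lt hxδ)
    · exact mem_closedBall_zero_iff.2 ((norm_apply_le_norm x' _ _).trans norm_x')
    · exact mem_closedBall_zero_iff.2 ((norm_apply_le_norm x _ _).trans (by linarith))
  have weightProd_nonneg := (weightProd_pos (hpos a ha i) s (s + n)).le
  have weightProd_le : weightProd (w a i) s (s + n) ≤ C ^ N :=
    (weightProd_add_le_pow (hpos a ha i) (hle a ha i) s n).trans (pow_le_pow_right₀ hC hnN)
  calc ‖(weightProd (w a i) s (s + n) : ℂ) * F (x' i (s + n)) - y i s‖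
      = ‖(weightProd (w a i) s (s + n) : ℂ) * (F (x' i (s + n)) - F (x i (s + n))) +
          ((weightProd (w a i) s (s + n) : ℂ) * F (x i (s + n)) - y i s)‖ := by ring_nf
    _ ≤ C ^ N * ((ε' - ε) / C ^ N) + ε := by
        refine (norm_add_le _ _).trans (add_le_add ?_ (hn i s))
        rw [norm_mul, Complex.norm_real, Real.norm_of_nonneg weightProd_nonneg]
        gcongr
    _ = ε' := by rw [mul_div_cancel₀ _ (pow_pos C_pos N).ne', sub_add_cancel]

variable [PseudoMetricSpace P] {m : ℕ} {B ε : ℝ}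

lemma exists_mem_approximatingSet_norm_sub_le [Fintype ι] (hS : HasFiniteUpperBoxDim S)
    (hne : S.Nonempty) (t : ∀ i, TameWeights (fun a => w a i) S) (hm : m ≠ 0)
    (h𝓕 : ∀ F ∈ 𝓕, IsAlmostMonomial m B F) (hy : FinitelySupported y) (hε : 0 < ε)
    {u : ι → c0C} (hu : FinitelySupported u) {η : ℝ} (hη : 0 < η) :
    ∃ N, ∃ x ∈ approximatingSet w S 𝓕 y ε N, ‖x - u‖ ≤ η := by
  obtain ⟨d, hd, net⟩ := hS.exists_eventually_net hne
  obtain ⟨L, hL⟩ := hy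
  obtain ⟨L', hL'⟩ := hu
  obtain ⟨Q, ⟨r, hr, net⟩, block, hQ⟩ := (net.and ((eventually_all.2 fun i =>
    (t i).eventually_blockVector_approx hd hm (hL i) B hη hε).and
      (eventually_ge_atTop L'))).exists
  set n := Q ^ d
  set f : ι → ℕ → ℂ := fun i => blockVector (fun a => w a i) m n r (y i) (u i)
  have truncate_f (i p) : truncate (n * n) f i p = f i p := by
    rw [truncate_apply]
    split_ifs with hp
    · rfl
    · exact (blockVector_of_sq_le (not_lt.1 hp)).symm
  refine ⟨n * n, truncate (n * n) f, fun a ha F hF => ?_,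
    (norm_le_iff_forall_apply _ hη.le).2 fun i p => ?_⟩
  · obtain ⟨k, k_pos, hkn, hak⟩ := net a ha
    refine ⟨k * n, Nat.mul_pos k_pos (k_pos.trans hkn), Nat.mul_le_mul_right n hkn.le,
      fun i s => ?_⟩
    rw [truncate_f]
    exact (block i r hr (u i)).2 a ha k k_pos hkn hak F (h𝓕 F hF) s
  · rw [Pi.sub_apply, ZeroAtInftyContinuousMap.sub_apply, truncate_f]
    obtain hpn | hnp := lt_or_ge p n
    · simp only [f]
      rw [blockVector_of_lt hpn, sub_self, norm_zero]
      exact hη.le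
    · rw [hL' i p ((hQ.trans (Nat.le_self_pow hd Q)).trans hnp), sub_zero]
      exact (block i r hr (u i)).1 p hnp

lemma eventually_residual_exists_mem_approximatingSet [Finite ι] (hS : HasFiniteUpperBoxDim S)
    (t : ∀ i, TameWeights (fun a => w a i) S) (hm : m ≠ 0)
    (h𝓕 : ∀ F ∈ 𝓕, IsAlmostMonomial m B F)
    (h𝓕' : ∀ R, 𝓕.UniformEquicontinuousOn (Metric.closedBall 0 R))
    (hy : FinitelySupported y) (hε : 0 < ε) :
    ∀ᶠ x in residual (ι → c0C), ∃ N, x ∈ approximatingSet w S 𝓕 y ε N := by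
  obtain rfl | hne := S.eq_empty_or_nonempty
  · exact .of_forall fun x => ⟨0, fun a ha => absurd ha (Set.notMem_empty a)⟩
  have := Fintype.ofFinite ι
  obtain ⟨C, hC⟩ := Finite.exists_le fun i => (t i).C
  have sub_interior := approximatingSet_subset_interior (y := y) (le_max_left 1 C)
    (fun a ha i => (t i).pos a ha)
    (fun a ha i n hn => ((t i).le_C a ha n hn).trans ((hC i).trans (le_max_right 1 C)))
    h𝓕' (half_lt_self hε)
  have dense : Dense (⋃ N, interior (approximatingSet w S 𝓕 y ε N)) := by
    obtain ⟨Y, -, dense_Y, hY⟩ := exists_countable_dense_finitelySupported_s3 (ι := ι)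
    refine dense_closure.1 (dense_Y.mono fun u hu => Metric.mem_closure_iff.2 fun η hη => ?_)
    obtain ⟨N, x, hx, hxu⟩ := exists_mem_approximatingSet_norm_sub_le hS hne t hm h𝓕 hy
      (half_pos hε) (hY u hu) (half_pos hη)
    refine ⟨x, Set.mem_iUnion.2 ⟨N, sub_interior N hx⟩, ?_⟩
    rw [dist_comm, dist_eq_norm]
    exact hxu.trans_lt (half_lt_self hη)
  filter_upwards [residual_of_dense_open (isOpen_iUnion fun N => isOpen_interior) dense]
    with x hx
  exact (Set.mem_iUnion.1 hx).imp fun N hN => interior_subset hN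

end ApproximatingSet

section CountableCover

variable {P ι : Type*} [MetricSpace P] {w : P → ι → ℕ → ℝ}

lemma exists_finite_cover_tameWeights [Finite ι] {K : Set P} (hK : IsCompact K)
    (hpos : ∀ a ∈ K, ∀ i n, 1 ≤ n → 0 < w a i n)
    (hbdd : ∃ C, ∀ a ∈ K, ∀ i n, 1 ≤ n → w a i n ≤ C)
    (hcont : ∀ i n, ContinuousOn (fun a => w a i n) K)
    (hcrit : ∀ i, LogLipschitzGrowth (fun a => w a i) K) :
    ∃ 𝒮 : Set (Set P), 𝒮.Finite ∧ K ⊆ ⋃₀ 𝒮 ∧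
      ∀ S ∈ 𝒮, S ⊆ K ∧ Nonempty (∀ i, TameWeights (fun a => w a i) S) := by
  obtain ⟨C, hC⟩ := hbdd
  obtain ⟨δ, tame, δ_pos⟩ := ((eventually_all.2 fun i =>
    (hcrit i).eventually_nonempty_tameWeights hK (fun a ha => hpos a ha i)
      ⟨C, fun a ha => hC a ha i⟩ (hcont i)).and self_mem_nhdsWithin).exists
  obtain ⟨c, -, c_fin, cover⟩ := hK.finite_cover_balls (half_pos δ_pos)
  refine ⟨(fun x => K ∩ Metric.ball x (δ / 2)) '' c, c_fin.image _, fun a ha => ?_, ?_⟩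
  · obtain ⟨x, hx, hax⟩ := Set.mem_iUnion₂.1 (cover ha)
    exact ⟨_, Set.mem_image_of_mem _ hx, ha, hax⟩
  · rintro _ ⟨x, -, rfl⟩
    refine ⟨Set.inter_subset_left, Classical.nonempty_pi.2 fun i =>
      tame i _ Set.inter_subset_left fun a ha b hb => ?_⟩
    linarith [dist_triangle_right a b x, Metric.mem_ball.1 ha.2, Metric.mem_ball.1 hb.2]

lemma isCompact_setOf_forall_weight_le {K : Set P} (hK : IsCompact K)
    (hcont : ∀ i n, ContinuousOn (fun a => w a i n) K) (C : ℝ) :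
    IsCompact {a ∈ K | ∀ i n, 1 ≤ n → w a i n ≤ C} := by
  have closed : IsClosed (K ∩ ⋂ i, ⋂ n, ⋂ _ : 1 ≤ n, K ∩ (fun a => w a i n) ⁻¹' Set.Iic C) :=
    hK.isClosed.inter <| isClosed_iInter fun i => isClosed_iInter fun n =>
      isClosed_iInter fun _ => (hcont i n).preimage_isClosed_of_isClosed hK.isClosed isClosed_Iic
  convert hK.of_isClosed_subset closed Set.inter_subset_left using 1
  ext a
  simp only [Set.mem_ofPred_eq, Set.mem_inter_iff, Set.mem_iInter, Set.mem_preimage, Set.mem_Iic]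
  exact and_congr_right fun ha => by simp only [ha, true_and]

lemma exists_countable_cover_tameWeights [Finite ι] {I : Set P} (hI : IsSigmaCompact I)
    (hpos : ∀ a ∈ I, ∀ i n, 1 ≤ n → 0 < w a i n)
    (hbdd : ∀ a ∈ I, ∃ C, ∀ i n, 1 ≤ n → w a i n ≤ C)
    (hcont : ∀ i n, ContinuousOn (fun a => w a i n) I)
    (hcrit : ∀ K ⊆ I, IsCompact K → ∀ i, LogLipschitzGrowth (fun a => w a i) K) :
    ∃ 𝒮 : Set (Set P), 𝒮.Countable ∧ I ⊆ ⋃₀ 𝒮 ∧ ∀ S ∈ 𝒮,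
      (∃ K ⊆ I, IsCompact K ∧ S ⊆ K) ∧ Nonempty (∀ i, TameWeights (fun a => w a i) S) := by
  obtain ⟨K, hK, rfl⟩ := hI
  set E : ℕ × ℕ → Set P := fun q => {a ∈ K q.1 | ∀ i n, 1 ≤ n → w a i n ≤ q.2}
  have E_sub (q) : E q ⊆ ⋃ p, K p := fun a ha => Set.mem_iUnion.2 ⟨q.1, ha.1⟩
  have E_compact (q) : IsCompact (E q) := isCompact_setOf_forall_weight_le (hK q.1)
    (fun i n => (hcont i n).mono (Set.subset_iUnion K q.1)) q.2
  choose 𝒮 𝒮_fin cover h𝒮 using fun q => exists_finite_cover_tameWeights (E_compact q)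
    (fun a ha => hpos a (E_sub q ha)) ⟨q.2, fun a ha => ha.2⟩
    (fun i n => (hcont i n).mono (E_sub q)) (hcrit (E q) (E_sub q) (E_compact q))
  refine ⟨⋃ q, 𝒮 q, Set.countable_iUnion fun q => (𝒮_fin q).countable, fun a ha => ?_,
    fun S hS => ?_⟩
  · obtain ⟨p, hp⟩ := Set.mem_iUnion.1 ha
    obtain ⟨C, hC⟩ := hbdd a ha
    obtain ⟨q, hq⟩ := exists_nat_ge C
    obtain ⟨S, hS, haS⟩ := cover (p, q) ⟨hp, fun i n hn => (hC i n hn).trans hq⟩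
    exact ⟨S, Set.mem_iUnion.2 ⟨(p, q), hS⟩, haS⟩
  · obtain ⟨q, hq⟩ := Set.mem_iUnion.1 hS
    exact ⟨⟨E q, E_sub q, E_compact q, (h𝒮 q S hq).1⟩, (h𝒮 q S hq).2⟩

end CountableCover

section CommonHypercyclicAlgebra

variable {P ι : Type*}

lemma exists_polynomial_of_mem_adjoin {x v : ι → c0C} (hv : v ∈ NonUnitalAlgebra.adjoin ℂ {x}) :
    ∃ p : Polynomial ℂ, p.coeff 0 = 0 ∧ ∀ i n, v i n = p.eval (x i n) := by
  induction hv using NonUnitalAlgebra.adjoin_induction with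
  | mem v hv =>
    rw [Set.mem_singleton_iff.1 hv]
    exact ⟨Polynomial.X, Polynomial.coeff_X_zero, fun i n => Polynomial.eval_X.symm⟩
  | zero => exact ⟨0, Polynomial.coeff_zero 0, fun i n => Polynomial.eval_zero.symm⟩
  | add v v' _ _ hv hv' =>
    obtain ⟨p, hp, hv⟩ := hv
    obtain ⟨p', hp', hv'⟩ := hv'
    exact ⟨p + p', by simp [hp, hp'], fun i n => by simp [hv, hv']⟩
  | mul v v' _ _ hv hv' =>
    obtain ⟨p, hp, hv⟩ := hv
    obtain ⟨p', -, hv'⟩ := hv'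
    exact ⟨p * p', by simp [hp], fun i n => by simp [hv, hv']⟩
  | smul c v _ hv =>
    obtain ⟨p, hp, hv⟩ := hv
    exact ⟨c • p, by simp [hp], fun i n => by simp [hv]⟩

lemma IsWeightedShift.dense_range_pow_apply [Finite ι] {u : ι → ℕ → ℝ}
    {T : (ι → c0C) →L[ℂ] (ι → c0C)} (hT : IsWeightedShift u T) {x v : ι → c0C} {b : ℂ}
    (hb : b ≠ 0) {F : ℂ → ℂ} (hv : ∀ i n, v i n = b * F (x i n)) {Y : Set (ι → c0C)}
    (hY : Dense Y)
    (happrox : ∀ y ∈ Y, ∀ ε > 0, ∃ n, 0 < n ∧ ∀ i s,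
      ‖(weightProd (u i) s (s + n) : ℂ) * F (x i (s + n)) - y i s‖ ≤ ε) :
    Dense (Set.range fun n : ℕ => (T ^ (n + 1)) v) := by
  have := Fintype.ofFinite ι
  have dense_smul : Dense ((b • ·) '' Y) :=
    (MulAction.surjective₀ hb).denseRange.dense_image (continuous_const_smul b) hY
  refine dense_closure.1 (dense_smul.mono ?_)
  rintro _ ⟨y, hy, rfl⟩
  refine Metric.mem_closure_range_iff.2 fun ε hε => ?_
  obtain ⟨n, n_pos, hn⟩ := happrox y hy (ε / 2 / ‖b‖) (by positivity)
  refine ⟨n - 1, ?_⟩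
  rw [Nat.sub_add_cancel n_pos, dist_comm, dist_eq_norm]
  refine lt_of_le_of_lt ((norm_le_iff_forall_apply _ (half_pos hε).le).2 fun i s => ?_)
    (half_lt_self hε)
  calc ‖((T ^ n) v - b • y) i s‖
      = ‖b‖ * ‖(weightProd (u i) s (s + n) : ℂ) * F (x i (s + n)) - y i s‖ := by
        rw [← norm_mul, Pi.sub_apply, ZeroAtInftyContinuousMap.sub_apply, hT.pow_apply, hv,
          Pi.smul_apply, ZeroAtInftyContinuousMap.smul_apply, smul_eq_mul]
        ring_nf
    _ ≤ ‖b‖ * (ε / 2 / ‖b‖) := by gcongr; exact hn i s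
    _ = ε / 2 := mul_div_cancel₀ _ (norm_ne_zero_iff.2 hb)

lemma exists_ne_zero_of_eventually_residual [Finite ι] [Nonempty ι] {p : (ι → c0C) → Prop}
    (hp : ∀ᶠ x in residual (ι → c0C), p x) : ∃ x ≠ 0, p x := by
  have := Fintype.ofFinite ι
  have : Nontrivial c0C := ⟨basisVec 0, 0, fun h => by
    simpa [basisVec_apply] using DFunLike.congr_fun h 0⟩
  have := Module.punctured_nhds_neBot ℂ (ι → c0C) 0
  have ne_zero : ∀ᶠ x in residual (ι → c0C), x ≠ 0 :=
    residual_of_dense_open isOpen_compl_singleton (dense_compl_singleton 0)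
  exact (dense_of_mem_residual (ne_zero.and hp)).nonempty

lemma eventually_residual_forall_mem_approximatingSet [PseudoMetricSpace P] [Finite ι]
    {w : P → ι → ℕ → ℝ} {𝒮 : Set (Set P)} (h𝒮 : 𝒮.Countable)
    (hdim : ∀ S ∈ 𝒮, HasFiniteUpperBoxDim S)
    (htame : ∀ S ∈ 𝒮, Nonempty (∀ i, TameWeights (fun a => w a i) S)) {Y : Set (ι → c0C)}
    (hY : Y.Countable) (hYfin : ∀ y ∈ Y, FinitelySupported y) :
    ∀ᶠ x in residual (ι → c0C), ∀ S ∈ 𝒮, ∀ y ∈ Y, ∀ m M C j : ℕ, m ≠ 0 →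
      ∃ N, x ∈ approximatingSet w S (polynomialFamily m M C) y (1 / (j + 1)) N := by
  refine (eventually_countable_ball h𝒮).2 fun S hS =>
    (eventually_countable_ball hY).2 fun y hy => ?_
  simp only [eventually_countable_forall]
  intro m M C j hm
  obtain ⟨t⟩ := htame S hS
  exact eventually_residual_exists_mem_approximatingSet (hdim S hS) t hm
    (fun F => isAlmostMonomial_of_mem_polynomialFamily)
    (uniformEquicontinuousOn_polynomialFamily m M C) (hYfin y hy) Nat.one_div_pos_of_nat

theorem stmt_3_general [MetricSpace P] [Finite ι] [Nonempty ι] {I : Set P} (hI : IsSigmaCompact I)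
    (hdim : ∀ K ⊆ I, IsCompact K → HasFiniteUpperBoxDim K) {w : P → ι → ℕ → ℝ}
    (hpos : ∀ a ∈ I, ∀ i n, 1 ≤ n → 0 < w a i n)
    (hcont : ∀ i n, ContinuousOn (fun a => w a i n) I)
    (hcrit : ∀ K ⊆ I, IsCompact K → ∀ i, LogLipschitzGrowth (fun a => w a i) K)
    {T : P → (ι → c0C) →L[ℂ] (ι → c0C)} (hT : ∀ a ∈ I, IsWeightedShift (w a) (T a)) :
    ∃ A : NonUnitalSubalgebra ℂ (ι → c0C), A ≠ ⊥ ∧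
      ∀ v ∈ A, v ≠ 0 → ∀ a ∈ I, Dense (Set.range fun n : ℕ => (T a ^ (n + 1)) v) := by
  obtain ⟨𝒮, 𝒮_countable, I_sub, h𝒮⟩ := exists_countable_cover_tameWeights hI hpos
    (fun a ha => (hT a ha).exists_forall_weight_le) hcont hcrit
  obtain ⟨Y, Y_countable, dense_Y, hY⟩ := exists_countable_dense_finitelySupported_s3 (ι := ι)
  have hdim𝒮 (S) (hS : S ∈ 𝒮) : HasFiniteUpperBoxDim S := by
    obtain ⟨⟨K, hKI, hK, hSK⟩, -⟩ := h𝒮 S hS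
    exact (hdim K hKI hK).mono hSK
  obtain ⟨x, hx₀, hx⟩ := exists_ne_zero_of_eventually_residual
    (eventually_residual_forall_mem_approximatingSet 𝒮_countable hdim𝒮
      (fun S hS => (h𝒮 S hS).2) Y_countable hY)
  refine ⟨NonUnitalAlgebra.adjoin ℂ {x}, fun h => hx₀ ?_, fun v hv hv₀ a ha => ?_⟩
  · exact NonUnitalAlgebra.mem_bot.1 (h ▸ NonUnitalAlgebra.self_mem_adjoin_singleton ℂ x)
  obtain ⟨p, hp₀, hvp⟩ := exists_polynomial_of_mem_adjoin hv
  have hp : p ≠ 0 := by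
    rintro rfl
    exact hv₀ (by ext i n; simp [hvp])
  obtain ⟨b, hb, m, hm, M, C, F, hF, hpF⟩ := exists_eval_eq_mul_of_coeff_zero_eq_zero hp hp₀
  obtain ⟨S, hS, haS⟩ := I_sub ha
  refine (hT a ha).dense_range_pow_apply hb (fun i n => (hvp i n).trans (hpF _)) dense_Y
    fun y hy ε hε => ?_
  obtain ⟨j, hj⟩ := exists_nat_one_div_lt hε
  obtain ⟨N, hxN⟩ := hx S hS y hy m M C j hm
  obtain ⟨n, n_pos, -, hn⟩ := hxN a haS F hF
  exact ⟨n, n_pos, fun i s => (hn i s).trans hj.le⟩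

end CommonHypercyclicAlgebra

section Product

variable {ι : Type*}

lemma isSigmaCompact_setOf_forall_mem [Finite ι] {X : Type*} [TopologicalSpace X] {I : Set X}
    (hI : IsSigmaCompact I) : IsSigmaCompact {x : ι → X | ∀ i, x i ∈ I} := by
  have := isSigmaCompact_iff_sigmaCompactSpace.1 hI
  have range_val : Set.range (fun (x : ι → I) i => (x i : X)) = {x | ∀ i, x i ∈ I} := by
    ext x
    exact ⟨by rintro ⟨x, rfl⟩ i; exact (x i).2, fun hx => ⟨fun i => ⟨x i, hx i⟩, rfl⟩⟩
  exact range_val ▸ isSigmaCompact_range (by fun_prop)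

lemma LogLipschitzGrowth.comp_eval [Fintype ι] {P : Type*} [PseudoMetricSpace P] {w : P → ℕ → ℝ}
    {K : Set (ι → P)} {i : ι} (hw : LogLipschitzGrowth w (Function.eval i '' K)) :
    LogLipschitzGrowth (fun lam : ι → P => w (lam i)) K := by
  obtain ⟨D₁, D₁_pos, D₂, D₂_pos, γ, γ_pos, N, hN⟩ := hw
  refine ⟨D₁, D₁_pos, D₂, D₂_pos, γ, γ_pos, N, fun n hn => ⟨fun a ha b hb => ?_, fun a ha =>
    (hN n hn).2 _ (Set.mem_image_of_mem _ ha)⟩⟩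
  refine ((hN n hn).1 _ (Set.mem_image_of_mem _ ha) _ (Set.mem_image_of_mem _ hb)).trans ?_
  have := Real.log_natCast_nonneg n
  gcongr
  exact dist_le_pi_dist a b i

lemma logLipschitzGrowth_iff_sum_log {w : ℝ → ℕ → ℝ} {K : Set ℝ}
    (hpos : ∀ a ∈ K, ∀ n, 1 ≤ n → 0 < w a n) :
    LogLipschitzGrowth w K ↔
      ∃ D₁ > (0 : ℝ), ∃ D₂ > (0 : ℝ), ∃ γ > (0 : ℝ), ∃ N : ℕ, ∀ n : ℕ, N ≤ n →
        (∀ a ∈ K, ∀ b ∈ K,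
          |(∑ i ∈ Icc 1 n, Real.log (w a i)) - ∑ i ∈ Icc 1 n, Real.log (w b i)|
            ≤ D₁ * Real.log n * |a - b|) ∧
        ∀ a ∈ K, D₂ * (n : ℝ) ^ γ ≤ ∏ i ∈ Icc 1 n, w a i := by
  have sum_log {a : ℝ} (ha : a ∈ K) (n : ℕ) :
      ∑ i ∈ Icc 1 n, Real.log (w a i) = Real.log (weightProd (w a) 0 n) := by
    rw [weightProd_zero_left,
      Real.log_prod fun i hi => (hpos a ha i (mem_Icc.1 hi).1).ne']
  simp +contextual only [LogLipschitzGrowth, sum_log, weightProd_zero_left, Real.dist_eq, ge_iff_le]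

lemma commonHypercyclicAlgebraCWC0_of_nonUnitalSubalgebra {d : ℕ} {S : Set (Fin d → ℝ)}
    {T : (Fin d → ℝ) → (Fin d → c0C) →L[ℂ] (Fin d → c0C)}
    (h : ∃ A : NonUnitalSubalgebra ℂ (Fin d → c0C), A ≠ ⊥ ∧
      ∀ v ∈ A, v ≠ 0 → ∀ lam ∈ S, Dense (Set.range fun n : ℕ => (T lam ^ (n + 1)) v)) :
    CommonHypercyclicAlgebraCWC0 d S T := by
  obtain ⟨A, hA, dense_orbit⟩ := h
  refine ⟨A, zero_mem A, fun x hx y hy => add_mem hx hy, fun c x hx => SMulMemClass.smul_mem c hx,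
    fun x hx y hy => ⟨x * y, mul_mem hx hy, fun i n => rfl⟩, ?_, dense_orbit⟩
  by_contra! eq_zero
  refine hA (SetLike.ext fun x => Iff.trans ⟨eq_zero x, ?_⟩ NonUnitalAlgebra.mem_bot.symm)
  rintro rfl
  exact zero_mem A

end Product

/-- Corollary 1.2 of the paper (case `X = c₀(ℕ)`). -/
theorem stmt_3 (d : ℕ) (hd : 1 ≤ d)
    (I : Set ℝ) (hIpos : ∀ a ∈ I, 0 < a) (hIσ : IsSigmaCompact I)
    (w : ℝ → ℕ → ℝ)
    (hwpos : ∀ a ∈ I, ∀ n : ℕ, 1 ≤ n → 0 < w a n)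
    (hwbdd : ∀ a ∈ I, ∃ C : ℝ, ∀ n : ℕ, 1 ≤ n → w a n ≤ C)
    (hwcont : ∀ n : ℕ, ContinuousOn (fun a => w a n) I)
    (hcrit : ∀ I₀ ⊆ I, IsCompact I₀ →
      ∃ D₁ > (0 : ℝ), ∃ D₂ > (0 : ℝ), ∃ γ > (0 : ℝ), ∃ N : ℕ, ∀ n : ℕ, N ≤ n →
        (∀ a ∈ I₀, ∀ b ∈ I₀,
          |(∑ i ∈ Finset.Icc 1 n, Real.log (w a i)) -
              ∑ i ∈ Finset.Icc 1 n, Real.log (w b i)| ≤ D₁ * Real.log n * |a - b|) ∧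
        (∀ a ∈ I₀, D₂ * (n : ℝ) ^ γ ≤ ∏ i ∈ Finset.Icc 1 n, w a i))
    (T : (Fin d → ℝ) → ((Fin d → c0C) →L[ℂ] (Fin d → c0C)))
    (hT : ∀ lam : Fin d → ℝ, (∀ i, lam i ∈ I) → IsProductShiftC0 d w (T lam) lam) :
    CommonHypercyclicAlgebraCWC0 d {lam | ∀ i, lam i ∈ I} T := by
  have : Nonempty (Fin d) := Fin.pos_iff_nonempty.1 hd
  have hgrowth (K : Set (Fin d → ℝ)) (hK : K ⊆ {lam | ∀ i, lam i ∈ I}) (hKc : IsCompact K)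
      (i : Fin d) : LogLipschitzGrowth (fun lam : Fin d → ℝ => w (lam i)) K := by
    have image_sub : Function.eval i '' K ⊆ I := Set.image_subset_iff.2 fun lam hlam => hK hlam i
    exact ((logLipschitzGrowth_iff_sum_log fun a ha => hwpos a (image_sub ha)).2
      (hcrit _ image_sub (hKc.image (continuous_apply i)))).comp_eval
  refine commonHypercyclicAlgebraCWC0_of_nonUnitalSubalgebra <|
    stmt_3_general (isSigmaCompact_setOf_forall_mem (ι := Fin d) hIσ)
      (fun K _ hK => hasFiniteUpperBoxDim_of_isBounded hK.isBounded)
      (w := fun lam i => w (lam i)) (fun lam hlam i => hwpos _ (hlam i)) (fun i n => ?_) hgrowth hT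
  exact (hwcont n).comp (continuous_apply i).continuousOn fun lam hlam => hlam i
end
end
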